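/- arXiv:1302.6004 — 5 statements merged into one kernel-verified Lean document; each statement's English description precedes it below -/
import Mathlib

section
/- Let A be an invertible n×n real matrix with all entries of A nonzero at positions where needed and det(A) ≠ 0, and let γ_{ij} denote the (i,j) entry of A⁻¹. Then the componentwise condition number of the determinant at A satisfies c^det(A) = Σ_{i,j ∈ [n]} |a_{ij}·γ_{ji}|. -/
open MeasureTheory ProbabilityTheory
open scoped ENNReal

/-- Componentwise "distance" `d(u,v) = ‖(u−v)/v‖_∞`, valued in `[0,∞]`:
the `i`-th component of the quotient is `|u i − v i|/|v i|` if `v i ≠ 0`,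
`0` if `u i = v i = 0`, and `∞` otherwise. -/
noncomputable def cwDist {ι : Type*} (u v : ι → ℝ) : ℝ≥0∞ :=
  ⨆ i, if v i ≠ 0 then ENNReal.ofReal (|u i - v i| / |v i|)
       else if u i = v i then 0 else ⊤

/-- Componentwise condition number of `F : D ⊆ ℝ^ι → ℝ^κ` at `a`:
`c^F(a) = lim_{δ→0} sup { d(F x, F a)/d(x,a) : x ∈ D, d(x,a) ≤ δ, x ≠ a }`,
the limit being an infimum since the sup is monotone in `δ`. -/
noncomputable def cwCond {ι κ : Type*} (D : Set (ι → ℝ)) (F : (ι → ℝ) → κ → ℝ)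
    (a : ι → ℝ) : ℝ≥0∞ :=
  ⨅ δ ∈ Set.Ioi (0 : ℝ≥0∞),
    ⨆ x ∈ {x ∈ D | cwDist x a ≤ δ ∧ x ≠ a}, cwDist (F x) (F a) / cwDist x a

/-- A matrix viewed as a point of `ℝ^(n×n)`. -/
def matToFun {n : ℕ} (A : Matrix (Fin n) (Fin n) ℝ) : Fin n × Fin n → ℝ :=
  fun p => A p.1 p.2

/-- A point of `ℝ^(n×n)` viewed as a matrix. -/
def funToMat {n : ℕ} (x : Fin n × Fin n → ℝ) : Matrix (Fin n) (Fin n) ℝ :=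
  Matrix.of fun i j => x (i, j)

/-- The componentwise condition number `c^det(A)` of determinant computation at `A`. -/
noncomputable def cDet {n : ℕ} (A : Matrix (Fin n) (Fin n) ℝ) : ℝ≥0∞ :=
  cwCond Set.univ (fun x (_ : Unit) => (funToMat x).det) (matToFun A)

/-- The componentwise condition number `c†_{kl}(A)` of the map `A ↦ (A⁻¹)_{kl}` at `A`. -/
noncomputable def cInv {n : ℕ} (k l : Fin n) (A : Matrix (Fin n) (Fin n) ℝ) : ℝ≥0∞ :=
  cwCond {x | IsUnit (funToMat x).det}
    (fun x (_ : Unit) => (funToMat x)⁻¹ k l) (matToFun A)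

/-- `c†(A) = max_{k,l} c†_{kl}(A)`. -/
noncomputable def cInvMax {n : ℕ} (A : Matrix (Fin n) (Fin n) ℝ) : ℝ≥0∞ :=
  ⨆ k, ⨆ l, cInv k l A

/-- A pair (matrix, right-hand side) viewed as a point of `ℝ^(n×n+n)`. -/
def pairToFun {n : ℕ} (A : Matrix (Fin n) (Fin n) ℝ) (b : Fin n → ℝ) :
    (Fin n × Fin n) ⊕ Fin n → ℝ :=
  Sum.elim (fun p => A p.1 p.2) b

def funToMat' {n : ℕ} (x : (Fin n × Fin n) ⊕ Fin n → ℝ) : Matrix (Fin n) (Fin n) ℝ :=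
  Matrix.of fun i j => x (Sum.inl (i, j))

def funToVec {n : ℕ} (x : (Fin n × Fin n) ⊕ Fin n → ℝ) : Fin n → ℝ :=
  fun i => x (Sum.inr i)

/-- The componentwise condition number `c_k(A,b)` of the map `(A,b) ↦ (A⁻¹b)_k` at `(A,b)`. -/
noncomputable def cLin {n : ℕ} (k : Fin n) (A : Matrix (Fin n) (Fin n) ℝ)
    (b : Fin n → ℝ) : ℝ≥0∞ :=
  cwCond {x | IsUnit (funToMat' x).det}
    (fun x (_ : Unit) => (Matrix.mulVec (funToMat' x)⁻¹ (funToVec x)) k) (pairToFun A b)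

/-- `c(A,b) = max_k c_k(A,b)`. -/
noncomputable def cLinMax {n : ℕ} (A : Matrix (Fin n) (Fin n) ℝ) (b : Fin n → ℝ) : ℝ≥0∞ :=
  ⨆ k, cLin k A b

/-- Relative perturbation of `A`. -/
def pertFun {n : ℕ} (A : Matrix (Fin n) (Fin n) ℝ) (E : Fin n × Fin n → ℝ) :
    Fin n × Fin n → ℝ := fun p => A p.1 p.2 * (1 + E p)

lemma det_pert_diff {n : ℕ} (A : Matrix (Fin n) (Fin n) ℝ) :
    Differentiable ℝ (fun E : Fin n × Fin n → ℝ => (funToMat (pertFun A E)).det) := by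
  simp only [Matrix.det_apply, funToMat, pertFun, Matrix.of_apply]
  fun_prop

lemma det_pert_fderiv {n : ℕ} (A : Matrix (Fin n) (Fin n) ℝ) (hA : A.det ≠ 0)
    (E : Fin n × Fin n → ℝ) :
    fderiv ℝ (fun E : Fin n × Fin n → ℝ => (funToMat (pertFun A E)).det) 0 E
      = A.det * ∑ i : Fin n, ∑ j : Fin n, A i j * A⁻¹ j i * E (i, j) := by
  set g := fun E : Fin n × Fin n → ℝ => (funToMat (pertFun A E)).det with hg
  have h1 : HasDerivAt (fun t : ℝ => g (t • E)) (fderiv ℝ g 0 E) 0 := by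
    have hd : HasFDerivAt g (fderiv ℝ g 0) ((0 : ℝ) • E) := by
      rw [zero_smul]
      exact (det_pert_diff A 0).hasFDerivAt
    have hl : HasDerivAt (fun t : ℝ => t • E) E 0 := by
      simpa using (hasDerivAt_id (0 : ℝ)).smul_const E
    exact hd.comp_hasDerivAt (0 : ℝ) hl
  set B : Matrix (Fin n) (Fin n) ℝ := Matrix.of fun i j => A i j * E (i, j) with hB
  have hU : IsUnit A.det := isUnit_iff_ne_zero.mpr hA
  have h2 : ∀ t : ℝ, g (t • E) = A.det * (1 + (A⁻¹ * B).trace * t +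
      (Matrix.det (1 + (Polynomial.X : Polynomial ℝ) •
        (A⁻¹ * B).map Polynomial.C)).divX.divX.eval t * t ^ 2) := by
    intro t
    rw [← Matrix.det_one_add_smul, ← Matrix.det_mul]
    change (funToMat (pertFun A (t • E))).det = _
    congr 1
    rw [mul_add, mul_one, Matrix.mul_smul, Matrix.mul_nonsing_inv_cancel_left _ _ hU]
    ext i j
    simp [funToMat, pertFun, hB]
    ring
  have h3 : HasDerivAt (fun t : ℝ => g (t • E)) (A.det * (A⁻¹ * B).trace) 0 := by
    rw [funext h2]
    set P := (Matrix.det (1 + (Polynomial.X : Polynomial ℝ) •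
        (A⁻¹ * B).map Polynomial.C)).divX.divX
    have := ((((hasDerivAt_id (0 : ℝ)).const_mul (A⁻¹ * B).trace).const_add 1).add
      ((P.hasDerivAt 0).mul ((hasDerivAt_id (0 : ℝ)).pow 2))).const_mul A.det
    refine HasDerivAt.congr_deriv (f := fun t : ℝ => A.det * (1 + (A⁻¹ * B).trace * t +
      P.eval t * t ^ 2)) this ?_
    simp
  rw [h1.unique h3, Matrix.trace]
  congr 1
  simp only [Matrix.diag_apply, Matrix.mul_apply, hB, Matrix.of_apply]
  rw [Finset.sum_comm]
  refine Finset.sum_congr rfl fun i _ => Finset.sum_congr rfl fun j _ => ?_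
  ring

lemma det_pert_est {n : ℕ} (A : Matrix (Fin n) (Fin n) ℝ) (hA : A.det ≠ 0) (ε : ℝ) (hε : 0 < ε) :
    ∃ δ : ℝ, 0 < δ ∧ ∀ E : Fin n × Fin n → ℝ, ‖E‖ ≤ δ →
      |((funToMat (pertFun A E)).det - A.det) / A.det
        - ∑ i : Fin n, ∑ j : Fin n, A i j * A⁻¹ j i * E (i, j)| ≤ ε * ‖E‖ := by
  have h := (det_pert_diff A 0).hasFDerivAt
  rw [hasFDerivAt_iff_isLittleO_nhds_zero, Asymptotics.isLittleO_iff] at h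
  have hpos : 0 < |A.det| := abs_pos.mpr hA
  have h' := h (mul_pos hε hpos)
  rw [Metric.eventually_nhds_iff] at h'
  obtain ⟨δ, hδ, H⟩ := h'
  refine ⟨δ / 2, by positivity, fun E hE => ?_⟩
  have := H (y := E) (by rw [dist_zero_right]; linarith)
  rw [det_pert_fderiv A hA, zero_add] at this
  have h0 : funToMat (pertFun A 0) = A := by
    ext i j; simp [funToMat, pertFun]
  rw [h0, Real.norm_eq_abs] at this
  rw [← mul_le_mul_iff_left₀ hpos, ← abs_mul, sub_mul, div_mul_cancel₀ _ hA]
  calc _ = _ := by rw [mul_comm _ A.det]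
    _ ≤ _ := this
    _ = _ := by ring

lemma cwDist_unit (u v : ℝ) (hv : v ≠ 0) :
    cwDist (fun _ : Unit => u) (fun _ : Unit => v) = ENNReal.ofReal |(u - v) / v| := by
  simp [cwDist, hv, abs_div]

lemma funToMat_matToFun {n : ℕ} (A : Matrix (Fin n) (Fin n) ℝ) : funToMat (matToFun A) = A := rfl

/-- For an invertible `n×n` real matrix `A` (so `det A ≠ 0`),
`c^det(A) = Σ_{i,j} |a_{ij}·γ_{ji}|` where `γ = A⁻¹`. -/
theorem cDet_eq_sum {n : ℕ} (A : Matrix (Fin n) (Fin n) ℝ) (hA : A.det ≠ 0) :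
    cDet A = ENNReal.ofReal (∑ i : Fin n, ∑ j : Fin n, |A i j * A⁻¹ j i|) := by
  unfold cDet cwCond
  set S := ∑ i : Fin n, ∑ j : Fin n, |A i j * A⁻¹ j i| with hS
  have hS0 : 0 ≤ S := Finset.sum_nonneg fun i _ => Finset.sum_nonneg fun j _ => abs_nonneg _
  apply le_antisymm
  · refine ENNReal.le_of_forall_pos_le_add fun ε hε _ => ?_
    obtain ⟨δ, hδ, H⟩ := det_pert_est A hA ε (by exact_mod_cast hε)
    refine iInf₂_le_of_le (ENNReal.ofReal δ) (by simpa using hδ) ?_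
    refine iSup₂_le fun x hx => ?_
    obtain ⟨-, hxd, -⟩ := hx
    refine ENNReal.div_le_of_le_mul ?_
    beta_reduce
    rw [funToMat_matToFun, cwDist_unit _ _ hA]
    have hfin : cwDist x (matToFun A) ≠ ⊤ := ne_top_of_le_ne_top ENNReal.ofReal_ne_top hxd
    set d := cwDist x (matToFun A) with hd
    have hcomp : ∀ p, (if matToFun A p ≠ 0 then
        ENNReal.ofReal (|x p - matToFun A p| / |matToFun A p|)
       else if x p = matToFun A p then 0 else ⊤) ≤ d := fun p => le_iSup
        (fun p => if matToFun A p ≠ 0 then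
        ENNReal.ofReal (|x p - matToFun A p| / |matToFun A p|)
       else if x p = matToFun A p then 0 else ⊤) p
    set E : Fin n × Fin n → ℝ := fun p => (x p - matToFun A p) / matToFun A p with hE
    have hxE : x = pertFun A E := by
      funext p
      by_cases hp : matToFun A p = 0
      · have h := hcomp p
        have hxp : x p = matToFun A p := by
          by_contra hne
          rw [if_neg (not_not.mpr hp), if_neg hne] at h
          exact hfin (top_le_iff.mp h)
        rw [hxp]
        simp only [matToFun] at hp
        simp [pertFun, matToFun, hp]
      · have : pertFun A E p = matToFun A p * (1 + E p) := rfl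
        rw [this, hE]
        field_simp
        ring
    have hEn : ‖E‖ ≤ d.toReal := by
      rw [pi_norm_le_iff_of_nonneg ENNReal.toReal_nonneg]
      intro p
      by_cases hp : matToFun A p = 0
      · simp [hE, hp]
      · have h := hcomp p
        rw [if_pos hp, ENNReal.ofReal_le_iff_le_toReal hfin] at h
        simpa [hE, abs_div] using h
    have hdδ : d.toReal ≤ δ := ENNReal.toReal_le_of_le_ofReal hδ.le hxd
    have hest := H E (hEn.trans hdδ)
    rw [← hxE] at hest
    have hsum : |∑ i : Fin n, ∑ j : Fin n, A i j * A⁻¹ j i * E (i, j)| ≤ S * ‖E‖ := by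
      rw [hS, Finset.sum_mul]
      refine (Finset.abs_sum_le_sum_abs _ _).trans (Finset.sum_le_sum fun i _ => ?_)
      rw [Finset.sum_mul]
      refine (Finset.abs_sum_le_sum_abs _ _).trans (Finset.sum_le_sum fun j _ => ?_)
      rw [abs_mul]
      exact mul_le_mul_of_nonneg_left (norm_le_pi_norm E (i, j)) (abs_nonneg _)
    have hfinal : |((funToMat x).det - A.det) / A.det| ≤ (S + ε) * d.toReal := by
      have h1 := abs_le.mp hest
      have h2 := abs_le.mp hsum
      have h3 : (S + ε) * ‖E‖ ≤ (S + ε) * d.toReal :=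
        mul_le_mul_of_nonneg_left hEn (by positivity)
      rw [abs_le]
      constructor <;> linarith [h1.1, h1.2, h2.1, h2.2]
    calc _ ≤ ENNReal.ofReal ((S + ε) * d.toReal) := ENNReal.ofReal_le_ofReal hfinal
      _ = _ := by
        rw [ENNReal.ofReal_mul (by positivity), ENNReal.ofReal_toReal hfin,
          ENNReal.ofReal_add hS0 (NNReal.coe_nonneg ε), ENNReal.ofReal_coe_nnreal]
  · refine le_iInf₂ fun δ hδ => ?_
    rcases hS0.eq_or_lt with h0 | hSpos
    · simp [← h0]
    refine ENNReal.le_of_forall_pos_le_add fun ε hε _ => ?_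
    obtain ⟨η, hη, H⟩ := det_pert_est A hA ε (by exact_mod_cast hε)
    obtain ⟨t, ht, htδ, htη⟩ : ∃ t : ℝ, 0 < t ∧ ENNReal.ofReal t ≤ δ ∧ t ≤ η := by
      have hm : 0 < min δ (ENNReal.ofReal η) := lt_min hδ (by simpa using hη)
      have hmt : min δ (ENNReal.ofReal η) ≠ ⊤ :=
        ne_top_of_le_ne_top ENNReal.ofReal_ne_top (min_le_right _ _)
      refine ⟨(min δ (ENNReal.ofReal η)).toReal, ENNReal.toReal_pos hm.ne' hmt, ?_, ?_⟩
      · rw [ENNReal.ofReal_toReal hmt]; exact min_le_left _ _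
      · exact ENNReal.toReal_le_of_le_ofReal hη.le (min_le_right _ _)
    set E : Fin n × Fin n → ℝ := fun p => t * SignType.sign (A p.1 p.2 * A⁻¹ p.2 p.1) with hE
    have hEp : ∀ p, |E p| ≤ t := by
      intro p
      simp only [hE]
      rcases SignType.sign (A p.1 p.2 * A⁻¹ p.2 p.1) with _ | _ | _ <;>
        simp [abs_of_pos ht, ht.le]
    have hEn : ‖E‖ ≤ t := (pi_norm_le_iff_of_nonneg ht.le).mpr hEp
    have hsum : ∑ i : Fin n, ∑ j : Fin n, A i j * A⁻¹ j i * E (i, j) = S * t := by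
      rw [hS, Finset.sum_mul]
      refine Finset.sum_congr rfl fun i _ => ?_
      rw [Finset.sum_mul]
      refine Finset.sum_congr rfl fun j _ => ?_
      rw [← self_mul_sign (A i j * A⁻¹ j i)]
      simp only [hE]
      ring
    have hdist : cwDist (pertFun A E) (matToFun A) ≤ ENNReal.ofReal t := by
      refine iSup_le fun p => ?_
      have hp' : pertFun A E p = matToFun A p * (1 + E p) := rfl
      by_cases hp : matToFun A p = 0
      · simp [hp', hp]
      · rw [if_pos hp, hp']
        refine ENNReal.ofReal_le_ofReal ?_
        rw [← abs_div]
        have : (matToFun A p * (1 + E p) - matToFun A p) / matToFun A p = E p := by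
          field_simp
          ring
        rw [this]
        exact hEp p
    have hne : pertFun A E ≠ matToFun A := by
      intro heq
      have hz : ∀ i j, A i j * A⁻¹ j i * E (i, j) = 0 := by
        intro i j
        have h := congrFun heq (i, j)
        simp only [pertFun, matToFun] at h
        have : A i j * E (i, j) = 0 := by linarith
        calc _ = A⁻¹ j i * (A i j * E (i, j)) := by ring
          _ = 0 := by rw [this, mul_zero]
      simp only [hz, Finset.sum_const_zero] at hsum
      exact (mul_pos hSpos ht).ne hsum
    have hest := H E (hEn.trans htη)
    rw [hsum] at hest
    have hlow : (S - ε) ≤ |((funToMat (pertFun A E)).det - A.det) / A.det| / t := by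
      rw [le_div_iff₀ ht]
      have h1 := (abs_le.mp hest).1
      have h2 : (ε : ℝ) * ‖E‖ ≤ ε * t := mul_le_mul_of_nonneg_left hEn ε.2
      have h3 := le_abs_self (((funToMat (pertFun A E)).det - A.det) / A.det)
      linarith
    have hmain : ENNReal.ofReal (S - ε) ≤ cwDist
        (fun _ : Unit => (funToMat (pertFun A E)).det)
        (fun _ : Unit => (funToMat (matToFun A)).det) / cwDist (pertFun A E) (matToFun A) := by
      rw [funToMat_matToFun, cwDist_unit _ _ hA]
      calc _ ≤ _ := ENNReal.ofReal_le_ofReal hlow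
        _ = _ := ENNReal.ofReal_div_of_pos ht
        _ ≤ _ := ENNReal.div_le_div_left hdist _
    calc ENNReal.ofReal S = ENNReal.ofReal ((S - ε) + ε) := by rw [sub_add_cancel]
      _ ≤ ENNReal.ofReal (S - ε) + ENNReal.ofReal ε := ENNReal.ofReal_add_le
      _ ≤ _ := by
        rw [ENNReal.ofReal_coe_nnreal]
        gcongr
        refine le_trans hmain ?_
        exact le_iSup₂_of_le (pertFun A E) ⟨Set.mem_univ _, hdist.trans htδ, hne⟩ le_rfl
end

section
/- Let S ⊆ [n]² be admissible, Ā ∈ M_S with ‖Ā‖_max ≤ 1, σ > 0, and let A ~ N_S(Ā, σ²Id). Then for every β > 1, E( log_β( Σ_{(i,j)∈S} |a_{ij}·γ_{ji}| ) ) < log_β((1 + σ)/σ) + 2·log_β|S| + 1.03/ln β, where γ = A⁻¹ (defined almost surely); the quantity Σ_{(i,j)∈S} |a_{ij}·γ_{ji}| equals the componentwise condition number c^det(A) almost surely. -/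
open MeasureTheory ProbabilityTheory
open scoped ENNReal

instance matrixMeasurableSpace {n : ℕ} : MeasurableSpace (Matrix (Fin n) (Fin n) ℝ) :=
  inferInstanceAs (MeasurableSpace (Fin n → Fin n → ℝ))

/-- The distribution `N_S(Ā, σ²Id)` of a random sparse matrix: the entries `a_{ij}` with
`(i,j) ∈ S` are independent Gaussians `N(ā_{ij}, σ²)`, and `a_{ij} = 0` for `(i,j) ∉ S`. -/
noncomputable def sparseGaussian {n : ℕ} (S : Finset (Fin n × Fin n))
    (Abar : Matrix (Fin n) (Fin n) ℝ) (σ : ℝ) : Measure (Matrix (Fin n) (Fin n) ℝ) :=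
  (Measure.pi fun p : S => gaussianReal (Abar p.1.1 p.1.2) ⟨σ ^ 2, sq_nonneg σ⟩).map
    fun g => Matrix.of fun i j => if h : (i, j) ∈ S then g ⟨(i, j), h⟩ else 0

/-- The distribution `N(b̄, σ²Id)` on `ℝⁿ`: independent Gaussian entries `N(b̄_i, σ²)`. -/
noncomputable def vecGaussian {n : ℕ} (bbar : Fin n → ℝ) (σ : ℝ) : Measure (Fin n → ℝ) :=
  Measure.pi fun i => gaussianReal (bbar i) ⟨σ ^ 2, sq_nonneg σ⟩

/-- `S ⊆ [n]²` is admissible when `M_S` contains an invertible matrix. -/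
def Admissible {n : ℕ} (S : Finset (Fin n × Fin n)) : Prop :=
  ∃ B : Matrix (Fin n) (Fin n) ℝ, (∀ i j, (i, j) ∉ S → B i j = 0) ∧ IsUnit B.det

lemma aux_log {t : ℝ} (ht : 2 ≤ t) : Real.log ((t+1)/(t-1)) ≤ 2.4 / t := by
  have h1 : Real.log ((t+1)/(t-1)) = Real.log (1 + 1/t) - Real.log (1 - 1/t) := by
    rw [← Real.log_div]
    · congr 1
      have : t - 1 ≠ 0 := by linarith
      have : t ≠ 0 := by linarith
      field_simp
    · positivity
    · have : 1 / t ≤ 1/2 := by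
        apply one_div_le_one_div_of_le <;> linarith
      linarith
  have hw : 1 / t ≤ 1/2 := by apply one_div_le_one_div_of_le <;> linarith
  have hw0 : 0 < 1 / t := by positivity
  rw [h1, show 2.4 / t = 2.4 * (1/t) by ring]
  generalize 1 / t = w at *
  have h2 : Real.log (1 + w) ≤ w := by
    have := Real.log_le_sub_one_of_pos (show 0 < 1 + w by linarith)
    linarith
  have h3 := strictConcaveOn_log_Ioi.concaveOn.2 (show (1:ℝ) ∈ Set.Ioi 0 by norm_num)
    (show (1/2:ℝ) ∈ Set.Ioi 0 by norm_num) (show 0 ≤ 1 - 2 * w by linarith)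
    (show 0 ≤ 2 * w by linarith) (by ring)
  simp only [smul_eq_mul] at h3
  rw [show (1 - 2 * w) * 1 + 2 * w * (1/2) = 1 - w by ring, Real.log_one,
    show Real.log (1/2) = - Real.log 2 by rw [one_div, Real.log_inv]] at h3
  have := Real.log_two_lt_d9
  nlinarith

lemma aux_pdf {m σ x : ℝ} {vv : NNReal} (hvv : (vv : ℝ) = σ ^ 2) (hσ : 0 < σ) (hm : |m| ≤ 1) (hx : 0 < x) :
    gaussianPDFReal m vv x ≤ (0.4 * ((1 + σ)/σ)) * x⁻¹ := by
  have hs : (√(2 * Real.pi * σ^2))⁻¹ ≤ 0.4 * σ⁻¹ := by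
    have h : 2.5 * σ ≤ √(2 * Real.pi * σ^2) := by
      apply Real.le_sqrt_of_sq_le
      have := Real.pi_gt_d2
      nlinarith [sq_nonneg σ]
    calc _ ≤ (2.5 * σ)⁻¹ := inv_anti₀ (by positivity) h
      _ = _ := by rw [mul_inv]; norm_num
  have he : x * Real.exp (-(x - m)^2 / (2 * σ^2)) ≤ 1 + σ := by
    have hx1 : x ≤ 1 + |x - m| := by
      have := le_abs_self (x - m)
      have := le_abs_self m
      linarith
    set y := |x - m| / σ with hy
    have hy0 : 0 ≤ y := by positivity
    have hxy : |x - m| = σ * y := by rw [hy]; field_simp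
    have e1 : -(x - m)^2 / (2 * σ^2) = -(y^2/2) := by
      rw [← sq_abs (x - m), hxy]; field_simp
    rw [e1, Real.exp_neg, ← div_eq_mul_inv, div_le_iff₀ (Real.exp_pos _)]
    have h1 := Real.add_one_le_exp (y^2/2)
    have h2 : y ≤ Real.exp (y^2/2) := by nlinarith [sq_nonneg (y-1)]
    have h3 : 1 ≤ Real.exp (y^2/2) := by nlinarith [sq_nonneg y]
    rw [hxy] at hx1
    nlinarith [mul_le_mul_of_nonneg_left h2 hσ.le]
  rw [gaussianPDFReal, ← div_eq_mul_inv, le_div_iff₀ hx]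
  rw [hvv]
  calc _ = (√(2 * Real.pi * σ^2))⁻¹ * (x * Real.exp (-(x - m)^2 / (2 * σ^2))) := by ring
    _ ≤ (0.4 * σ⁻¹) * (1 + σ) := by gcongr
    _ = _ := by ring

lemma aux_gauss_pos {m σ z t : ℝ} {vv : NNReal} (hvv : (vv : ℝ) = σ ^ 2) (hσ : 0 < σ) (hm : |m| ≤ 1) (hz : 0 < z) (ht : 2 ≤ t) :
    gaussianReal m vv {x | t * |x - z| ≤ |x|}
      ≤ ENNReal.ofReal (0.96 * ((1 + σ)/σ) / t) := by
  have hv : vv ≠ 0 := by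
    intro h
    rw [h] at hvv
    simp at hvv
    exact (pow_pos hσ 2).ne hvv
  set u := z * t / (t + 1) with hu
  set v := z * t / (t - 1) with hv'
  have ht1 : 0 < t - 1 := by linarith
  have hupos : 0 < u := by positivity
  have hvpos : 0 < v := by positivity
  have huv : u ≤ v := by
    apply div_le_div_of_nonneg_left (by positivity) ht1 (by linarith)
  have hsub : {x : ℝ | t * |x - z| ≤ |x|} ⊆ Set.Icc u v := by
    intro x hx
    simp only [Set.mem_ofPred_eq] at hx
    have hx0 : 0 < x := by
      by_contra h
      push Not at h
      rw [abs_of_nonpos h, abs_of_nonpos (by linarith)] at hx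
      nlinarith
    rw [abs_of_pos hx0] at hx
    have h1 := le_abs_self (x - z)
    have h2 := neg_abs_le (x - z)
    constructor
    · rw [hu, div_le_iff₀ (by linarith)]; nlinarith
    · rw [hv', le_div_iff₀ ht1]; nlinarith
  refine (measure_mono hsub).trans ?_
  rw [gaussianReal_apply _ hv]
  set M := 0.4 * ((1 + σ)/σ) with hM
  have hM0 : 0 ≤ M := by positivity
  have hint : IntegrableOn (fun x : ℝ => M * x⁻¹) (Set.Icc u v) := by
    apply ContinuousOn.integrableOn_Icc
    apply ContinuousOn.mul continuousOn_const
    apply ContinuousOn.inv₀ continuousOn_id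
    intro x hx
    exact (hupos.trans_le hx.1).ne'
  calc _ ≤ ∫⁻ x in Set.Icc u v, ENNReal.ofReal (M * x⁻¹) := by
        apply setLIntegral_mono' measurableSet_Icc
        intro x hx
        exact ENNReal.ofReal_le_ofReal (aux_pdf hvv hσ hm (hupos.trans_le hx.1))
    _ = ENNReal.ofReal (∫ x in Set.Icc u v, M * x⁻¹) := by
        rw [ofReal_integral_eq_lintegral_ofReal hint]
        filter_upwards [ae_restrict_mem measurableSet_Icc] with x hx
        have := hupos.trans_le hx.1
        simp only [Pi.zero_apply]
        positivity
    _ ≤ _ := by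
        apply ENNReal.ofReal_le_ofReal
        rw [integral_Icc_eq_integral_Ioc, ← intervalIntegral.integral_of_le huv,
          intervalIntegral.integral_const_mul, integral_inv_of_pos hupos hvpos]
        have : v / u = (t+1)/(t-1) := by
          rw [hu, hv']; field_simp
        rw [this]
        calc _ ≤ M * (2.4 / t) := by gcongr; exact aux_log ht
          _ = _ := by rw [hM]; ring

lemma aux_gauss {m σ z t : ℝ} {vv : NNReal} (hvv : (vv : ℝ) = σ ^ 2) (hσ : 0 < σ) (hm : |m| ≤ 1) (hz : z ≠ 0) (ht : 2 ≤ t) :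
    gaussianReal m vv {x | t * |x - z| ≤ |x|}
      ≤ ENNReal.ofReal (0.96 * ((1 + σ)/σ) / t) := by
  rcases lt_or_gt_of_ne hz with h | h
  · have h2 := aux_gauss_pos hvv (m := -m) (z := -z) hσ (by rwa [abs_neg]) (by linarith) ht
    rw [← gaussianReal_map_neg, Measure.map_apply measurable_neg] at h2
    · convert h2 using 3
      ext x
      simp only [Set.mem_ofPred_eq, Set.mem_preimage, abs_neg]
      rw [← abs_neg (-x - -z)]
      ring_nf
    · apply measurableSet_le <;> fun_prop
  · exact aux_gauss_pos hvv hσ hm h ht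

lemma aux_gauss' {m σ C D t : ℝ} {vv : NNReal} (hvv : (vv : ℝ) = σ ^ 2) (hσ : 0 < σ) (hm : |m| ≤ 1) (ht : 2 ≤ t) :
    gaussianReal m vv {x | t ≤ |x * ((x * C + D)⁻¹ * C)|}
      ≤ ENNReal.ofReal (0.96 * ((1 + σ)/σ) / t) := by
  by_cases hC : C = 0
  · have : {x | t ≤ |x * ((x * C + D)⁻¹ * C)|} = ∅ := by
      ext x; simp [hC]; linarith
    rw [this]; simp
  by_cases hD : D = 0
  · have : {x | t ≤ |x * ((x * C + D)⁻¹ * C)|} = ∅ := by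
      ext x
      simp only [hD, add_zero, Set.mem_ofPred_eq, Set.mem_empty_iff_false, iff_false, not_le]
      by_cases hx : x = 0
      · simp [hx]; linarith
      · have : x * ((x * C)⁻¹ * C) = 1 := by field_simp
        rw [this]; simp; linarith
    rw [this]; simp
  refine (measure_mono ?_).trans (aux_gauss hvv (z := -D/C) hσ hm (by simp [hC, hD]) ht)
  intro x hx
  simp only [Set.mem_ofPred_eq] at hx ⊢
  have hne : x * C + D ≠ 0 := by
    intro h
    rw [h] at hx; simp at hx; linarith
  have h1 : x - -D/C = (x * C + D) / C := by field_simp; ring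
  have h2 : x * ((x * C + D)⁻¹ * C) = x / (x - -D/C) := by rw [h1]; field_simp
  have h3 : x - -D/C ≠ 0 := by rw [h1]; exact div_ne_zero hne hC
  rw [h2, abs_div, le_div_iff₀ (abs_pos.2 h3)] at hx
  exact hx

/-- The matrix with entries `g` on `S` and zero elsewhere. -/
def auxMat {n : ℕ} (S : Finset (Fin n × Fin n)) (g : S → ℝ) : Matrix (Fin n) (Fin n) ℝ :=
  Matrix.of fun i j => if h : (i, j) ∈ S then g ⟨(i, j), h⟩ else 0

/-- The modulus of the product of an entry with the matching entry of the inverse. -/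
noncomputable def auxX {n : ℕ} (S : Finset (Fin n × Fin n)) (p : S) (g : S → ℝ) : ℝ :=
  |auxMat S g p.1.1 p.1.2 * (auxMat S g)⁻¹ p.1.2 p.1.1|

lemma measurable_auxMat {n : ℕ} (S : Finset (Fin n × Fin n)) : Measurable (auxMat S) := by
  refine measurable_pi_lambda _ fun i => measurable_pi_lambda _ fun j => ?_
  by_cases h : (i, j) ∈ S
  · simpa [auxMat, h] using measurable_pi_apply _
  · simp [auxMat, h]

lemma measurable_auxMat_apply {n : ℕ} (S : Finset (Fin n × Fin n)) (i j : Fin n) :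
    Measurable (fun g => auxMat S g i j) := by
  by_cases h : (i, j) ∈ S
  · simpa [auxMat, h] using measurable_pi_apply _
  · simp [auxMat, h]

lemma measurable_det_aux {Ω : Type*} [MeasurableSpace Ω] {n : ℕ}
    (F : Ω → Matrix (Fin n) (Fin n) ℝ) (hF : ∀ i j, Measurable fun g => F g i j) :
    Measurable fun g => (F g).det := by
  simp only [Matrix.det_apply]
  refine Finset.measurable_sum _ fun s _ => ?_
  refine Measurable.const_smul ?_ _
  exact Finset.measurable_prod _ fun i _ => hF _ _

lemma aux_inv_apply {n : ℕ} (A : Matrix (Fin n) (Fin n) ℝ) (i j : Fin n) :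
    A⁻¹ j i = A.det⁻¹ * A.adjugate j i := by
  rw [Matrix.inv_def, Ring.inverse_eq_inv', Matrix.smul_apply, smul_eq_mul]

lemma measurable_auxX {n : ℕ} (S : Finset (Fin n × Fin n)) (p : S) : Measurable (auxX S p) := by
  unfold auxX
  simp only [aux_inv_apply, Matrix.adjugate_apply]
  refine (Measurable.mul (measurable_auxMat_apply S _ _) (Measurable.mul ?_ ?_)).abs
  · exact (measurable_det_aux _ (measurable_auxMat_apply S)).inv
  · refine measurable_det_aux _ fun i j => ?_
    simp only [Matrix.updateRow_apply]
    split_ifs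
    · exact measurable_const
    · exact measurable_auxMat_apply S _ _

lemma auxX_update {n : ℕ} (S : Finset (Fin n × Fin n)) (p : S) (g : S → ℝ) :
    ∃ C D : ℝ, ∀ x, auxX S p (Function.update g p x) = |x * ((x * C + D)⁻¹ * C)| := by
  obtain ⟨⟨i, j⟩, hp⟩ := p
  have hij : ∀ x, auxMat S (Function.update g ⟨(i, j), hp⟩ x) i j = x := by
    intro x; simp [auxMat, hp]
  have hother : ∀ x k l, (k, l) ≠ (i, j) →
      auxMat S (Function.update g ⟨(i, j), hp⟩ x) k l = auxMat S g k l := by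
    intro x k l h
    by_cases hs : (k, l) ∈ S
    · simp only [auxMat, Matrix.of_apply, hs, dif_pos]
      rw [Function.update_of_ne]
      simpa [Subtype.ext_iff] using h
    · simp [auxMat, hs]
  have hadj : ∀ x k, (auxMat S (Function.update g ⟨(i, j), hp⟩ x)).adjugate k i
      = (auxMat S g).adjugate k i := by
    intro x k
    rw [Matrix.adjugate_apply, Matrix.adjugate_apply]
    congr 1
    ext a b
    simp only [Matrix.updateRow_apply]
    split_ifs with h
    · rfl
    · apply hother
      intro h'
      exact h (Prod.ext_iff.1 h').1
  refine ⟨(auxMat S g).adjugate j i,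
    ∑ k ∈ Finset.univ.erase j, auxMat S g i k * (auxMat S g).adjugate k i, fun x => ?_⟩
  have hdet : (auxMat S (Function.update g ⟨(i, j), hp⟩ x)).det
      = x * (auxMat S g).adjugate j i +
        ∑ k ∈ Finset.univ.erase j, auxMat S g i k * (auxMat S g).adjugate k i := by
    rw [Matrix.det_eq_sum_mul_adjugate_row _ i, ← Finset.add_sum_erase _ _ (Finset.mem_univ j),
      hij, hadj]
    congr 1
    refine Finset.sum_congr rfl fun k hk => ?_
    rw [hadj, hother]
    intro h
    exact Finset.ne_of_mem_erase hk (Prod.ext_iff.1 h).2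
  simp only [auxX, aux_inv_apply]
  rw [hdet, hij, hadj]

section
variable {n : ℕ} (S : Finset (Fin n × Fin n)) (m : S → ℝ)
  {σ : ℝ} {vv : NNReal}

lemma aux_tail (hm : ∀ p, |m p| ≤ 1) (hσ : 0 < σ) (hvv : (vv : ℝ) = σ ^ 2)
    (p : S) {t : ℝ} (ht : 2 ≤ t) :
    (Measure.pi fun q : S => gaussianReal (m q) vv) {g | t ≤ auxX S p g}
      ≤ ENNReal.ofReal (0.96 * ((1 + σ)/σ) / t) := by
  have hms : MeasurableSet {g | t ≤ auxX S p g} :=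
    measurableSet_le measurable_const (measurable_auxX S p)
  rw [← lintegral_indicator_one hms]
  calc _ ≤ ∫⁻ g, (fun _ => ENNReal.ofReal (0.96 * ((1 + σ)/σ) / t)) g
            ∂(Measure.pi fun q : S => gaussianReal (m q) vv) := by
        apply lintegral_le_of_lmarginal_le {p} (measurable_one.indicator hms) measurable_const
        rw [lmarginal_singleton, lmarginal_singleton]
        intro g
        simp only [lintegral_const, measure_univ, mul_one]
        obtain ⟨C, D, h⟩ := auxX_update S p g
        have h1 : ∀ x, ({g | t ≤ auxX S p g} : Set (S → ℝ)).indicator (1 : (S → ℝ) → ℝ≥0∞)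
            (Function.update g p x)
            = ({x | t ≤ |x * ((x * C + D)⁻¹ * C)|} : Set ℝ).indicator 1 x := by
          intro x
          simp only [Set.indicator, Set.mem_ofPred_eq, h, Pi.one_apply]
        simp only [h1]
        rw [lintegral_indicator_one (measurableSet_le measurable_const (by fun_prop))]
        exact aux_gauss' hvv hσ (hm p) ht
    _ = _ := by simp

lemma aux_lint (hm : ∀ p, |m p| ≤ 1) (hσ : 0 < σ) (hvv : (vv : ℝ) = σ ^ 2)
    (p : S) {t : ℝ} (ht : 2 ≤ t) :
    ∫⁻ g, ENNReal.ofReal (max 0 (Real.log (auxX S p g / t)))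
        ∂(Measure.pi fun q : S => gaussianReal (m q) vv)
      ≤ ENNReal.ofReal (0.96 * ((1 + σ)/σ) / t) := by
  have ht0 : 0 < t := by linarith
  rw [lintegral_eq_lintegral_meas_le _ (ae_of_all _ fun g => le_max_left (0:ℝ) (Real.log (auxX S p g / t)))
    (measurable_const.max ((measurable_auxX S p).div_const t).log).aemeasurable]
  have hint : IntegrableOn (fun s : ℝ => 0.96 * ((1 + σ)/σ) / t * Real.exp (-s)) (Set.Ioi 0) :=
    (integrableOn_exp_neg_Ioi 0).const_mul _
  calc _ ≤ ∫⁻ s in Set.Ioi (0:ℝ),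
          ENNReal.ofReal (0.96 * ((1 + σ)/σ) / t * Real.exp (-s)) := by
        apply setLIntegral_mono' measurableSet_Ioi
        intro s hs
        have hs0 : 0 < s := hs
        have hexp : 1 ≤ Real.exp s := Real.one_le_exp hs0.le
        refine (measure_mono ?_).trans ((aux_tail S m hm hσ hvv p
          (t := t * Real.exp s) (by nlinarith)).trans (le_of_eq ?_))
        · intro g hg
          simp only [Set.mem_ofPred_eq] at hg ⊢
          have hX : 0 ≤ auxX S p g := abs_nonneg _
          have h1 : s ≤ Real.log (auxX S p g / t) := by
            rcases le_max_iff.1 hg with h | h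
            · linarith
            · exact h
          have hX' : 0 < auxX S p g / t := by
            rcases (div_nonneg hX ht0.le).lt_or_eq with h | h
            · exact h
            · rw [← h, Real.log_zero] at h1; linarith
          have h2 := (Real.le_log_iff_exp_le hX').1 h1
          rw [le_div_iff₀ ht0] at h2
          linarith
        · congr 1
          rw [Real.exp_neg]
          field_simp
    _ = _ := by
        rw [← ofReal_integral_eq_lintegral_ofReal hint]
        · rw [integral_const_mul, integral_exp_neg_Ioi_zero, mul_one]
        · refine ae_of_all _ fun s => ?_
          simp only [Pi.zero_apply]
          positivity
end

lemma aux_pointwise {ι : Type*} [Fintype ι] [Nonempty ι] (X : ι → ℝ) (hX : ∀ p, 0 ≤ X p)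
    {t : ℝ} (ht : 2 ≤ t) :
    Real.log (∑ p, X p) ≤ Real.log (Fintype.card ι) + Real.log t
      + ∑ p, max 0 (Real.log (X p / t)) := by
  have ht0 : 0 < t := by linarith
  have hY : ∀ p, 0 ≤ max 0 (Real.log (X p / t)) := fun p => le_max_left _ _
  have hsum : 0 ≤ ∑ p, max 0 (Real.log (X p / t)) := Finset.sum_nonneg fun p _ => hY p
  have hc : (1:ℝ) ≤ Fintype.card ι := by exact_mod_cast Fintype.card_pos
  rcases (Finset.sum_nonneg fun p (_ : p ∈ Finset.univ) => hX p).lt_or_eq with h | h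
  · have h1 : ∀ p, X p ≤ t * Real.exp (∑ p, max 0 (Real.log (X p / t))) := by
      intro p
      have h2 : Real.log (X p / t) ≤ ∑ p, max 0 (Real.log (X p / t)) :=
        (le_max_right _ _).trans (Finset.single_le_sum (fun q _ => hY q) (Finset.mem_univ p))
      rcases (hX p).lt_or_eq with h | h
      · rw [Real.log_le_iff_le_exp (by positivity), div_le_iff₀ ht0] at h2
        linarith
      · rw [← h]; positivity
    have h2 : ∑ p, X p ≤ Fintype.card ι * (t * Real.exp (∑ p, max 0 (Real.log (X p / t)))) := by
      refine (Finset.sum_le_sum fun p _ => h1 p).trans ?_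
      simp
    refine (Real.log_le_log h h2).trans (le_of_eq ?_)
    rw [Real.log_mul (by positivity) (by positivity), Real.log_mul (by positivity) (by positivity),
      Real.log_exp]
    ring
  · rw [← h, Real.log_zero]
    have := Real.log_nonneg hc
    have := Real.log_nonneg (show 1 ≤ t by linarith)
    linarith

lemma aux_main {n : ℕ} (S : Finset (Fin n × Fin n)) (m : S → ℝ) (hm : ∀ p, |m p| ≤ 1)
    {σ : ℝ} (hσ : 0 < σ) {vv : NNReal} (hvv : (vv : ℝ) = σ ^ 2) :
    ∫ g, Real.log (∑ p, auxX S p g) ∂(Measure.pi fun q : S => gaussianReal (m q) vv)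
      < Real.log ((1 + σ)/σ) + 2 * Real.log S.card + 1.03 := by
  set μ := Measure.pi fun q : S => gaussianReal (m q) vv with hμ
  have hK : 1 ≤ (1 + σ)/σ := by rw [le_div_iff₀ hσ]; linarith
  have hKlog := Real.log_nonneg hK
  have hcl : 0 ≤ Real.log S.card := Real.log_natCast_nonneg _
  rcases Nat.lt_or_ge S.card 2 with hc | hc
  · -- at most one entry: the logarithm vanishes identically
    have hzero : ∀ g, Real.log (∑ p, auxX S p g) = 0 := by
      intro g
      by_cases hd : (auxMat S g).det = 0
      · have : ∀ p, auxX S p g = 0 := by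
          intro p; simp [auxX, aux_inv_apply, hd]
        simp [this]
      have hsub : Subsingleton S := by
        rw [← Fintype.card_le_one_iff_subsingleton]
        simp; omega
      rcases isEmpty_or_nonempty S with he | ⟨⟨p⟩⟩
      · simp
      · rw [Fintype.sum_subsingleton _ p]
        obtain ⟨⟨i, j⟩, hp⟩ := p
        have h1 : (auxMat S g * (auxMat S g)⁻¹) i i = 1 := by
          rw [Matrix.mul_nonsing_inv _ (isUnit_iff_ne_zero.2 hd)]; simp
        rw [Matrix.mul_apply, Finset.sum_eq_single j] at h1
        · simp [auxX, h1]
        · intro k _ hk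
          have : (i, k) ∉ S := by
            intro h
            have := congrArg Subtype.val (Subsingleton.elim (⟨(i, k), h⟩ : S) ⟨(i, j), hp⟩)
            exact hk (Prod.ext_iff.1 this).2
          simp [auxMat, this]
        · simp
    simp only [hzero, integral_zero]
    linarith
  by_cases hint : Integrable (fun g => Real.log (∑ p, auxX S p g)) μ
  swap
  · rw [integral_undef hint]; linarith
  have hc' : (2:ℝ) ≤ S.card := by exact_mod_cast hc
  have hne : Nonempty S := by
    rw [← Fintype.card_pos_iff]; simp only [Fintype.card_coe]; omega
  set t := S.card * ((1 + σ)/σ) with htdef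
  have ht : 2 ≤ t := by nlinarith
  have ht0 : 0 < t := by linarith
  have hYm : ∀ p, Measurable fun g => max 0 (Real.log (auxX S p g / t)) := fun p =>
    measurable_const.max ((measurable_auxX S p).div_const t).log
  have hYi : ∀ p, Integrable (fun g => max 0 (Real.log (auxX S p g / t))) μ := by
    intro p
    refine ⟨(hYm p).aestronglyMeasurable, ?_⟩
    rw [hasFiniteIntegral_iff_ofReal (ae_of_all _ fun g => le_max_left (0:ℝ) (Real.log (auxX S p g / t)))]
    exact (aux_lint S m hm hσ hvv p ht).trans_lt ENNReal.ofReal_lt_top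
  have hYb : ∀ p, ∫ g, max 0 (Real.log (auxX S p g / t)) ∂μ ≤ 0.96 / S.card := by
    intro p
    rw [integral_eq_lintegral_of_nonneg_ae (ae_of_all _ fun g => le_max_left (0:ℝ) (Real.log (auxX S p g / t)))
      (hYm p).aestronglyMeasurable]
    refine (ENNReal.toReal_le_of_le_ofReal (by positivity)
      (aux_lint S m hm hσ hvv p ht)).trans (le_of_eq ?_)
    rw [htdef]; field_simp
  have hsumi : Integrable (fun g => ∑ p, max 0 (Real.log (auxX S p g / t))) μ :=
    integrable_finsetSum _ fun p _ => hYi p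
  calc _ ≤ ∫ g, (Real.log (Fintype.card S) + Real.log t
          + ∑ p, max 0 (Real.log (auxX S p g / t))) ∂μ := by
        refine integral_mono hint ((integrable_const _).add hsumi) fun g => ?_
        exact aux_pointwise (fun p => auxX S p g) (fun p => abs_nonneg _) ht
    _ = Real.log (Fintype.card S) + Real.log t
          + ∑ p, ∫ g, max 0 (Real.log (auxX S p g / t)) ∂μ := by
        rw [integral_add (integrable_const _) hsumi, integral_finsetSum _ fun p _ => hYi p]
        simp
    _ ≤ Real.log (Fintype.card S) + Real.log t + ∑ _p : S, 0.96 / (S.card : ℝ) := by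
        gcongr with p; exact hYb p
    _ = Real.log S.card + Real.log t + 0.96 := by
        simp only [Finset.sum_const, Finset.card_univ, Fintype.card_coe, nsmul_eq_mul]
        field_simp
    _ < _ := by
        rw [htdef, Real.log_mul (by positivity) (by positivity)]
        norm_num
        linarith

/-- Let `S ⊆ [n]²` be admissible, `Ā ∈ M_S` with `‖Ā‖_max ≤ 1`, `σ > 0`
and `A ~ N_S(Ā, σ²Id)`. For every `β > 1`,
`E(log_β(Σ_{(i,j)∈S} |a_{ij}·γ_{ji}|)) < log_β((1+σ)/σ) + 2·log_β|S| + 1.03/ln β`,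
where `γ = A⁻¹` and the sum equals `c^det(A)` almost surely. -/
theorem expectation_log_cdet_lt {n : ℕ} (S : Finset (Fin n × Fin n)) (hS : Admissible S)
    (Abar : Matrix (Fin n) (Fin n) ℝ) (hsupp : ∀ i j, (i, j) ∉ S → Abar i j = 0)
    (hmax : ∀ i j, |Abar i j| ≤ 1) (σ : ℝ) (hσ : 0 < σ)
    (β : ℝ) (hβ : 1 < β) :
    ∫ A, Real.log (∑ p ∈ S, |A p.1 p.2 * A⁻¹ p.2 p.1|) / Real.log β
        ∂(sparseGaussian S Abar σ)
      < Real.log ((1 + σ) / σ) / Real.log β + 2 * (Real.log S.card / Real.log β)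
          + 1.03 / Real.log β := by
  have hlog : 0 < Real.log β := Real.log_pos hβ
  rw [integral_div]
  have key : ∫ A, Real.log (∑ p ∈ S, |A p.1 p.2 * A⁻¹ p.2 p.1|) ∂(sparseGaussian S Abar σ)
      < Real.log ((1 + σ) / σ) + 2 * Real.log S.card + 1.03 := by
    by_cases hint : Integrable
        (fun A : Matrix (Fin n) (Fin n) ℝ => Real.log (∑ p ∈ S, |A p.1 p.2 * A⁻¹ p.2 p.1|))
        (sparseGaussian S Abar σ)
    · have h := aux_main S (fun p => Abar p.1.1 p.1.2) (fun p => hmax _ _) hσ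
        (vv := ⟨σ ^ 2, sq_nonneg σ⟩) rfl
      refine lt_of_eq_of_lt ?_ h
      refine (integral_map (measurable_auxMat S).aemeasurable hint.aestronglyMeasurable).trans ?_
      refine integral_congr_ae (ae_of_all _ fun g => ?_)
      simp only [auxX]
      rw [← Finset.sum_coe_sort S]
    · rw [integral_undef hint]
      have hK : 1 ≤ (1 + σ)/σ := by rw [le_div_iff₀ hσ]; linarith
      have := Real.log_nonneg hK
      have : 0 ≤ Real.log S.card := Real.log_natCast_nonneg _
      linarith
  calc _ < (Real.log ((1 + σ) / σ) + 2 * Real.log S.card + 1.03) / Real.log β :=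
        div_lt_div_of_pos_right key hlog
    _ = _ := by ring
end

section
/- Let S ⊆ [n]² be admissible, Ā ∈ M_S with ‖Ā‖_max ≤ 1, σ > 0, and let A ~ N_S(Ā, σ²Id). Fix k, l ∈ [n]. Then for every real t > 2|S|, Prob{ c†_{kl}(A) > t } ≤ ((1 + σ)/σ)·(4|S|²/(t − 2|S|))·√(2/π), where c†_{kl}(A) is the componentwise condition number of the map A ↦ (A⁻¹)_{kl} at A (A is almost surely invertible). -/
open MeasureTheory ProbabilityTheory
open scoped ENNReal

/-- `f` is affine in every coordinate. -/
def MAff {ι : Type*} [DecidableEq ι] (f : (ι → ℝ) → ℝ) : Prop :=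
  ∀ (x : ι → ℝ) (p : ι) (y : ℝ), f (Function.update x p y) =
    f (Function.update x p 0) + y * (f (Function.update x p 1) - f (Function.update x p 0))

/-- The slope of `f` in the direction `p`. -/
def slp {ι : Type*} [DecidableEq ι] (f : (ι → ℝ) → ℝ) (x : ι → ℝ) (p : ι) : ℝ :=
  f (Function.update x p 1) - f (Function.update x p 0)

lemma slp_update {ι : Type*} [DecidableEq ι] (f : (ι → ℝ) → ℝ) (x : ι → ℝ) (p : ι) (y : ℝ) :
    slp f (Function.update x p y) p = slp f x p := by
  simp [slp]

lemma measurable_slp {ι : Type*} [DecidableEq ι] {f : (ι → ℝ) → ℝ} (hf : Measurable f) (p : ι) :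
    Measurable (fun x => slp f x p) := by
  unfold slp
  have h : ∀ y : ℝ, Measurable (fun x : ι → ℝ => Function.update x p y) := by
    intro y
    exact measurable_update_left
  exact (hf.comp (h 1)).sub (hf.comp (h 0))

lemma pi_fiber_le {ι : Type*} [Fintype ι] [DecidableEq ι] (μ : ι → Measure ℝ)
    [∀ i, IsProbabilityMeasure (μ i)] {f : (ι → ℝ) → ℝ} (hf : Measurable f) (hA : MAff f)
    (p : ι) (s : ℝ) (B : ℝ≥0∞)
    (hB : ∀ α β : ℝ, μ p {z | s * |α + z * β| < |z * β|} ≤ B) :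
    Measure.pi μ {x | s * |f x| < |x p * slp f x p|} ≤ B := by
  have hm : MeasurableSet {x : ι → ℝ | s * |f x| < |x p * slp f x p|} := by
    apply measurableSet_lt
    · exact (measurable_const.mul (_root_.continuous_abs.measurable.comp hf))
    · exact _root_.continuous_abs.measurable.comp ((measurable_pi_apply p).mul (measurable_slp hf p))
  set E := {x : ι → ℝ | s * |f x| < |x p * slp f x p|} with hE
  rw [← lintegral_indicator_one hm, lintegral_eq_lmarginal_univ (fun _ => 0),
    lmarginal_erase' _ (measurable_one.indicator hm) (Finset.mem_univ p)]
  calc _ ≤ (∫⋯∫⁻_(Finset.univ.erase p), (fun _ => B) ∂μ) (fun _ => 0) := by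
        apply lmarginal_mono
        intro x
        refine le_trans (le_of_eq ?_) (hB (f (Function.update x p 0)) (slp f x p))
        rw [← lintegral_indicator_one]
        · refine lintegral_congr fun z => ?_
          simp only [Set.indicator, hE, Set.mem_ofPred_eq, slp_update, Function.update_self]
          rw [hA x p z]
          rfl
        · apply measurableSet_lt <;> fun_prop
    _ ≤ B := by
        simp [lmarginal]

lemma pi_zero_null {ι : Type*} [Fintype ι] [DecidableEq ι] (μ : ι → Measure ℝ)
    [∀ i, IsProbabilityMeasure (μ i)] (hμ : ∀ i z, μ i {z} = 0)
    {f : (ι → ℝ) → ℝ} (hf : Measurable f) (hA : MAff f)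
    (x0 : ι → ℝ) (hx0 : f x0 ≠ 0) :
    Measure.pi μ {x | f x = 0} = 0 := by
  have hm : MeasurableSet {x : ι → ℝ | f x = 0} := measurableSet_eq_fun hf measurable_const
  set E := {x : ι → ℝ | f x = 0} with hE
  rw [← lintegral_indicator_one hm, lintegral_eq_lmarginal_univ x0]
  have key : ∀ T : Finset ι, (∫⋯∫⁻_T, E.indicator 1 ∂μ) x0 = 0 := by
    intro T
    induction T using Finset.induction_on with
    | empty => simp [hE, hx0]
    | insert p T hp ih =>
      rw [lmarginal_insert' _ (measurable_one.indicator hm) hp, ← nonpos_iff_eq_zero, ← ih]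
      apply lmarginal_mono
      intro x
      by_cases hx : f x = 0
      · have : E.indicator (1 : (ι → ℝ) → ℝ≥0∞) x = 1 := by simp [hE, hx]
        rw [this]
        calc _ ≤ ∫⁻ _, 1 ∂(μ p) := by
              apply lintegral_mono
              intro z
              exact Set.indicator_le_self' (by simp) _
          _ = 1 := by simp
      · have h1 : {z : ℝ | f (Function.update x p z) = 0}.Subsingleton := by
          intro z hz w hw
          simp only [Set.mem_ofPred_eq] at hz hw
          rw [hA] at hz hw
          have h0 := hA x p (x p)
          rw [Function.update_eq_self] at h0
          by_contra hne
          have h2 : (z - w) * (f (Function.update x p 1) - f (Function.update x p 0)) = 0 := by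
            linarith
          rcases mul_eq_zero.mp h2 with h3 | h3
          · exact hne (by linarith)
          · rw [h3] at hz h0
            apply hx
            linarith
        have h2 : μ p {z : ℝ | f (Function.update x p z) = 0} = 0 := by
          rcases h1.eq_empty_or_singleton with h | ⟨z, h⟩
          · rw [h]; simp
          · rw [h]; exact hμ p z
        refine le_trans (le_of_eq ?_) (zero_le)
        rw [← h2, ← lintegral_indicator_one]
        · rfl
        · exact measurableSet_eq_fun (hf.comp (measurable_update x)) measurable_const
  exact key _

lemma cwCond_le {ι : Type*} [Fintype ι] [DecidableEq ι] (D : Set (ι → ℝ)) (F : (ι → ℝ) → ℝ)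
    (a : ι → ℝ) (L : (ι → ℝ) →L[ℝ] ℝ) (hF : HasFDerivAt F L a) (h0 : F a ≠ 0) (C : ℝ)
    (hC0 : 0 ≤ C)
    (hC : ∑ i, |a i| * |L (Pi.single i 1)| ≤ C * |F a|) :
    cwCond D (fun x (_ : Unit) => F x) a ≤ ENNReal.ofReal C := by
  apply ENNReal.le_of_forall_pos_le_add
  intro ε hε _
  have hε' : (0 : ℝ) < ε := hε
  have hFa : 0 < |F a| := abs_pos.mpr h0
  have ha1 : 0 < ‖a‖ + 1 := by positivity
  have hη : 0 < ε * |F a| / (‖a‖ + 1) := by positivity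
  have hlo := (hasFDerivAt_iff_isLittleO.mp hF).def hη
  obtain ⟨r, hr, hball⟩ := Metric.eventually_nhds_iff.mp hlo
  unfold cwCond
  refine iInf₂_le_of_le (ENNReal.ofReal (r / 2 / (‖a‖ + 1))) ?_ ?_
  · simp only [Set.mem_Ioi, ENNReal.ofReal_pos]; positivity
  refine iSup₂_le ?_
  rintro x ⟨-, hxd, -⟩
  have hfin : cwDist x a ≠ ⊤ := ne_top_of_le_ne_top ENNReal.ofReal_ne_top hxd
  set d := (cwDist x a).toReal with hd
  have hd0 : 0 ≤ d := ENNReal.toReal_nonneg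
  have hdE : cwDist x a = ENNReal.ofReal d := (ENNReal.ofReal_toReal hfin).symm
  have hdr : d ≤ r / 2 / (‖a‖ + 1) := by
    rw [hdE] at hxd
    exact (ENNReal.ofReal_le_ofReal_iff (by positivity)).mp hxd
  have hcomp : ∀ i, |x i - a i| ≤ d * |a i| := by
    intro i
    have hi : (if a i ≠ 0 then ENNReal.ofReal (|x i - a i| / |a i|)
       else if x i = a i then 0 else ⊤) ≤ cwDist x a :=
      le_iSup (fun i => if a i ≠ 0 then ENNReal.ofReal (|x i - a i| / |a i|)
       else if x i = a i then 0 else ⊤) i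
    by_cases h : a i = 0
    · by_cases h' : x i = a i
      · simp [h', h]
      · simp only [h, ne_eq, not_true_eq_false, if_false] at hi
        rw [if_neg (by rwa [h] at h')] at hi
        exact absurd (top_le_iff.mp hi) hfin
    · rw [if_pos h, hdE] at hi
      have := (ENNReal.ofReal_le_ofReal_iff hd0).mp hi
      rwa [div_le_iff₀ (abs_pos.mpr h)] at this
  have hnorm : ‖x - a‖ ≤ d * ‖a‖ := by
    rw [pi_norm_le_iff_of_nonneg (by positivity)]
    intro i
    refine (hcomp i).trans ?_
    exact mul_le_mul_of_nonneg_left (norm_le_pi_norm a i) hd0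
  have hlt : dist x a < r := by
    rw [dist_eq_norm]
    have h1 : d * (‖a‖ + 1) ≤ r / 2 := (le_div_iff₀ ha1).mp hdr
    nlinarith [norm_nonneg a]
  have h1 := hball hlt
  rw [Real.norm_eq_abs] at h1
  have hL : |L (x - a)| ≤ d * (C * |F a|) := by
    have h2 : L (x - a) = ∑ i, (x i - a i) * L (Pi.single i 1) := by
      conv_lhs => rw [pi_eq_sum_univ' (x - a)]
      rw [map_sum]
      refine Finset.sum_congr rfl fun i _ => ?_
      rw [map_smul, smul_eq_mul, Pi.sub_apply]
    rw [h2]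
    calc _ ≤ ∑ i, |(x i - a i) * L (Pi.single i 1)| := Finset.abs_sum_le_sum_abs _ _
      _ ≤ ∑ i, d * (|a i| * |L (Pi.single i 1)|) := by
          refine Finset.sum_le_sum fun i _ => ?_
          rw [abs_mul, ← mul_assoc]
          exact mul_le_mul_of_nonneg_right (hcomp i) (abs_nonneg _)
      _ = d * ∑ i, (|a i| * |L (Pi.single i 1)|) := by rw [Finset.mul_sum]
      _ ≤ _ := mul_le_mul_of_nonneg_left hC hd0
  have h3 : ε * |F a| / (‖a‖ + 1) * ‖x - a‖ ≤ d * (ε * |F a|) := by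
    calc _ ≤ ε * |F a| / (‖a‖ + 1) * (d * (‖a‖ + 1)) := by
          apply mul_le_mul_of_nonneg_left _ hη.le
          nlinarith
      _ = _ := by field_simp
  have h4 : |F x - F a| ≤ (C + ε) * d * |F a| := by
    have h5 : |F x - F a| ≤ |F x - F a - L (x - a)| + |L (x - a)| := by
      have := abs_add_le (F x - F a - L (x - a)) (L (x - a))
      simpa using this
    nlinarith
  apply ENNReal.div_le_of_le_mul
  have h6 : cwDist (fun _ : Unit => F x) (fun _ => F a) = ENNReal.ofReal (|F x - F a| / |F a|) := by
    simp [cwDist, h0]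
  rw [h6, hdE, ← ENNReal.ofReal_coe_nnreal, ← ENNReal.ofReal_add hC0 hε'.le,
    ← ENNReal.ofReal_mul (by positivity)]
  apply ENNReal.ofReal_le_ofReal
  rwa [div_le_iff₀ hFa]

lemma abs_mul_pdf_le (m σ z : ℝ) (v : NNReal) (hv : (v : ℝ) = σ ^ 2) (hm : |m| ≤ 1) (hσ : 0 < σ) :
    |z| * gaussianPDFReal m v z ≤ (1 + σ) / (σ * √(2 * Real.pi)) := by
  rw [gaussianPDFReal_def]
  simp only [hv]
  have hs : √(2 * Real.pi * σ ^ 2) = σ * √(2 * Real.pi) := by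
    rw [Real.sqrt_mul (by positivity), Real.sqrt_sq hσ.le, mul_comm]
  rw [hs]
  set u := z - m with hu
  have hz : |z| ≤ 1 + |u| := by
    have : |z| ≤ |u| + |m| := by
      have := abs_add_le u m
      simpa [hu] using this
    linarith
  set w := |u| / σ with hw
  have huw : |u| = w * σ := by rw [hw]; field_simp
  have hw0 : 0 ≤ w := by positivity
  have he : -u ^ 2 / (2 * σ ^ 2) = - (w ^ 2 / 2) := by
    rw [← sq_abs u, huw]; field_simp
  rw [he]
  have h1 : Real.exp (-(w ^ 2 / 2)) ≤ 1 := Real.exp_le_one_iff.mpr (by nlinarith [sq_nonneg w])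
  have h2 : w * Real.exp (-(w ^ 2 / 2)) ≤ 1 := by
    rw [Real.exp_neg, ← div_eq_mul_inv, div_le_one (Real.exp_pos _)]
    have := Real.add_one_le_exp (w ^ 2 / 2)
    nlinarith [sq_nonneg (w - 1)]
  have h3 : |z| * Real.exp (-(w ^ 2 / 2)) ≤ 1 + σ := by
    calc _ ≤ (1 + |u|) * Real.exp (-(w ^ 2 / 2)) :=
          mul_le_mul_of_nonneg_right hz (Real.exp_pos _).le
      _ = Real.exp (-(w ^ 2 / 2)) + σ * (w * Real.exp (-(w ^ 2 / 2))) := by rw [huw]; ring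
      _ ≤ 1 + σ * 1 := by gcongr
      _ = _ := by ring
  calc _ = (|z| * Real.exp (-(w ^ 2 / 2))) / (σ * √(2 * Real.pi)) := by
        field_simp
    _ ≤ _ := by gcongr

lemma gauss_fiber (m σ s α β : ℝ) (w : NNReal) (hw : (w : ℝ) = σ ^ 2) (hm : |m| ≤ 1) (hσ : 0 < σ) (hs : 1 < s) :
    gaussianReal m w {z | s * |α + z * β| < |z * β|} ≤
      ENNReal.ofReal ((1 + σ) / σ * √(2 / Real.pi) / (s - 1)) := by
  set K := (1 + σ) / (σ * √(2 * Real.pi)) with hK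
  have hv : w ≠ 0 := by
    intro h
    rw [h] at hw
    exact (pow_pos hσ 2).ne hw
  have hs1 : 0 < s - 1 := by linarith
  have hB : (1 + σ) / σ * √(2 / Real.pi) / (s - 1) = K * (2 / (s - 1)) := by
    have h2 : √(2 / Real.pi) = 2 / √(2 * Real.pi) := by
      rw [eq_div_iff (by positivity), ← Real.sqrt_mul (by positivity)]
      have : 2 / Real.pi * (2 * Real.pi) = 2 ^ 2 := by
        have := Real.pi_ne_zero
        field_simp
      rw [this, Real.sqrt_sq (by norm_num)]
    rw [h2, hK]; field_simp
  rw [hB]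
  by_cases hβ : β = 0
  · have : {z : ℝ | s * |α + z * β| < |z * β|} = ∅ := by
      ext z
      simp only [hβ, Set.mem_ofPred_eq, Set.mem_empty_iff_false, iff_false, not_lt, mul_zero, abs_zero]
      positivity
    rw [this]; simp
  set c := -α / β with hc
  have hset : {z : ℝ | s * |α + z * β| < |z * β|} = {z : ℝ | s * |z - c| < |z|} := by
    ext z
    simp only [Set.mem_ofPred_eq]
    have : α + z * β = (z - c) * β := by rw [hc]; field_simp; ring
    rw [this, abs_mul, abs_mul, ← mul_assoc, mul_lt_mul_iff_left₀ (abs_pos.mpr hβ)]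
  rw [hset]
  have hsub : ∃ u v : ℝ, {z : ℝ | s * |z - c| < |z|} ⊆ Set.Icc u v ∧ v - u = 2 * |c| * s / ((s - 1) * (s + 1)) := by
    rcases le_or_gt 0 c with h | h
    · refine ⟨c * s / (s + 1), c * s / (s - 1), ?_, ?_⟩
      · intro z hz
        simp only [Set.mem_ofPred_eq] at hz
        have hz0 : 0 ≤ z := by
          by_contra hneg
          push Not at hneg
          rw [abs_of_neg hneg, abs_of_neg (by linarith)] at hz
          nlinarith
        rw [abs_of_nonneg hz0] at hz
        have h1 := le_abs_self (z - c)
        have h2 := neg_le_abs (z - c)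
        constructor
        · rw [div_le_iff₀ (by linarith)]; nlinarith
        · rw [le_div_iff₀ (by linarith)]; nlinarith
      · rw [abs_of_nonneg h]; field_simp; ring
    · refine ⟨c * s / (s - 1), c * s / (s + 1), ?_, ?_⟩
      · intro z hz
        simp only [Set.mem_ofPred_eq] at hz
        have hz0 : z ≤ 0 := by
          by_contra hneg
          push Not at hneg
          rw [abs_of_pos hneg, abs_of_pos (by linarith)] at hz
          nlinarith
        rw [abs_of_nonpos hz0] at hz
        have h1 := le_abs_self (z - c)
        have h2 := neg_le_abs (z - c)
        constructor
        · rw [div_le_iff₀ (by linarith)]; nlinarith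
        · rw [le_div_iff₀ (by linarith)]; nlinarith
      · rw [abs_of_neg h]; field_simp; ring
  obtain ⟨u, v, huv, hlen⟩ := hsub
  by_cases hc0 : c = 0
  · have : {z : ℝ | s * |z - c| < |z|} = ∅ := by
      ext z
      simp only [hc0, Set.mem_ofPred_eq, Set.mem_empty_iff_false, iff_false, not_lt, sub_zero]
      nlinarith [abs_nonneg z]
    rw [this]; simp
  have hcp : 0 < |c| := abs_pos.mpr hc0
  rw [gaussianReal_apply _ hv]
  have hK0 : 0 ≤ K := by positivity
  calc _ ≤ ∫⁻ _ in {z : ℝ | s * |z - c| < |z|}, ENNReal.ofReal (K * ((s + 1) / (|c| * s))) := by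
        apply setLIntegral_mono measurable_const
        intro z hz
        simp only [Set.mem_ofPred_eq] at hz
        apply ENNReal.ofReal_le_ofReal
        have hzc : |c| * s ≤ |z| * (s + 1) := by
          have : |c| ≤ |z - c| + |z| := by
            have := abs_sub_abs_le_abs_sub c z
            rw [abs_sub_comm c z] at this
            linarith
          nlinarith
        have hzp : 0 < |z| := by
          by_contra hneg
          nlinarith [mul_pos hcp (by linarith : 0 < s), abs_nonneg z]
        have h1 := abs_mul_pdf_le m σ z w hw hm hσ
        rw [← hK] at h1
        have h2 : gaussianPDFReal m w z ≤ K / |z| := by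
          rw [le_div_iff₀ hzp]; linarith
        refine h2.trans ?_
        rw [div_eq_mul_one_div]
        apply mul_le_mul_of_nonneg_left _ hK0
        rw [div_le_div_iff₀ hzp (by positivity)]
        linarith
    _ = ENNReal.ofReal (K * ((s + 1) / (|c| * s))) * volume {z : ℝ | s * |z - c| < |z|} := by
        simp
    _ ≤ ENNReal.ofReal (K * ((s + 1) / (|c| * s))) * volume (Set.Icc u v) := by
        gcongr
    _ = _ := by
        rw [Real.volume_Icc, hlen, ← ENNReal.ofReal_mul (by positivity)]
        congr 1
        have : s + 1 ≠ 0 := by positivity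
        field_simp

lemma funToMat_update {n : ℕ} (x : Fin n × Fin n → ℝ) (p : Fin n × Fin n) (y : ℝ) :
    funToMat (Function.update x p y) =
      (funToMat x).updateRow p.1 (Function.update (funToMat x p.1) p.2 y) := by
  ext i j
  obtain ⟨a, b⟩ := p
  simp only [funToMat, Matrix.of_apply, Matrix.updateRow_apply, Function.update_apply, Prod.mk.injEq]
  by_cases h : i = a <;> by_cases h' : j = b <;> simp [h, h']

lemma det_row_aff {n : ℕ} (M : Matrix (Fin n) (Fin n) ℝ) (i j : Fin n) (v : Fin n → ℝ) (y : ℝ) :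
    (M.updateRow i (Function.update v j y)).det =
      (M.updateRow i (Function.update v j 0)).det + y * ((M.updateRow i (Function.update v j 1)).det
        - (M.updateRow i (Function.update v j 0)).det) := by
  have h : ∀ z : ℝ, (Function.update v j z) = Function.update v j 0 + z • Pi.single j 1 := by
    intro z
    ext l
    by_cases hl : l = j
    · subst hl; simp
    · simp [hl]
  rw [h y, h 1, Matrix.det_updateRow_add, Matrix.det_updateRow_add, Matrix.det_updateRow_smul,
    Matrix.det_updateRow_smul]
  ring

/-- The determinant as a function on `ℝ^(n×n)`. -/
noncomputable def detF {n : ℕ} (x : Fin n × Fin n → ℝ) : ℝ := (funToMat x).det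

/-- An entry of the adjugate as a function on `ℝ^(n×n)`. -/
noncomputable def adjF {n : ℕ} (k l : Fin n) (x : Fin n × Fin n → ℝ) : ℝ :=
  (funToMat x).adjugate k l

lemma maff_detF {n : ℕ} : MAff (detF (n := n)) := by
  intro x p y
  simp only [detF, funToMat_update]
  exact det_row_aff _ _ _ _ _

lemma maff_adjF {n : ℕ} (k l : Fin n) : MAff (adjF k l) := by
  intro x p y
  simp only [adjF, funToMat_update, Matrix.adjugate_apply]
  by_cases h : p.1 = l
  · rw [h]; simp only [Matrix.updateRow_idem]; ring
  · simp only [Matrix.updateRow_comm _ h]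
    exact det_row_aff _ _ _ _ _

lemma differentiable_detF {n : ℕ} : Differentiable ℝ (detF (n := n)) := by
  unfold detF
  simp only [Matrix.det_apply', funToMat, Matrix.of_apply]
  fun_prop

lemma differentiable_adjF {n : ℕ} (k l : Fin n) : Differentiable ℝ (adjF k l) := by
  have e : adjF k l = fun x => detF (fun p : Fin n × Fin n =>
      if p.1 = l then (Pi.single k (1 : ℝ) : Fin n → ℝ) p.2 else x p) := by
    ext x
    rw [adjF, detF, Matrix.adjugate_apply]
    congr 1
    ext i j
    simp [funToMat, Matrix.updateRow_apply]
  rw [e]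
  refine differentiable_detF.comp (differentiable_pi.mpr fun p => ?_)
  split_ifs <;> fun_prop

lemma fderiv_pi_single {ι : Type*} [Fintype ι] [DecidableEq ι] {f : (ι → ℝ) → ℝ}
    (hf : Differentiable ℝ f) (hA : MAff f) (x : ι → ℝ) (p : ι) :
    fderiv ℝ f x (Pi.single p 1) = slp f x p := by
  have h1 : HasDerivAt (fun y : ℝ => f (Function.update x p y)) (fderiv ℝ f x (Pi.single p 1)) (x p) := by
    have h2 := hasDerivAt_update x p (x p)
    have h3 : HasFDerivAt f (fderiv ℝ f x) (Function.update x p (x p)) := by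
      rw [Function.update_eq_self]; exact (hf x).hasFDerivAt
    exact h3.comp_hasDerivAt (x p) h2
  have h4 : HasDerivAt (fun y : ℝ => f (Function.update x p y)) (slp f x p) (x p) := by
    have : (fun y : ℝ => f (Function.update x p y)) =
        fun y => f (Function.update x p 0) + y * slp f x p := by
      ext y; rw [hA]; rfl
    rw [this]
    simpa using ((hasDerivAt_id (x p)).mul_const (slp f x p)).const_add (f (Function.update x p 0))
  exact h1.unique h4

lemma inv_entry {n : ℕ} (k l : Fin n) (x : Fin n × Fin n → ℝ) :
    (funToMat x)⁻¹ k l = adjF k l x / detF x := by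
  rw [Matrix.inv_def, Matrix.smul_apply, Ring.inverse_eq_inv', smul_eq_mul, div_eq_inv_mul]
  rfl

lemma cInv_le {n : ℕ} (S : Finset (Fin n × Fin n)) (k l : Fin n) (x : Fin n × Fin n → ℝ)
    (hx : ∀ p ∉ S, x p = 0) (hP : adjF k l x ≠ 0) (hQ : detF x ≠ 0) (s : ℝ) (hs : 0 ≤ s)
    (h1 : ∀ p ∈ S, |x p * slp (adjF k l) x p| ≤ s * |adjF k l x|)
    (h2 : ∀ p ∈ S, |x p * slp detF x p| ≤ s * |detF x|) :
    cwCond {x | IsUnit (funToMat x).det} (fun x (_ : Unit) => (funToMat x)⁻¹ k l) x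
      ≤ ENNReal.ofReal (2 * s * S.card) := by
  simp only [inv_entry]
  have hFd : HasFDerivAt (fun x => adjF k l x / detF x) ((detF x ^ 2)⁻¹ • (detF x • fderiv ℝ (adjF k l) x
      - adjF k l x • fderiv ℝ detF x) : (Fin n × Fin n → ℝ) →L[ℝ] ℝ) x := by
    have hi := (hasDerivAt_inv hQ).comp_hasFDerivAt x (differentiable_detF x).hasFDerivAt
    have hm := (differentiable_adjF k l x).hasFDerivAt.mul hi
    have e : (fun x => adjF k l x / detF x) = adjF k l * ((fun y : ℝ => y⁻¹) ∘ detF) := by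
      ext z
      simp [div_eq_mul_inv]
    rw [e]
    refine hm.congr_fderiv ?_
    ext v
    simp only [FunLike.coe_smul, FunLike.coe_sub, FunLike.coe_add, Pi.add_apply, Pi.smul_apply, Pi.sub_apply, smul_eq_mul,
      Function.comp_apply]
    field_simp
    ring
  refine cwCond_le _ _ _ _ hFd (div_ne_zero hP hQ) _ (by positivity) ?_
  have hterm : ∀ p ∈ S, |x p| * |((detF x ^ 2)⁻¹ • (detF x • fderiv ℝ (adjF k l) x
      - adjF k l x • fderiv ℝ detF x) : (Fin n × Fin n → ℝ) →L[ℝ] ℝ) (Pi.single p 1)|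
      ≤ 2 * s * |adjF k l x / detF x| := by
    intro p hp
    simp only [FunLike.coe_smul, FunLike.coe_sub, Pi.smul_apply, Pi.sub_apply, smul_eq_mul,
      fderiv_pi_single (differentiable_adjF k l) (maff_adjF k l), fderiv_pi_single differentiable_detF maff_detF]
    have e1 := h1 p hp
    have e2 := h2 p hp
    set P := adjF k l x
    set Q := detF x
    have hQ' : 0 < |Q| := abs_pos.mpr hQ
    have e3 : |x p| * |(Q ^ 2)⁻¹ * (Q * slp (adjF k l) x p - P * slp detF x p)|
      = |Q * (x p * slp (adjF k l) x p) - P * (x p * slp detF x p)| / |Q| ^ 2 := by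
      rw [← abs_mul, ← abs_pow, ← abs_div]
      congr 1
      field_simp
    rw [e3, abs_div, div_le_iff₀ (by positivity)]
    have e4 : 2 * s * (|P| / |Q|) * |Q| ^ 2 = |Q| * (s * |P|) + |P| * (s * |Q|) := by
      field_simp; ring
    rw [e4]
    refine (abs_sub _ _).trans ?_
    rw [abs_mul Q, abs_mul P]
    gcongr
  calc _ = ∑ p ∈ S, _ := by
        symm
        apply Finset.sum_subset (Finset.subset_univ S)
        intro p _ hp
        rw [hx p hp]; simp
    _ ≤ ∑ p ∈ S, 2 * s * |adjF k l x / detF x| := Finset.sum_le_sum hterm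
    _ = _ := by rw [Finset.sum_const, nsmul_eq_mul]; ring

lemma cInv_zero {n : ℕ} (S : Finset (Fin n × Fin n)) (k l : Fin n)
    (hP : ∀ x : Fin n × Fin n → ℝ, (∀ p ∉ S, x p = 0) → adjF k l x = 0)
    (x : Fin n × Fin n → ℝ) (hx : ∀ p ∉ S, x p = 0) :
    cwCond {x | IsUnit (funToMat x).det} (fun x (_ : Unit) => (funToMat x)⁻¹ k l) x = 0 := by
  rw [← nonpos_iff_eq_zero]
  unfold cwCond
  refine iInf₂_le_of_le 1 (by simp) ?_
  refine iSup₂_le ?_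
  rintro z ⟨-, hzd, -⟩
  have hz : ∀ p ∉ S, z p = 0 := by
    intro p hp
    by_contra hne
    have hi : (if x p ≠ 0 then ENNReal.ofReal (|z p - x p| / |x p|)
       else if z p = x p then 0 else ⊤) ≤ cwDist z x :=
      le_iSup (fun i => if x i ≠ 0 then ENNReal.ofReal (|z i - x i| / |x i|)
       else if z i = x i then 0 else ⊤) p
    rw [hx p hp] at hi
    simp only [ne_eq, not_true_eq_false, if_false, hne] at hi
    exact absurd (hi.trans hzd) (by simp)
  simp only [inv_entry, hP x hx, hP z hz]
  simp [cwDist]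

/-- Extension by zero. -/
noncomputable def ext0 {n : ℕ} (S : Finset (Fin n × Fin n)) (g : S → ℝ) : Fin n × Fin n → ℝ :=
  fun p => if h : p ∈ S then g ⟨p, h⟩ else 0

lemma ext0_update {n : ℕ} (S : Finset (Fin n × Fin n)) (g : S → ℝ) (p : S) (y : ℝ) :
    ext0 S (Function.update g p y) = Function.update (ext0 S g) p.1 y := by
  ext q
  unfold ext0
  by_cases h : q = p.1
  · subst h; simp
  · by_cases hq : q ∈ S
    · have : (⟨q, hq⟩ : S) ≠ p := fun h' => h (congrArg Subtype.val h')
      simp [hq, h, this]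
    · simp [hq, h]

lemma measurable_ext0 {n : ℕ} (S : Finset (Fin n × Fin n)) : Measurable (ext0 S) := by
  apply measurable_pi_lambda
  intro p
  unfold ext0
  by_cases h : p ∈ S <;> simp only [h, dif_pos, dif_neg, not_false_eq_true] <;> fun_prop

lemma maff_ext0 {n : ℕ} (S : Finset (Fin n × Fin n)) {f : (Fin n × Fin n → ℝ) → ℝ} (hA : MAff f) :
    MAff (fun g => f (ext0 S g)) := by
  intro g p y
  simp only [ext0_update]
  exact hA _ _ _

lemma ext0_restrict {n : ℕ} (S : Finset (Fin n × Fin n)) (x : Fin n × Fin n → ℝ)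
    (hx : ∀ p ∉ S, x p = 0) : ext0 S (fun p => x p.1) = x := by
  ext q
  unfold ext0
  by_cases hq : q ∈ S
  · simp [hq]
  · simp [hq, hx q hq]

lemma sparse_le {n : ℕ} (S : Finset (Fin n × Fin n)) (Abar : Matrix (Fin n) (Fin n) ℝ) (σ : ℝ)
    (N : Set (Matrix (Fin n) (Fin n) ℝ)) (Bad : Set (Fin n × Fin n → ℝ)) (hBad : MeasurableSet Bad)
    (h : ∀ x : Fin n × Fin n → ℝ, (∀ p ∉ S, x p = 0) → x ∉ Bad → funToMat x ∉ N) :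
    sparseGaussian S Abar σ N ≤
      (Measure.pi fun p : S => gaussianReal (Abar p.1.1 p.1.2) ⟨σ ^ 2, sq_nonneg σ⟩)
        (ext0 S ⁻¹' Bad) := by
  have hmt : Measurable (matToFun (n := n)) := by
    apply measurable_pi_lambda
    intro p
    exact (measurable_pi_apply p.2).comp (measurable_pi_apply (X := fun _ => Fin n → ℝ) p.1)
  have hV : MeasurableSet {x : Fin n × Fin n → ℝ | ∃ p, p ∉ S ∧ x p ≠ 0} := by
    have : {x : Fin n × Fin n → ℝ | ∃ p, p ∉ S ∧ x p ≠ 0} =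
        ⋃ p, ⋃ (_ : p ∉ S), {x : Fin n × Fin n → ℝ | x p = 0}ᶜ := by
      ext x; simp
    rw [this]
    refine MeasurableSet.iUnion fun p => MeasurableSet.iUnion fun _ => ?_
    exact (measurableSet_eq_fun (measurable_pi_apply p) measurable_const).compl
  have hT := hmt (hV.union hBad)
  have hf : Measurable (fun g : S → ℝ => funToMat (ext0 S g)) := by
    apply measurable_pi_lambda
    intro i
    apply measurable_pi_lambda
    intro j
    exact (measurable_pi_apply (i, j)).comp (measurable_ext0 S)
  have hsub : N ⊆ matToFun ⁻¹' ({x : Fin n × Fin n → ℝ | ∃ p, p ∉ S ∧ x p ≠ 0} ∪ Bad) := by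
    intro A hA
    by_contra hn
    simp only [Set.mem_preimage, Set.mem_union, not_or] at hn
    refine h (matToFun A) ?_ hn.2 hA
    intro p hp
    by_contra hne
    exact hn.1 ⟨p, hp, hne⟩
  refine (measure_mono hsub).trans ?_
  have he : sparseGaussian S Abar σ =
    (Measure.pi fun p : S => gaussianReal (Abar p.1.1 p.1.2) ⟨σ ^ 2, sq_nonneg σ⟩).map
      (fun g : S → ℝ => funToMat (ext0 S g)) := rfl
  rw [he, Measure.map_apply hf hT]
  apply measure_mono
  intro g hg
  rcases hg with ⟨p, hp, hne⟩ | hg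
  · exact absurd (show ext0 S g p = 0 by simp [ext0, hp]) hne
  · exact hg

lemma meas_slp_set {ι : Type*} [DecidableEq ι] {f : (ι → ℝ) → ℝ} (hf : Measurable f) (s : ℝ) (p : ι) :
    MeasurableSet {x : ι → ℝ | s * |f x| < |x p * slp f x p|} := by
  apply measurableSet_lt
  · exact (measurable_const.mul (_root_.continuous_abs.measurable.comp hf))
  · exact _root_.continuous_abs.measurable.comp ((measurable_pi_apply p).mul (measurable_slp hf p))

lemma bad_le {n : ℕ} (S : Finset (Fin n × Fin n))
    (Abar : Matrix (Fin n) (Fin n) ℝ)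
    (hmax : ∀ i j, |Abar i j| ≤ 1) (σ : ℝ) (hσ : 0 < σ) (w : NNReal) (hw : (w : ℝ) = σ ^ 2) (s : ℝ) (hs : 1 < s)
    {f : (Fin n × Fin n → ℝ) → ℝ} (hf : Measurable f) (hA : MAff f)
    (hne : ∃ x : Fin n × Fin n → ℝ, (∀ p ∉ S, x p = 0) ∧ f x ≠ 0) :
    (Measure.pi fun p : S => gaussianReal (Abar p.1.1 p.1.2) w)
      (ext0 S ⁻¹' ({x | f x = 0} ∪ ⋃ p ∈ S, {x | s * |f x| < |x p * slp f x p|})) ≤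
      S.card * ENNReal.ofReal ((1 + σ) / σ * √(2 / Real.pi) / (s - 1)) := by
  set ν := (Measure.pi fun p : S => gaussianReal (Abar p.1.1 p.1.2) w) with hν
  have hv : w ≠ 0 := by
    intro h
    rw [h] at hw
    exact (pow_pos hσ 2).ne hw
  have hfe : Measurable (fun g => f (ext0 S g)) := hf.comp (measurable_ext0 S)
  have h0 : ν {g | f (ext0 S g) = 0} = 0 := by
    obtain ⟨x, hx, hx0⟩ := hne
    refine pi_zero_null _ ?_ hfe (maff_ext0 S hA) (fun p => x p.1) ?_
    · intro i z
      haveI := noAtoms_gaussianReal (μ := Abar i.1.1 i.1.2) hv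
      exact measure_singleton z
    · simpa only [ext0_restrict S x hx] using hx0
  have h1 : ∀ p : S, ν {g | s * |f (ext0 S g)| < |ext0 S g p.1 * slp f (ext0 S g) p.1|} ≤
      ENNReal.ofReal ((1 + σ) / σ * √(2 / Real.pi) / (s - 1)) := by
    intro p
    have := pi_fiber_le (fun p : S => gaussianReal (Abar p.1.1 p.1.2) w) hfe
      (maff_ext0 S hA) p s _ (fun α β => gauss_fiber (Abar p.1.1 p.1.2) σ s α β w hw (hmax _ _) hσ hs)
    have e : ∀ g : S → ℝ, ext0 S g p.1 * slp f (ext0 S g) p.1 =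
        g p * slp (fun g => f (ext0 S g)) g p := by
      intro g
      simp only [slp, ext0_update]
      congr 1
      simp [ext0]
    simp only [e]
    exact this
  rw [Set.preimage_union]
  refine (measure_union_le _ _).trans ?_
  have h0' : ν (ext0 S ⁻¹' {x | f x = 0}) = 0 := h0
  rw [h0', zero_add, Set.preimage_iUnion₂]
  refine (measure_biUnion_finset_le S _).trans ?_
  refine (Finset.sum_le_card_nsmul S _ _ ?_).trans (by rw [nsmul_eq_mul])
  intro p hp
  exact h1 ⟨p, hp⟩

/-- Let `S ⊆ [n]²` be admissible, `Ā ∈ M_S` with `‖Ā‖_max ≤ 1`, `σ > 0`,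
`A ~ N_S(Ā, σ²Id)` and `k, l ∈ [n]`. For every real `t > 2|S|`,
`Prob{c†_{kl}(A) > t} ≤ ((1+σ)/σ)·(4|S|²/(t−2|S|))·√(2/π)`. -/
theorem prob_cInv_gt {n : ℕ} (S : Finset (Fin n × Fin n)) (hS : Admissible S)
    (Abar : Matrix (Fin n) (Fin n) ℝ) (hsupp : ∀ i j, (i, j) ∉ S → Abar i j = 0)
    (hmax : ∀ i j, |Abar i j| ≤ 1) (σ : ℝ) (hσ : 0 < σ)
    (k l : Fin n) (t : ℝ) (ht : 2 * (S.card : ℝ) < t) :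
    sparseGaussian S Abar σ {A | ENNReal.ofReal t < cInv k l A}
      ≤ ENNReal.ofReal ((1 + σ) / σ * (4 * (S.card : ℝ) ^ 2 / (t - 2 * S.card))
          * Real.sqrt (2 / Real.pi)) := by
  have hn : 0 < (S.card : ℝ) := by
    rw [Nat.cast_pos, Finset.card_pos]
    obtain ⟨B, hB, hu⟩ := hS
    by_contra hne
    rw [Finset.not_nonempty_iff_eq_empty] at hne
    have hB0 : B = 0 := by
      ext i j
      exact hB i j (by simp [hne])
    have : Nonempty (Fin n) := ⟨k⟩
    rw [hB0, Matrix.det_zero] at hu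
    simp at hu
  have hdet : ∃ x : Fin n × Fin n → ℝ, (∀ p ∉ S, x p = 0) ∧ detF x ≠ 0 := by
    obtain ⟨B, hB, hu⟩ := hS
    exact ⟨matToFun B, fun p hp => hB p.1 p.2 hp, hu.ne_zero⟩
  by_cases hP : ∃ x : Fin n × Fin n → ℝ, (∀ p ∉ S, x p = 0) ∧ adjF k l x ≠ 0
  · set s := t / (2 * S.card) with hs
    have hs1 : 1 < s := by rw [hs, lt_div_iff₀ (by positivity)]; linarith
    have hmd : Measurable (detF (n := n)) := differentiable_detF.continuous.measurable
    have hma : Measurable (adjF k l) := (differentiable_adjF k l).continuous.measurable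
    set B1 := ({x | detF x = 0} ∪ ⋃ p ∈ S, {x | s * |detF x| < |x p * slp detF x p|}) with hB1
    set B2 := ({x | adjF k l x = 0} ∪ ⋃ p ∈ S, {x | s * |adjF k l x| < |x p * slp (adjF k l) x p|})
      with hB2
    have hm1 : MeasurableSet B1 := (measurableSet_eq_fun hmd measurable_const).union
      (Finset.measurableSet_biUnion S fun p _ => meas_slp_set hmd s p)
    have hm2 : MeasurableSet B2 := (measurableSet_eq_fun hma measurable_const).union
      (Finset.measurableSet_biUnion S fun p _ => meas_slp_set hma s p)
    refine (sparse_le S Abar σ _ (B1 ∪ B2) (hm1.union hm2) ?_).trans ?_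
    · intro x hx hxB
      simp only [hB1, hB2, Set.mem_union, Set.mem_iUnion, Set.mem_ofPred_eq, not_or, not_exists,
        not_lt] at hxB
      obtain ⟨⟨hq, hq'⟩, hp, hp'⟩ := hxB
      have := cInv_le S k l x hx hp hq s (by linarith) hp' hq'
      have e : 2 * s * S.card = t := by rw [hs]; field_simp
      rw [e] at this
      exact not_lt.mpr this
    · rw [Set.preimage_union]
      refine (measure_union_le _ _).trans ?_
      refine (add_le_add (bad_le S Abar hmax σ hσ _ rfl s hs1 hmd maff_detF hdet)
        (bad_le S Abar hmax σ hσ _ rfl s hs1 hma (maff_adjF k l) hP)).trans ?_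
      have hs0 : 0 < s - 1 := by linarith
      rw [← ENNReal.ofReal_natCast, ← ENNReal.ofReal_mul (by positivity),
        ← ENNReal.ofReal_add (by positivity) (by positivity)]
      apply ENNReal.ofReal_le_ofReal
      apply le_of_eq
      have ht' : t - 2 * S.card ≠ 0 := by linarith
      have e : s - 1 = (t - 2 * S.card) / (2 * S.card) := by rw [hs]; field_simp
      rw [e]
      field_simp
      ring
  · push Not at hP
    refine (sparse_le S Abar σ _ ∅ MeasurableSet.empty ?_).trans (by simp)
    intro x hx _
    have := cInv_zero S k l hP x hx
    intro hlt
    have h2 : ENNReal.ofReal t < 0 := lt_of_lt_of_eq hlt this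
    exact absurd h2 (by simp)
end

section
/- Let S ⊆ [n]² be admissible, Ā ∈ M_S with ‖Ā‖_max ≤ 1, σ > 0, and let A ~ N_S(Ā, σ²Id). Then for every real t > 2|S|, Prob{ c†(A) > t } ≤ ((1 + σ)/σ)·(4n²|S|²/(t − 2|S|))·√(2/π), where c†(A) = max_{k,l ∈ [n]} c†_{kl}(A) and c†_{kl}(A) is the componentwise condition number of the map A ↦ (A⁻¹)_{kl} at A (A is almost surely invertible). -/
open MeasureTheory ProbabilityTheory
open scoped ENNReal

namespace CInvAux

lemma pdf_bound (m σ : ℝ) (v : NNReal) (hvσ : (v : ℝ) = σ ^ 2) (hm : |m| ≤ 1) (hσ : 0 < σ) (y : ℝ) :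
    |y| * gaussianPDFReal m v y ≤ (1 + σ) / σ * (Real.sqrt (2 * Real.pi))⁻¹ := by
  have hpi := Real.pi_pos
  have hs : Real.sqrt (2 * Real.pi * σ ^ 2) = Real.sqrt (2 * Real.pi) * σ := by
    rw [Real.sqrt_mul (by positivity), Real.sqrt_sq hσ.le]
  have hsp : 0 < Real.sqrt (2 * Real.pi) := by positivity
  set z := |y - m| / σ with hz
  have hz0 : 0 ≤ z := by positivity
  have hzs : |y - m| = z * σ := by rw [hz]; field_simp
  have hy : |y| ≤ 1 + z * σ := by
    rw [← hzs]
    have := abs_add_le (y - m) m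
    simp only [sub_add_cancel] at this
    linarith
  have hexp : -(y - m) ^ 2 / (2 * σ ^ 2) = -(z ^ 2 / 2) := by
    rw [← sq_abs (y - m), hzs]; field_simp
  have he1 : Real.exp (-(z ^ 2 / 2)) ≤ 1 := Real.exp_le_one_iff.mpr (by nlinarith)
  have he2 : z * Real.exp (-(z ^ 2 / 2)) ≤ 1 := by
    rw [Real.exp_neg, ← div_eq_mul_inv, div_le_one (Real.exp_pos _)]
    have := Real.add_one_le_exp (z ^ 2 / 2)
    nlinarith [sq_nonneg (z - 1)]
  have he0 := Real.exp_pos (-(z ^ 2 / 2))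
  have key : |y| * Real.exp (-(z ^ 2 / 2)) ≤ 1 + σ := by nlinarith
  unfold gaussianPDFReal
  rw [hvσ, hs, hexp]
  calc |y| * ((Real.sqrt (2 * Real.pi) * σ)⁻¹ * Real.exp (-(z ^ 2 / 2)))
      = (|y| * Real.exp (-(z ^ 2 / 2))) * ((Real.sqrt (2 * Real.pi))⁻¹ * σ⁻¹) := by
        rw [mul_inv]; ring
    _ ≤ (1 + σ) * ((Real.sqrt (2 * Real.pi))⁻¹ * σ⁻¹) := by gcongr
    _ = _ := by ring

lemma gauss_aux (m σ : ℝ) (v : NNReal) (hvσ : (v : ℝ) = σ ^ 2) (hm : |m| ≤ 1) (hσ : 0 < σ) (s : ℝ) (hs : 1 < s) (c : ℝ) :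
    gaussianReal m v {y | s * |y - c| < |y|}
      ≤ ENNReal.ofReal ((1 + σ) / σ * Real.sqrt (2 / Real.pi) / (s - 1)) := by
  have hv : v ≠ 0 := by
    rintro rfl
    have := pow_pos hσ 2
    simp at hvσ; linarith
  have hs1 : 0 < s - 1 := by linarith
  rcases eq_or_ne c 0 with rfl | hc
  · have : {y : ℝ | s * |y - 0| < |y|} = ∅ := by
      ext y
      simp only [sub_zero, Set.mem_ofPred_eq, Set.mem_empty_iff_false, iff_false, not_lt]
      nlinarith [abs_nonneg y]
    rw [this]; simp
  have hc' : 0 < |c| := abs_pos.mpr hc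
  have hsub : {y : ℝ | s * |y - c| < |y|} ⊆
      Metric.ball (c * (s ^ 2 / (s ^ 2 - 1))) (|c| * (s / (s ^ 2 - 1))) := by
    intro y hy
    simp only [Set.mem_ofPred_eq] at hy
    have h2 : 0 < s ^ 2 - 1 := by nlinarith
    rw [Metric.mem_ball, Real.dist_eq]
    apply abs_lt_of_sq_lt_sq _ (by positivity)
    have h3 : (s * |y - c|) ^ 2 < |y| ^ 2 := by
      apply pow_lt_pow_left₀ hy (by positivity) (by norm_num)
    rw [mul_pow, sq_abs, sq_abs] at h3
    rw [mul_pow, sq_abs]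
    have e1 : (y - c * (s ^ 2 / (s ^ 2 - 1))) ^ 2
      = (y * (s^2-1) - c * s^2) ^ 2 / (s^2-1)^2 := by field_simp
    have e2 : c ^ 2 * (s / (s ^ 2 - 1)) ^ 2 = (c * s) ^ 2 / (s^2-1)^2 := by field_simp
    rw [e1, e2]
    apply div_lt_div_of_pos_right _ (by positivity)
    nlinarith
  have hlow : ∀ y : ℝ, s * |y - c| < |y| → |c| * s / (s + 1) ≤ |y| := by
    intro y hy
    rw [div_le_iff₀ (by linarith)]
    have : |c| ≤ |y - c| + |y| := by
      have := abs_sub (y) (y - c)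
      simp only [sub_sub_cancel] at this
      linarith
    nlinarith
  set K := (1 + σ) / σ * (Real.sqrt (2 * Real.pi))⁻¹ with hK
  have hK0 : 0 ≤ K := by positivity
  rw [gaussianReal_apply _ hv]
  have hmeas : MeasurableSet {y : ℝ | s * |y - c| < |y|} := by
    apply measurableSet_lt <;> fun_prop
  calc ∫⁻ x in {y : ℝ | s * |y - c| < |y|}, gaussianPDF m v x
      ≤ ∫⁻ x in {y : ℝ | s * |y - c| < |y|}, ENNReal.ofReal (K * (s + 1) / (|c| * s)) := by
        apply setLIntegral_mono' hmeas
        intro y hy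
        unfold gaussianPDF
        apply ENNReal.ofReal_le_ofReal
        have h1 := hlow y hy
        have h2 := pdf_bound m σ v hvσ hm hσ y
        have h3 : 0 ≤ gaussianPDFReal m v y := gaussianPDFReal_nonneg _ _ _
        rw [le_div_iff₀ (by positivity)]
        rw [div_le_iff₀ (by linarith)] at h1
        nlinarith
    _ ≤ ENNReal.ofReal (K * (s + 1) / (|c| * s)) *
          volume (Metric.ball (c * (s ^ 2 / (s ^ 2 - 1))) (|c| * (s / (s ^ 2 - 1)))) := by
        rw [setLIntegral_const]
        gcongr
    _ = ENNReal.ofReal (K * (s + 1) / (|c| * s) * (2 * (|c| * (s / (s ^ 2 - 1))))) := by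
        rw [Real.volume_ball, ← ENNReal.ofReal_mul (by positivity)]
    _ ≤ _ := by
        apply ENNReal.ofReal_le_ofReal
        apply le_of_eq
        have e : Real.sqrt (2 / Real.pi) = 2 * (Real.sqrt (2 * Real.pi))⁻¹ := by
          have hpi := Real.pi_pos
          rw [← Real.sqrt_inv, show (2:ℝ) / Real.pi = 2 ^ 2 * (2 * Real.pi)⁻¹ by field_simp,
            Real.sqrt_mul (by positivity), Real.sqrt_sq (by norm_num)]
        rw [e, show s ^ 2 - 1 = (s - 1) * (s + 1) by ring, hK]
        have : s + 1 ≠ 0 := by linarith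
        field_simp

set_option linter.unusedSectionVars false

variable {ι : Type*} [Fintype ι] [DecidableEq ι]

/-- Multi-affine functions. -/
def MA (h : (ι → ℝ) → ℝ) : Prop :=
  ∀ x p, ∃ c, ∀ y, h (Function.update x p y) = h x + (y - x p) * c

/-- Slope of `h` in coordinate `p`. -/
def slope (h : (ι → ℝ) → ℝ) (p : ι) (x : ι → ℝ) : ℝ :=
  h (Function.update x p 1) - h (Function.update x p 0)

lemma MA.eq {h : (ι → ℝ) → ℝ} (hh : MA h) (x : ι → ℝ) (p : ι) (y : ℝ) :
    h (Function.update x p y) = h x + (y - x p) * slope h p x := by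
  obtain ⟨c, hc⟩ := hh x p
  have : slope h p x = c := by unfold slope; rw [hc, hc]; ring
  rw [this, hc]

lemma slope_update (h : (ι → ℝ) → ℝ) (p : ι) (x : ι → ℝ) (y : ℝ) :
    slope h p (Function.update x p y) = slope h p x := by
  simp [slope]

lemma pi_mono (μ : ι → Measure ℝ) [∀ i, IsProbabilityMeasure (μ i)] (p : ι)
    (E : Set (ι → ℝ)) (hE : MeasurableSet E) (b : ℝ≥0∞)
    (h : ∀ x, μ p {y | Function.update x p y ∈ E} ≤ b) :
    Measure.pi μ E ≤ b := by
  have key : ∫⁻ x, E.indicator 1 x ∂Measure.pi μ ≤ ∫⁻ x, b ∂Measure.pi μ := by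
    apply lintegral_le_of_lmarginal_le {p}
    · exact measurable_one.indicator hE
    · exact measurable_const
    · rw [lmarginal_singleton, lmarginal_singleton]
      intro x
      have hm : MeasurableSet {y | Function.update x p y ∈ E} :=
        (measurable_update x) hE
      have : ∀ y, E.indicator (1 : (ι → ℝ) → ℝ≥0∞) (Function.update x p y)
          = {y | Function.update x p y ∈ E}.indicator 1 y := by
        intro y; simp [Set.indicator]
      simp only [this, lintegral_indicator_one hm, lintegral_const, measure_univ, mul_one]
      exact h x
  simpa [lintegral_indicator_one hE] using key

lemma pi_null (μ : ι → Measure ℝ) [∀ i, IsProbabilityMeasure (μ i)] (p : ι)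
    (E G : Set (ι → ℝ)) (hE : MeasurableSet E) (hG : MeasurableSet G)
    (hGp : ∀ x y, Function.update x p y ∈ G ↔ x ∈ G)
    (h : ∀ x ∉ G, μ p {y | Function.update x p y ∈ E} = 0) (hG0 : Measure.pi μ G = 0) :
    Measure.pi μ E = 0 := by
  have : Measure.pi μ (E \ G) ≤ 0 := by
    apply pi_mono μ p _ (hE.diff hG)
    intro x
    by_cases hx : x ∈ G
    · have : {y | Function.update x p y ∈ E \ G} = ∅ := by
        ext y; simp [hGp, hx]
      rw [this]; simp
    · rw [← h x hx]
      apply measure_mono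
      intro y hy; exact hy.1
  have h2 : E ⊆ (E \ G) ∪ G := by intro x; by_cases x ∈ G <;> simp_all
  exact measure_mono_null h2 (measure_union_null (le_antisymm this bot_le) hG0)

lemma MA.ae_ne (μ : ι → Measure ℝ) [∀ i, IsProbabilityMeasure (μ i)] [∀ i, NullSingletonClass (μ i)]
    {h : (ι → ℝ) → ℝ} (hh : MA h) (hm : Measurable h) (z : ι → ℝ) (hz : h z ≠ 0) :
    Measure.pi μ {x | h x = 0} = 0 := by
  have main : ∀ T : Finset ι, Measure.pi μ {x | h (T.piecewise x z) = 0} = 0 := by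
    intro T
    have hmeas : ∀ T : Finset ι, MeasurableSet {x : ι → ℝ | h (T.piecewise x z) = 0} := by
      intro T
      have : Measurable fun x : ι → ℝ => T.piecewise x z := by
        rw [measurable_pi_iff]; intro a
        by_cases ha : a ∈ T
        · simpa [Finset.piecewise, ha] using measurable_pi_apply a
        · simp [Finset.piecewise, ha]
      exact (hm.comp this) (measurableSet_singleton 0)
    induction T using Finset.induction with
    | empty => simp [hz]
    | insert p T hp ih =>
      refine pi_null μ p _ _ (hmeas _) (hmeas T) ?_ ?_ ih
      · intro x y
        have : T.piecewise (Function.update x p y) z = T.piecewise x z := by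
          ext a; by_cases ha : a ∈ T
          · have : a ≠ p := fun e => hp (e ▸ ha)
            simp [Finset.piecewise, ha, this]
          · simp [Finset.piecewise, ha]
        simp [this]
      · intro x hx
        simp only [Set.mem_ofPred_eq] at hx
        have e : ∀ y, (insert p T).piecewise (Function.update x p y) z
            = Function.update (T.piecewise x z) p y := by
          intro y; ext a
          by_cases hap : a = p
          · subst hap; simp [Finset.piecewise]
          · by_cases ha : a ∈ T <;> simp [Finset.piecewise, ha, hap]
        apply Set.Subsingleton.measure_zero
        intro y hy y' hy'
        simp only [Set.mem_ofPred_eq, e, hh.eq] at hy hy'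
        have h0 : slope h p (T.piecewise x z) ≠ 0 := by
          intro h0; rw [h0] at hy; simp at hy; exact hx hy
        have : (y - y') * slope h p (T.piecewise x z) = 0 := by linarith
        rcases mul_eq_zero.mp this with h | h
        · linarith
        · exact absurd h h0
  simpa using main Finset.univ

lemma MA.prob (m : ι → ℝ) (hm1 : ∀ i, |m i| ≤ 1) (σ : ℝ) (v : NNReal) (hvσ : (v : ℝ) = σ ^ 2) (hσ : 0 < σ) (s : ℝ) (hs : 1 < s)
    {h : (ι → ℝ) → ℝ} (hh : MA h) (hm : Measurable h) (hm' : ∀ p, Measurable (slope h p)) (p : ι) :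
    Measure.pi (fun i => gaussianReal (m i) v)
      {x | s * |h x| < |x p * slope h p x|}
      ≤ ENNReal.ofReal ((1 + σ) / σ * Real.sqrt (2 / Real.pi) / (s - 1)) := by
  apply pi_mono _ p
  · apply measurableSet_lt
    · fun_prop
    · have := hm' p; fun_prop
  · intro x
    by_cases hc : slope h p x = 0
    · have : {y | Function.update x p y ∈ {x | s * |h x| < |x p * slope h p x|}} = ∅ := by
        ext y
        simp only [Set.mem_ofPred_eq, slope_update, hc, Set.mem_empty_iff_false, iff_false]
        simp; positivity
      rw [this]; simp
    · refine le_trans (measure_mono ?_)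
        (gauss_aux (m p) σ v hvσ (hm1 p) hσ s hs (x p - h x / slope h p x))
      intro y hy
      simp only [Set.mem_ofPred_eq, slope_update, hh.eq, Function.update_self] at hy ⊢
      have e : h x + (y - x p) * slope h p x =
        (y - (x p - h x / slope h p x)) * slope h p x := by field_simp; ring
      rw [e, abs_mul, abs_mul, ← mul_assoc] at hy
      exact lt_of_mul_lt_mul_right hy (abs_nonneg _)

lemma ratio_bound {P Q : (ι → ℝ) → ℝ} (hP : MA P) (hQ : MA Q) (dP : Differentiable ℝ P)
    (dQ : Differentiable ℝ Q) (v : ι → ℝ) (hPv : P v ≠ 0) (hQv : Q v ≠ 0) (s : ℝ)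
    (h1 : ∀ p, |v p * slope P p v| ≤ s * |P v|) (h2 : ∀ p, |v p * slope Q p v| ≤ s * |Q v|)
    (η : ℝ) (hη : 0 < η) :
    ∃ δ > 0, ∀ ε : ι → ℝ, ‖ε‖ ≤ δ →
      |P (fun i => v i * (1 + ε i)) / Q (fun i => v i * (1 + ε i)) - P v / Q v|
        / |P v / Q v| ≤ (2 * s * Fintype.card ι + η) * ‖ε‖ := by
  set G : (ι → ℝ) → ℝ := fun ε => P (fun i => v i * (1 + ε i)) / Q (fun i => v i * (1 + ε i))
    with hG
  have hv0 : (fun i => v i * (1 + (0 : ι → ℝ) i)) = v := by ext i; simp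
  have hG0 : G 0 = P v / Q v := by simp only [hG, hv0]
  have hR : P v / Q v ≠ 0 := div_ne_zero hPv hQv
  have hR' : 0 < |P v / Q v| := abs_pos.mpr hR
  have dG : DifferentiableAt ℝ G 0 := by
    have dm : Differentiable ℝ (fun ε : ι → ℝ => fun i => v i * (1 + ε i)) := by fun_prop
    simp only [hG, div_eq_mul_inv]
    refine DifferentiableAt.fun_mul (dP.comp dm).differentiableAt
      (DifferentiableAt.fun_inv (dQ.comp dm).differentiableAt ?_)
    simp only [hv0]; exact hQv
  set L := fderiv ℝ G 0 with hL
  have hGL : HasFDerivAt G L 0 := dG.hasFDerivAt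
  have hLp : ∀ p, |L (Pi.single p 1)| ≤ 2 * s * |P v / Q v| := by
    intro p
    have hline : HasDerivAt (fun r : ℝ => r • (Pi.single p 1 : ι → ℝ)) (Pi.single p 1) 0 := by
      simpa using (hasDerivAt_id (0 : ℝ)).smul_const (Pi.single p 1 : ι → ℝ)
    have hc : HasDerivAt (fun r : ℝ => G (r • (Pi.single p 1 : ι → ℝ))) (L (Pi.single p 1)) 0 := by
      have hGL' : HasFDerivAt G L ((0 : ℝ) • (Pi.single p 1 : ι → ℝ)) := by simpa using hGL
      exact hGL'.comp_hasDerivAt 0 hline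
    have hupd : ∀ r : ℝ, (fun i => v i * (1 + (r • (Pi.single p 1 : ι → ℝ)) i))
        = Function.update v p (v p * (1 + r)) := by
      intro r; ext i
      by_cases hi : i = p
      · subst hi; simp
      · simp [hi]
    have hform : (fun r : ℝ => G (r • (Pi.single p 1 : ι → ℝ))) = fun r : ℝ =>
        (P v + r * (v p * slope P p v)) / (Q v + r * (v p * slope Q p v)) := by
      funext r
      simp only [hG, hupd, hP.eq, hQ.eq]
      congr 1 <;> ring
    rw [hform] at hc
    have hn : HasDerivAt (fun r : ℝ => P v + r * (v p * slope P p v)) (v p * slope P p v) 0 := by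
      simpa using ((hasDerivAt_id (0 : ℝ)).mul_const (v p * slope P p v)).const_add (P v)
    have hd : HasDerivAt (fun r : ℝ => Q v + r * (v p * slope Q p v)) (v p * slope Q p v) 0 := by
      simpa using ((hasDerivAt_id (0 : ℝ)).mul_const (v p * slope Q p v)).const_add (Q v)
    have hq := hn.div hd (by simpa using hQv)
    have heq := hc.unique hq
    rw [heq]
    simp only [zero_mul, add_zero]
    have e : (v p * slope P p v * Q v - P v * (v p * slope Q p v)) / Q v ^ 2
      = (v p * slope P p v) / Q v - (P v / Q v) * ((v p * slope Q p v) / Q v) := by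
      field_simp
    rw [e]
    have b1 : |(v p * slope P p v) / Q v| ≤ s * |P v / Q v| := by
      rw [abs_div, abs_div, ← mul_div_assoc]
      exact div_le_div_of_nonneg_right (h1 p) (abs_nonneg _)
    have b2 : |(v p * slope Q p v) / Q v| ≤ s := by
      rw [abs_div, div_le_iff₀ (abs_pos.mpr hQv)]
      exact h2 p
    calc _ ≤ |(v p * slope P p v) / Q v| + |(P v / Q v) * ((v p * slope Q p v) / Q v)| := abs_sub _ _
      _ ≤ s * |P v / Q v| + |P v / Q v| * s := by
        rw [abs_mul (P v / Q v)]; gcongr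
      _ = _ := by ring
  have hLb : ∀ ε : ι → ℝ, |L ε| ≤ 2 * s * Fintype.card ι * |P v / Q v| * ‖ε‖ := by
    intro ε
    have : ε = ∑ p, ε p • (Pi.single p 1 : ι → ℝ) := by
      ext i; simp [Finset.sum_apply, Pi.single_apply]
    have hLe : L ε = ∑ p, ε p * L (Pi.single p 1) := by
      conv_lhs => rw [this]
      simp [map_sum]
    rw [hLe]
    calc |∑ p, ε p * L (Pi.single p 1)| ≤ ∑ p, |ε p * L (Pi.single p 1)| :=
          Finset.abs_sum_le_sum_abs _ _
      _ ≤ ∑ p : ι, ‖ε‖ * (2 * s * |P v / Q v|) := by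
          apply Finset.sum_le_sum
          intro p _
          rw [abs_mul]
          exact mul_le_mul (norm_le_pi_norm ε p) (hLp p) (abs_nonneg _) (norm_nonneg _)
      _ = _ := by simp; ring
  have hlo := hGL.isLittleO
  have hlo' := hlo.bound (show 0 < η * |P v / Q v| by positivity)
  rw [Metric.eventually_nhds_iff] at hlo'
  obtain ⟨δ, hδ, hb⟩ := hlo'
  refine ⟨δ / 2, by positivity, ?_⟩
  intro ε hε
  have hbε := hb (y := ε) (by rw [dist_zero_right]; linarith)
  simp only [sub_zero, Real.norm_eq_abs] at hbε
  change |G ε - P v / Q v| / |P v / Q v| ≤ _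
  rw [div_le_iff₀ hR']
  rw [hG0] at hbε
  have := abs_add_le (G ε - P v / Q v - L ε) (L ε)
  simp only [sub_add_cancel] at this
  nlinarith [hLb ε]

variable {n : ℕ}

/-- Matrix with prescribed entries in `S`. -/
def toMat (S : Finset (Fin n × Fin n)) (x : S → ℝ) : Matrix (Fin n) (Fin n) ℝ :=
  Matrix.of fun i j => if h : (i, j) ∈ S then x ⟨(i, j), h⟩ else 0

lemma toMat_update (S : Finset (Fin n × Fin n)) (x : S → ℝ) (p : S) (y : ℝ) :
    toMat S (Function.update x p y) = (toMat S x).updateRow p.1.1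
      ((toMat S x) p.1.1 + (y - x p) • (Pi.single p.1.2 1 : Fin n → ℝ)) := by
  obtain ⟨⟨i, j⟩, hp⟩ := p
  ext a b
  by_cases ha : a = i
  · subst ha
    by_cases hb : b = j
    · subst hb
      simp [toMat, hp]
    · simp [toMat, hb, Function.update]
  · simp [toMat, ha, Function.update]

lemma MA_det (S : Finset (Fin n × Fin n)) : MA (fun x : S → ℝ => (toMat S x).det) := by
  intro x p
  refine ⟨((toMat S x).updateRow p.1.1 (Pi.single p.1.2 1)).det, fun y => ?_⟩
  simp only [toMat_update, Matrix.det_updateRow_add, Matrix.det_updateRow_smul]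
  rw [Matrix.updateRow_eq_self]

lemma MA_adj (S : Finset (Fin n × Fin n)) (k l : Fin n) :
    MA (fun x : S → ℝ => (toMat S x).adjugate k l) := by
  intro x p
  by_cases h : p.1.1 = l
  · refine ⟨0, fun y => ?_⟩
    simp only [Matrix.adjugate_apply, toMat_update, h, Matrix.updateRow_idem]
    simp
  · refine ⟨(((toMat S x).updateRow l (Pi.single k 1)).updateRow p.1.1
      (Pi.single p.1.2 1)).det, fun y => ?_⟩
    have e : (toMat S x) p.1.1 = ((toMat S x).updateRow l (Pi.single k 1)) p.1.1 := by
      rw [Matrix.updateRow_ne h]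
    simp only [Matrix.adjugate_apply, toMat_update]
    rw [Matrix.updateRow_comm _ h, Matrix.det_updateRow_add, Matrix.det_updateRow_smul]
    rw [e, Matrix.updateRow_eq_self]

lemma diff_entry (S : Finset (Fin n × Fin n)) (i j : Fin n) :
    Differentiable ℝ (fun x : S → ℝ => toMat S x i j) := by
  by_cases h : (i, j) ∈ S
  · simp only [toMat, Matrix.of_apply, h, dif_pos]; fun_prop
  · simp only [toMat, Matrix.of_apply, h, dif_neg, not_false_iff]; fun_prop

lemma diff_det' {M : (ι → ℝ) → Matrix (Fin n) (Fin n) ℝ}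
    (hM : ∀ i j, Differentiable ℝ (fun x => M x i j)) :
    Differentiable ℝ (fun x => (M x).det) := by
  simp only [Matrix.det_apply]
  fun_prop

lemma diff_det (S : Finset (Fin n × Fin n)) :
    Differentiable ℝ (fun x : S → ℝ => (toMat S x).det) :=
  diff_det' (diff_entry S)

lemma diff_adj (S : Finset (Fin n × Fin n)) (k l : Fin n) :
    Differentiable ℝ (fun x : S → ℝ => (toMat S x).adjugate k l) := by
  simp only [Matrix.adjugate_apply]
  apply diff_det'
  intro i j
  by_cases h : i = l
  · subst h; simp
  · simp only [Matrix.updateRow_ne h]; exact diff_entry S i j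

lemma inv_entry (A : Matrix (Fin n) (Fin n) ℝ) (k l : Fin n) :
    A⁻¹ k l = A.adjugate k l / A.det := by
  rw [Matrix.inv_def, Matrix.smul_apply, Ring.inverse_eq_inv', smul_eq_mul, div_eq_inv_mul]

lemma meas_slope {h : (ι → ℝ) → ℝ} (hm : Measurable h) (p : ι) : Measurable (slope h p) := by
  unfold slope
  exact (hm.comp measurable_update_left).sub (hm.comp measurable_update_left)

/-- Points at finite distance from `toMat S v`. -/
lemma near (S : Finset (Fin n × Fin n)) (v : S → ℝ) (x : Fin n × Fin n → ℝ)
    (hx : cwDist x (matToFun (toMat S v)) ≠ ⊤) :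
    ∃ ε : S → ℝ, ENNReal.ofReal ‖ε‖ ≤ cwDist x (matToFun (toMat S v)) ∧
      funToMat x = toMat S (fun i => v i * (1 + ε i)) := by
  set a := matToFun (toMat S v) with ha
  have hle : ∀ p, (if a p ≠ 0 then ENNReal.ofReal (|x p - a p| / |a p|)
       else if x p = a p then 0 else ⊤) ≤ cwDist x a := fun p =>
    le_iSup (fun p => (if a p ≠ 0 then ENNReal.ofReal (|x p - a p| / |a p|)
       else if x p = a p then 0 else ⊤)) p
  have hz : ∀ p, a p = 0 → x p = 0 := by
    intro p hp
    by_contra hne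
    have := hle p
    simp [hp, hne] at this
    exact hx this
  have hav : ∀ p : S, a p.1 = v p := by
    intro p; simp [ha, matToFun, toMat]
  have han : ∀ p ∉ S, a p = 0 := by
    intro p hp; simp [ha, matToFun, toMat, hp]
  refine ⟨fun p => (x p.1 - v p) / v p, ?_, ?_⟩
  · rw [ENNReal.ofReal_le_iff_le_toReal hx, pi_norm_le_iff_of_nonneg ENNReal.toReal_nonneg]
    intro p
    by_cases hp : v p = 0
    · simp [hp]
    · have := hle p.1
      rw [if_pos (by rwa [hav]), hav, ENNReal.ofReal_le_iff_le_toReal hx] at this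
      rwa [Real.norm_eq_abs, abs_div]
  · ext i j
    by_cases h : (i, j) ∈ S
    · simp only [funToMat, toMat, Matrix.of_apply, h, dif_pos]
      by_cases hp : v ⟨(i, j), h⟩ = 0
      · rw [hp, hz _ ((hav ⟨(i, j), h⟩).trans hp)]; simp
      · field_simp; ring
    · simp only [funToMat, toMat, Matrix.of_apply, h, dif_neg, not_false_iff]
      exact hz _ (han _ h)

lemma funToMat_matToFun (A : Matrix (Fin n) (Fin n) ℝ) : funToMat (matToFun A) = A := by
  ext i j; rfl

lemma cInv_zero (S : Finset (Fin n × Fin n)) (v : S → ℝ) (k l : Fin n)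
    (h : ∀ x : S → ℝ, (toMat S x).adjugate k l = 0) : cInv k l (toMat S v) = 0 := by
  unfold cInv cwCond
  rw [← nonpos_iff_eq_zero]
  refine (iInf₂_le 1 (by simp)).trans ?_
  refine iSup₂_le ?_
  rintro x ⟨-, hx, -⟩
  obtain ⟨ε, -, hε⟩ := near S v x (ne_top_of_le_ne_top ENNReal.one_ne_top hx)
  simp [cwDist, hε, funToMat_matToFun, inv_entry, h]

lemma cInv_le (S : Finset (Fin n × Fin n)) (v : S → ℝ) (k l : Fin n)
    (hPv : (toMat S v).adjugate k l ≠ 0) (hQv : (toMat S v).det ≠ 0) (s : ℝ) (hs : 0 ≤ s)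
    (h1 : ∀ p, |v p * slope (fun x => (toMat S x).adjugate k l) p v|
      ≤ s * |(toMat S v).adjugate k l|)
    (h2 : ∀ p, |v p * slope (fun x => (toMat S x).det) p v| ≤ s * |(toMat S v).det|) :
    cInv k l (toMat S v) ≤ ENNReal.ofReal (2 * s * S.card) := by
  apply ENNReal.le_of_forall_pos_le_add
  intro η hη _
  obtain ⟨δ, hδ, hb⟩ := ratio_bound (MA_adj S k l) (MA_det S) (diff_adj S k l) (diff_det S)
    v hPv hQv s h1 h2 η hη
  unfold cInv cwCond
  refine (iInf₂_le (ENNReal.ofReal δ) (by simpa using hδ)).trans ?_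
  refine iSup₂_le ?_
  rintro x ⟨-, hx, -⟩
  have hxt := ne_top_of_le_ne_top ENNReal.ofReal_ne_top hx
  obtain ⟨ε, hεd, hε⟩ := near S v x hxt
  apply ENNReal.div_le_of_le_mul
  have hεδ : ‖ε‖ ≤ δ := (ENNReal.ofReal_le_ofReal_iff hδ.le).mp (hεd.trans hx)
  have hR : (toMat S v).adjugate k l / (toMat S v).det ≠ 0 := div_ne_zero hPv hQv
  have e : (ENNReal.ofReal (2 * s * S.card) + (η : ℝ≥0∞))
      = ENNReal.ofReal (2 * s * S.card + η) := by
    rw [ENNReal.ofReal_add (by positivity) (by positivity), ENNReal.ofReal_coe_nnreal]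
  rw [e]
  refine le_trans ?_ (mul_le_mul_right hεd _)
  rw [← ENNReal.ofReal_mul (by positivity)]
  simp only [cwDist, hε, funToMat_matToFun, inv_entry, ciSup_unique]
  rw [if_pos hR]
  apply ENNReal.ofReal_le_ofReal
  simpa using hb ε hεδ

end CInvAux

open CInvAux

/-- Let `S ⊆ [n]²` be admissible, `Ā ∈ M_S` with `‖Ā‖_max ≤ 1`, `σ > 0`
and `A ~ N_S(Ā, σ²Id)`. For every real `t > 2|S|`,
`Prob{c†(A) > t} ≤ ((1+σ)/σ)·(4n²|S|²/(t−2|S|))·√(2/π)`,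
where `c†(A) = max_{k,l} c†_{kl}(A)`. -/
theorem prob_cInvMax_gt {n : ℕ} (S : Finset (Fin n × Fin n)) (hS : Admissible S)
    (Abar : Matrix (Fin n) (Fin n) ℝ) (hsupp : ∀ i j, (i, j) ∉ S → Abar i j = 0)
    (hmax : ∀ i j, |Abar i j| ≤ 1) (σ : ℝ) (hσ : 0 < σ)
    (t : ℝ) (ht : 2 * (S.card : ℝ) < t) :
    sparseGaussian S Abar σ {A | ENNReal.ofReal t < cInvMax A}
      ≤ ENNReal.ofReal ((1 + σ) / σ
          * (4 * (n : ℝ) ^ 2 * (S.card : ℝ) ^ 2 / (t - 2 * S.card))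
          * Real.sqrt (2 / Real.pi)) := by
  rcases Nat.eq_zero_or_pos n with hn | hn
  · subst hn
    have : {A : Matrix (Fin 0) (Fin 0) ℝ | ENNReal.ofReal t < cInvMax A} = ∅ := by
      ext A; simp [cInvMax]
    rw [this]; simp
  have hSne : 0 < S.card := by
    rw [Finset.card_pos]
    by_contra hne
    rw [Finset.not_nonempty_iff_eq_empty] at hne
    obtain ⟨B, hB, hdet⟩ := hS
    have hB0 : B = 0 := by ext i j; exact hB i j (by simp [hne])
    have : Nonempty (Fin n) := ⟨⟨0, hn⟩⟩
    rw [hB0, Matrix.det_zero] at hdet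
    exact not_isUnit_zero hdet
  have hc : (0 : ℝ) < S.card := by exact_mod_cast hSne
  set s : ℝ := t / (2 * S.card) with hs
  have hs1 : 1 < s := by rw [hs, lt_div_iff₀ (by positivity)]; linarith
  have hst : 2 * s * S.card = t := by rw [hs]; field_simp
  set v : NNReal := ⟨σ ^ 2, sq_nonneg σ⟩ with hv
  have hvσ : (v : ℝ) = σ ^ 2 := rfl
  have hv0 : v ≠ 0 := by
    intro h0
    have h1 := pow_pos hσ 2
    rw [← hvσ, h0] at h1
    simp at h1
  have : ∀ p : S, NullSingletonClass (gaussianReal (Abar p.1.1 p.1.2) v) := fun p =>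
    nullSingletonClass_gaussianReal hv0
  set μ : Measure (S → ℝ) := Measure.pi fun p : S => gaussianReal (Abar p.1.1 p.1.2) v with hμ
  set β : ℝ := (1 + σ) / σ * Real.sqrt (2 / Real.pi) / (s - 1) with hβ
  have hβ0 : 0 ≤ β := by
    have : 0 < s - 1 := by linarith
    positivity
  set Q : (S → ℝ) → ℝ := fun x => (toMat S x).det with hQ
  set P : Fin n → Fin n → (S → ℝ) → ℝ := fun k l x => (toMat S x).adjugate k l with hP
  have mQ : Measurable Q := (diff_det S).continuous.measurable
  have mP : ∀ k l, Measurable (P k l) := fun k l => (diff_adj S k l).continuous.measurable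
  set E : ((S → ℝ) → ℝ) → Set (S → ℝ) := fun h => ⋃ p, {x | s * |h x| < |x p * slope h p x|}
    with hE
  have mE : ∀ h, Measurable h → MeasurableSet (E h) := by
    intro h hm
    refine MeasurableSet.iUnion fun p => ?_
    have := meas_slope hm p
    apply measurableSet_lt <;> fun_prop
  have bE : ∀ h, Measurable h → MA h → μ (E h) ≤ S.card * ENNReal.ofReal β := by
    intro h hm hh
    refine (measure_iUnion_fintype_le _ _).trans ?_
    refine (Finset.sum_le_sum fun p _ => MA.prob (fun p : S => Abar p.1.1 p.1.2)
      (fun p => hmax _ _) σ v hvσ hσ s hs1 hh hm (meas_slope hm) p).trans ?_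
    simp [hβ]
  set Z : Fin n → Fin n → Set (S → ℝ) := fun k l => {x | P k l x = 0 ∧ ∃ z, P k l z ≠ 0} with hZ
  have zZ : ∀ k l, MeasurableSet (Z k l) ∧ μ (Z k l) = 0 := by
    intro k l
    by_cases hz : ∃ z, P k l z ≠ 0
    · have e : Z k l = {x | P k l x = 0} := by ext x; simp only [hZ, Set.mem_ofPred_eq, hz, and_true]
      rw [e]
      refine ⟨(mP k l) (measurableSet_singleton 0), ?_⟩
      obtain ⟨z, hz⟩ := hz
      exact MA.ae_ne _ (MA_adj S k l) (mP k l) z hz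
    · have e : Z k l = ∅ := by
        ext x
        simp only [hZ, Set.mem_ofPred_eq, hz, and_false, Set.mem_empty_iff_false]
      rw [e]; simp
  have zQ : μ {x | Q x = 0} = 0 := by
    obtain ⟨B, hB, hdet⟩ := hS
    refine MA.ae_ne _ (MA_det S) mQ (fun p => B p.1.1 p.1.2) ?_
    have e : toMat S (fun p : S => B p.1.1 p.1.2) = B := by
      ext i j
      by_cases h : (i, j) ∈ S
      · simp [toMat, h]
      · simp [toMat, h, hB i j h]
    simp only [hQ, e]
    exact hdet.ne_zero
  set Bad : Set (S → ℝ) := ({x | Q x = 0} ∪ E Q) ∪ ⋃ k, ⋃ l, (Z k l ∪ E (P k l)) with hBad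
  have mBad : MeasurableSet Bad := by
    refine ((mQ (measurableSet_singleton 0)).union (mE _ mQ)).union ?_
    exact MeasurableSet.iUnion fun k => MeasurableSet.iUnion fun l =>
      (zZ k l).1.union (mE _ (mP k l))
  have bBad : μ Bad ≤ ENNReal.ofReal ((1 + (n : ℝ) ^ 2) * S.card * β) := by
    have b1 : μ ({x | Q x = 0} ∪ E Q) ≤ S.card * ENNReal.ofReal β := by
      refine (measure_union_le _ _).trans ?_
      rw [zQ, zero_add]; exact bE _ mQ (MA_det S)
    have b2 : μ (⋃ k, ⋃ l, (Z k l ∪ E (P k l))) ≤ n * (n * (S.card * ENNReal.ofReal β)) := by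
      refine (measure_iUnion_fintype_le _ _).trans ?_
      refine (Finset.sum_le_card_nsmul _ _ (n * (S.card * ENNReal.ofReal β)) fun k _ => ?_).trans ?_
      · refine (measure_iUnion_fintype_le _ _).trans ?_
        refine (Finset.sum_le_card_nsmul _ _ (S.card * ENNReal.ofReal β) fun l _ => ?_).trans ?_
        · refine (measure_union_le _ _).trans ?_
          rw [(zZ k l).2, zero_add]; exact bE _ (mP k l) (MA_adj S k l)
        · simp
      · simp
    refine (measure_union_le _ _).trans ((add_le_add b1 b2).trans (le_of_eq ?_))
    rw [ENNReal.ofReal_mul (by positivity), ENNReal.ofReal_mul (by positivity),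
      ENNReal.ofReal_add (by positivity) (by positivity), ENNReal.ofReal_pow (by positivity)]
    simp only [ENNReal.ofReal_natCast, ENNReal.ofReal_one]
    ring
  have mT : Measurable (toMat S) := by
    refine measurable_pi_iff.mpr fun i => measurable_pi_iff.mpr fun j => ?_
    exact (diff_entry S i j).continuous.measurable
  have mEntry : ∀ i j, Measurable fun A : Matrix (Fin n) (Fin n) ℝ => A i j := fun i j =>
    (measurable_pi_apply j).comp (measurable_pi_apply i)
  set g : Matrix (Fin n) (Fin n) ℝ → (S → ℝ) := fun A p => A p.1.1 p.1.2 with hg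
  have mg : Measurable g := measurable_pi_iff.mpr fun p => mEntry _ _
  set N : Set (Matrix (Fin n) (Fin n) ℝ) := {A | toMat S (g A) = A}ᶜ with hN
  have mN : MeasurableSet N := by
    refine MeasurableSet.compl ?_
    have e : {A | toMat S (g A) = A} = ⋂ i, ⋂ j, {A | toMat S (g A) i j = A i j} := by
      ext A; simp [← Matrix.ext_iff]
    rw [e]
    refine MeasurableSet.iInter fun i => MeasurableSet.iInter fun j => ?_
    exact measurableSet_eq_fun ((mEntry i j).comp (mT.comp mg)) (mEntry i j)
  have gT : ∀ x, g (toMat S x) = x := by intro x; ext p; simp [hg, toMat]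
  have hincl : {A | ENNReal.ofReal t < cInvMax A} ⊆ N ∪ g ⁻¹' Bad := by
    intro A hA
    by_contra hcon
    simp only [Set.mem_union, not_or, hN, Set.mem_compl_iff, not_not, Set.mem_ofPred_eq,
      Set.mem_preimage] at hcon
    obtain ⟨hAS, hgood⟩ := hcon
    set x := g A with hx
    simp only [hBad, Set.mem_union, not_or, Set.mem_iUnion, not_exists, hE, Set.mem_ofPred_eq,
      not_lt, hZ, not_and] at hgood
    obtain ⟨⟨hQ0, hQE⟩, hPk⟩ := hgood
    rw [Set.mem_ofPred_eq] at hA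
    refine absurd hA (not_lt.mpr ?_)
    refine iSup_le fun k => iSup_le fun l => ?_
    obtain ⟨hPz, hPE⟩ := hPk k l
    rw [← hAS]
    by_cases h0 : P k l x = 0
    · rw [cInv_zero S x k l fun z => not_not.mp (hPz h0 z)]; simp
    · rw [← hst]
      exact cInv_le S x k l h0 hQ0 s (by linarith) hPE hQE
  have hfinal : (μ.map (toMat S)) (N ∪ g ⁻¹' Bad) ≤ μ Bad := by
    rw [Measure.map_apply mT (mN.union (mg mBad))]
    apply measure_mono
    intro x hx
    rcases hx with hx | hx
    · exact absurd (by simp [gT]) hx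
    · simpa [gT] using hx
  change (μ.map (toMat S)) _ ≤ _
  refine (measure_mono hincl).trans (hfinal.trans (bBad.trans (ENNReal.ofReal_le_ofReal ?_)))
  have ht0 : 0 < t - 2 * S.card := by linarith
  have e : β = (1 + σ) / σ * Real.sqrt (2 / Real.pi) * (2 * S.card / (t - 2 * S.card)) := by
    have : s - 1 = (t - 2 * S.card) / (2 * S.card) := by rw [hs]; field_simp
    rw [hβ, this, div_div_eq_mul_div, mul_div_assoc]
  rw [e]
  have hn1 : (1 : ℝ) ≤ n := by exact_mod_cast hn
  have hn2 : 1 + (n : ℝ) ^ 2 ≤ 2 * (n : ℝ) ^ 2 := by nlinarith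
  calc _ ≤ (2 * (n : ℝ) ^ 2) * S.card * ((1 + σ) / σ * Real.sqrt (2 / Real.pi)
        * (2 * S.card / (t - 2 * S.card))) := by gcongr
    _ = _ := by ring
end

section
/- Let S ⊆ [n]² be admissible, Ā ∈ M_S and b̄ ∈ ℝⁿ with ‖Ā‖_max ≤ 1 and ‖b̄‖_∞ ≤ 1, σ > 0, and let A ~ N_S(Ā, σ²Id) and b ~ N(b̄, σ²Id) be independent. Fix k ∈ [n]. Then for every real t > 2|S|, Prob{ c_k(A,b) > t } ≤ ((1 + σ)/σ)·(4|S|²/(t − 2|S|))·√(2/π), where c_k(A,b) is the componentwise condition number of the map (A,b) ↦ (A⁻¹b)_k at (A,b) (A is almost surely invertible). -/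
open MeasureTheory ProbabilityTheory
open scoped ENNReal

lemma pdf_bound (m σ a : ℝ) (hm : |m| ≤ 1) (hσ : 0 < σ)
    (v : NNReal) (hvs : (v : ℝ) = σ ^ 2) :
    |a| * gaussianPDFReal m v a ≤ (1 + σ) / σ * Real.sqrt (2 / Real.pi) / 2 := by
  have hpi := Real.pi_pos
  have h1 : Real.sqrt (2 * Real.pi * σ ^ 2) = Real.sqrt (2 * Real.pi) * σ := by
    rw [Real.sqrt_mul (by positivity), Real.sqrt_sq hσ.le]
  have h2 : Real.sqrt (2 / Real.pi) = 2 / Real.sqrt (2 * Real.pi) := by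
    rw [eq_div_iff (by positivity), ← Real.sqrt_mul (by positivity)]
    have : 2 / Real.pi * (2 * Real.pi) = 2 ^ 2 := by field_simp
    rw [this, Real.sqrt_sq (by norm_num)]
  have hs : 0 < Real.sqrt (2 * Real.pi) := by positivity
  rw [gaussianPDFReal_def]
  simp only [hvs]
  set u := (a - m) / σ with hu
  have ha : a - m = σ * u := by rw [hu]; field_simp
  have hexp : -(a - m) ^ 2 / (2 * σ ^ 2) = -(u ^ 2 / 2) := by rw [ha]; field_simp
  rw [hexp, h1, h2]
  have he1 : Real.exp (-(u ^ 2 / 2)) ≤ 1 := Real.exp_le_one_iff.mpr (by nlinarith [sq_nonneg u])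
  have he2 : |u| * Real.exp (-(u ^ 2 / 2)) ≤ 1 := by
    rw [Real.exp_neg, ← div_eq_mul_inv, div_le_one (Real.exp_pos _)]
    have := Real.add_one_le_exp (u ^ 2 / 2)
    nlinarith [sq_nonneg (|u| - 1), sq_abs u]
  have habs : |a| ≤ 1 + σ * |u| := by
    have : a = m + σ * u := by linarith
    calc |a| = |m + σ * u| := by rw [← this]
      _ ≤ |m| + |σ * u| := abs_add_le _ _
      _ ≤ 1 + σ * |u| := by rw [abs_mul, abs_of_pos hσ]; linarith
  have hmain : |a| * Real.exp (-(u ^ 2 / 2)) ≤ 1 + σ := by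
    calc _ ≤ (1 + σ * |u|) * Real.exp (-(u ^ 2 / 2)) := by gcongr
      _ ≤ 1 + σ := by nlinarith
  calc |a| * ((Real.sqrt (2 * Real.pi) * σ)⁻¹ * Real.exp (-(u ^ 2 / 2)))
      = (|a| * Real.exp (-(u ^ 2 / 2))) * (Real.sqrt (2 * Real.pi) * σ)⁻¹ := by ring
    _ ≤ (1 + σ) * (Real.sqrt (2 * Real.pi) * σ)⁻¹ := by gcongr
    _ = _ := by field_simp

lemma gauss_pole (m σ : ℝ) (hm : |m| ≤ 1) (hσ : 0 < σ)
    (v : NNReal) (hvs : (v : ℝ) = σ ^ 2) (C D s : ℝ) (hs : 1 < s) :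
    gaussianReal m v {a | s * |a * C + D| < |a * C|} ≤
      ENNReal.ofReal ((1 + σ) / σ * Real.sqrt (2 / Real.pi) / (s - 1)) := by
  by_cases hC : C = 0
  · have : {a : ℝ | s * |a * C + D| < |a * C|} = ∅ := by
      ext a; simp [hC]; positivity
    rw [this]; simp
  have hv : (v : NNReal) ≠ 0 := by
    rintro rfl; rw [NNReal.coe_zero] at hvs; nlinarith
  set p := D / C with hp
  set κ := (1 + σ) / σ * Real.sqrt (2 / Real.pi) with hκ
  have hκ0 : 0 ≤ κ := by positivity
  have hset : ∀ a ∈ {a : ℝ | s * |a * C + D| < |a * C|}, s * |a + p| < |a| := by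
    intro a ha
    have h1 : a * C + D = (a + p) * C := by rw [hp]; field_simp
    simp only [Set.mem_ofPred_eq] at ha
    rw [h1, abs_mul, abs_mul, ← mul_assoc] at ha
    exact lt_of_mul_lt_mul_right ha (abs_nonneg _)
  have hs2 : 0 < s ^ 2 - 1 := by nlinarith
  by_cases hp0 : p = 0
  · have : {a : ℝ | s * |a * C + D| < |a * C|} = ∅ := by
      ext a
      simp only [Set.mem_empty_iff_false, iff_false]
      intro ha
      have := hset a ha
      rw [hp0, add_zero] at this
      nlinarith [abs_nonneg a]
    rw [this]; simp
  have hp1 : 0 < |p| := abs_pos.mpr hp0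
  have hsub : {a : ℝ | s * |a * C + D| < |a * C|} ⊆
      Metric.ball (-(s ^ 2 * p / (s ^ 2 - 1))) (s * |p| / (s ^ 2 - 1)) := by
    intro a ha
    have h := hset a ha
    rw [Metric.mem_ball, Real.dist_eq]
    apply abs_lt_of_sq_lt_sq _ (by positivity)
    have h2 : s ^ 2 * (a + p) ^ 2 < a ^ 2 := by
      have := mul_self_lt_mul_self (by positivity) h
      nlinarith [sq_abs (a + p), sq_abs a]
    have e1 : (a - -(s ^ 2 * p / (s ^ 2 - 1))) ^ 2 = ((s ^ 2 - 1) * a + s ^ 2 * p) ^ 2 / (s ^ 2 - 1) ^ 2 := by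
      field_simp; ring
    rw [e1, div_pow]
    apply div_lt_div_of_pos_right _ (by positivity)
    rw [mul_pow, sq_abs]
    nlinarith
  rw [gaussianReal_apply _ hv]
  calc ∫⁻ x in {a : ℝ | s * |a * C + D| < |a * C|}, gaussianPDF m v x
      ≤ ∫⁻ x in {a : ℝ | s * |a * C + D| < |a * C|}, ENNReal.ofReal (κ / 2 * (s + 1) / (|p| * s)) := by
        apply setLIntegral_mono measurable_const
        intro a ha
        rw [gaussianPDF_def]
        apply ENNReal.ofReal_le_ofReal
        have h := hset a ha
        have h3 : |p| * s ≤ |a| * (s + 1) := by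
          have : |p| ≤ |a + p| + |a| := by
            calc |p| = |(a + p) - a| := by ring_nf
              _ ≤ _ := abs_sub _ _
          nlinarith
        have h4 := pdf_bound m σ a hm hσ v hvs
        rw [← hκ] at h4
        rw [le_div_iff₀ (by positivity)]
        have h5 := gaussianPDFReal_nonneg m v a
        nlinarith
    _ = ENNReal.ofReal (κ / 2 * (s + 1) / (|p| * s)) * volume {a : ℝ | s * |a * C + D| < |a * C|} := by
        simp
    _ ≤ ENNReal.ofReal (κ / 2 * (s + 1) / (|p| * s)) * ENNReal.ofReal (2 * (s * |p| / (s ^ 2 - 1))) := by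
        gcongr
        exact (measure_mono hsub).trans_eq (Real.volume_ball _ _)
    _ = ENNReal.ofReal (κ / (s - 1)) := by
        rw [← ENNReal.ofReal_mul (by positivity)]
        congr 1
        have : s - 1 ≠ 0 := by linarith
        have : s + 1 ≠ 0 := by linarith
        have : s ^ 2 - 1 = (s - 1) * (s + 1) := by ring
        rw [this]
        field_simp

lemma pi_coord_le {ι : Type*} [Fintype ι] [DecidableEq ι] (μ : ι → Measure ℝ)
    [∀ i, IsProbabilityMeasure (μ i)] (E : Set (ι → ℝ)) (hE : MeasurableSet E) (i : ι) (c : ℝ≥0∞)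
    (h : ∀ g : ι → ℝ, μ i {a | Function.update g i a ∈ E} ≤ c) :
    Measure.pi μ E ≤ c := by
  rw [← lintegral_indicator_one hE, lintegral_eq_lmarginal_univ (fun _ => 0),
    lmarginal_erase' _ (measurable_one.indicator hE) (Finset.mem_univ i)]
  have : ∀ x : ι → ℝ, ∫⁻ xi, E.indicator 1 (Function.update x i xi) ∂(μ i) ≤ c := by
    intro x
    have h2 : MeasurableSet {a | Function.update x i a ∈ E} :=
      (measurable_update x) hE
    calc ∫⁻ xi, E.indicator 1 (Function.update x i xi) ∂(μ i)
        = ∫⁻ xi, {a | Function.update x i a ∈ E}.indicator 1 xi ∂(μ i) := rfl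
      _ = μ i {a | Function.update x i a ∈ E} := lintegral_indicator_one h2
      _ ≤ c := h x
  refine (lmarginal_mono (g := fun _ => c) this _).trans ?_
  simp [lmarginal]

lemma multiaffine_null {ι : Type*} [Fintype ι] [DecidableEq ι] (μ : ι → Measure ℝ)
    [∀ i, IsProbabilityMeasure (μ i)] (hμ : ∀ i (x : ℝ), μ i {x} = 0) (f : (ι → ℝ) → ℝ)
    (hf : Measurable f) (haff : ∀ z i, ∃ C D : ℝ, ∀ a, f (Function.update z i a) = a * C + D)
    (z : ι → ℝ) (hz : f z ≠ 0) : Measure.pi μ {g | f g = 0} = 0 := by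
  have hE : MeasurableSet {g | f g = 0} := hf (measurableSet_singleton 0)
  have key : ∀ s : Finset ι, ∀ x z : ι → ℝ, (∀ i ∉ s, z i = x i) → f z ≠ 0 →
      lmarginal μ s ({g | f g = 0}.indicator 1) x = 0 := by
    intro s
    induction s using Finset.induction_on with
    | empty =>
      intro x z h hz
      have : z = x := funext fun i => h i (by simp)
      subst this
      simp [hz]
    | insert i s hi ih =>
      intro x z h hz
      rw [lmarginal_insert _ (measurable_one.indicator hE) hi]
      obtain ⟨C, D, hCD⟩ := haff z i
      have h1 : μ i {a | f (Function.update z i a) = 0} = 0 := by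
        apply measure_mono_null (t := {-D / C}) _ (hμ i _)
        intro a ha
        simp only [Set.mem_ofPred_eq, hCD] at ha
        have h0 := hCD (z i)
        rw [Function.update_eq_self] at h0
        have hC : C ≠ 0 := by
          rintro rfl
          apply hz; rw [h0]; linarith
        simp only [Set.mem_singleton_iff]
        rw [eq_div_iff hC]; linarith
      have h2 : ∀ᵐ a ∂(μ i), f (Function.update z i a) ≠ 0 := by
        rw [ae_iff]; simpa using h1
      rw [lintegral_congr_ae (g := fun _ => 0)]
      · simp
      filter_upwards [h2] with a ha
      apply ih _ (Function.update z i a) _ ha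
      intro j hj
      by_cases hji : j = i
      · subst hji; simp
      · simp [hji, h j (by simp [hji, hj])]
  rw [← lintegral_indicator_one hE, lintegral_eq_lmarginal_univ (fun _ => 0)]
  exact key _ _ z (by simp) hz

lemma log_integral (N : ℝ) (hN : 0 < N) :
    ∫⁻ s in Set.Ioc (0:ℝ) 1, ENNReal.ofReal (1 / (1 / N + s)) = ENNReal.ofReal (Real.log (1 + N)) := by
  have hc : ContinuousOn (fun s : ℝ => 1 / (1 / N + s)) (Set.uIcc 0 1) := by
    apply ContinuousOn.div continuousOn_const (by fun_prop)
    intro x hx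
    rw [Set.uIcc_of_le zero_le_one] at hx
    have := hx.1
    positivity
  have hInt1 : IntervalIntegrable (fun s : ℝ => 1 / (1 / N + s)) volume 0 1 := hc.intervalIntegrable
  rw [← ofReal_integral_eq_lintegral_ofReal]
  · rw [← intervalIntegral.integral_of_le zero_le_one]
    congr 1
    have := intervalIntegral.integral_comp_add_left (a := 0) (b := 1) (fun x : ℝ => 1 / x) (1 / N)
    rw [this, integral_one_div_of_pos (by positivity) (by positivity)]
    congr 1
    field_simp
    ring
  · exact (intervalIntegrable_iff_integrableOn_Ioc_of_le zero_le_one).mp hInt1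
  · filter_upwards [ae_restrict_mem measurableSet_Ioc] with s hs
    have := hs.1
    simp only [Pi.zero_apply]
    positivity

lemma sum_tail {Ω : Type*} [MeasurableSpace Ω] (P : Measure Ω) [IsProbabilityMeasure P]
    {ι : Type*} [Fintype ι] (X : ι → Ω → ℝ) (hX : ∀ i, Measurable (X i))
    (κ : ℝ) (hκ : 0 < κ)
    (h : ∀ i s, 1 < s → P {ω | s < X i ω} ≤ ENNReal.ofReal (κ / (s - 1)))
    (hN : 0 < Fintype.card ι) (t : ℝ) (ht : (Fintype.card ι : ℝ) < t) :
    P {ω | t < ∑ i, X i ω} ≤ ENNReal.ofReal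
      (2 * Fintype.card ι * κ * Real.log (1 + Fintype.card ι) / (t - Fintype.card ι)) := by
  set N : ℝ := (Fintype.card ι : ℝ) with hNdef
  have hN0 : 0 < N := by rw [hNdef]; exact_mod_cast hN
  set τ := t - N with hτ
  have hτ0 : 0 < τ := by linarith
  set Z : ι → Ω → ℝ := fun i ω => min 1 (max 0 ((X i ω - 1 - τ / (2 * N)) / (τ / 2))) with hZ
  have hZm : ∀ i, Measurable (Z i) := fun i => by
    have := hX i
    fun_prop
  have hZ0 : ∀ i ω, 0 ≤ Z i ω := fun i ω => le_min zero_le_one (le_max_left _ _)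
  have hsub : {ω | t < ∑ i, X i ω} ⊆ {ω | 1 ≤ ∑ i, ENNReal.ofReal (Z i ω)} := by
    intro ω hω
    simp only [Set.mem_ofPred_eq] at hω ⊢
    rw [← ENNReal.ofReal_sum_of_nonneg (fun i _ => hZ0 i ω), ← ENNReal.ofReal_one]
    apply ENNReal.ofReal_le_ofReal
    by_cases hex : ∃ i, Z i ω = 1
    · obtain ⟨i, hi⟩ := hex
      rw [← hi]
      exact Finset.single_le_sum (f := fun i => Z i ω) (fun i _ => hZ0 i ω) (Finset.mem_univ i)
    · push Not at hex
      have h1 : ∀ i, X i ω - 1 - τ / (2 * N) ≤ Z i ω * (τ / 2) := by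
        intro i
        have h2 := hex i
        have h3 : Z i ω = max 0 ((X i ω - 1 - τ / (2 * N)) / (τ / 2)) := by
          simp only [hZ] at h2 ⊢
          rcases le_total 1 (max 0 ((X i ω - 1 - τ / (2 * N)) / (τ / 2))) with h | h
          · exact absurd (min_eq_left h) h2
          · exact min_eq_right h
        rw [h3, ← div_le_iff₀ (by positivity)]
        exact le_max_right _ _
      have h4 := Finset.sum_le_sum (fun i (_ : i ∈ Finset.univ) => h1 i)
      rw [← Finset.sum_mul, Finset.sum_sub_distrib, Finset.sum_sub_distrib] at h4
      simp only [Finset.sum_const, Finset.card_univ, nsmul_eq_mul, ← hNdef] at h4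
      have h5 : N * (τ / (2 * N)) = τ / 2 := by field_simp
      rw [h5] at h4
      by_contra h6
      push Not at h6
      nlinarith
  have hone : ∀ i, ∫⁻ ω, ENNReal.ofReal (Z i ω) ∂P ≤ ENNReal.ofReal (2 * κ / τ * Real.log (1 + N)) := by
    intro i
    rw [lintegral_eq_lintegral_meas_lt P (Filter.Eventually.of_forall (hZ0 i)) (hZm i).aemeasurable]
    calc ∫⁻ s in Set.Ioi 0, P {a | s < Z i a}
        ≤ ∫⁻ s in Set.Ioi 0, (Set.Ioc (0:ℝ) 1).indicator
            (fun s => ENNReal.ofReal (2 * κ / τ) * ENNReal.ofReal (1 / (1 / N + s))) s := by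
          apply setLIntegral_mono' measurableSet_Ioi
          intro s hs
          simp only [Set.mem_Ioi] at hs
          by_cases hs1 : s ≤ 1
          · rw [Set.indicator_of_mem (by exact ⟨hs, hs1⟩), ← ENNReal.ofReal_mul (by positivity)]
            have : {a | s < Z i a} ⊆ {a | 1 + τ / (2 * N) + s * (τ / 2) < X i a} := by
              intro a ha
              simp only [hZ, Set.mem_ofPred_eq, lt_min_iff, lt_max_iff] at ha ⊢
              rcases ha.2 with h | h
              · linarith
              · rw [lt_div_iff₀ (by positivity)] at h; linarith
            refine (measure_mono this).trans ((h i _ ?_).trans_eq ?_)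
            · have : 0 < τ / (2 * N) := by positivity
              have : 0 < s * (τ / 2) := by positivity
              linarith
            · congr 1
              have : 1 + τ / (2 * N) + s * (τ / 2) - 1 = τ / 2 * (1 / N + s) := by field_simp; ring
              rw [this]
              have : 0 < 1 / N + s := by positivity
              field_simp
          · have : {a | s < Z i a} = ∅ := by
              ext a
              simp only [Set.mem_ofPred_eq, Set.mem_empty_iff_false, iff_false, not_lt]
              exact (min_le_left _ _).trans (not_le.mp hs1).le
            rw [this]; simp
      _ = ENNReal.ofReal (2 * κ / τ) * ∫⁻ s in Set.Ioc (0:ℝ) 1, ENNReal.ofReal (1 / (1 / N + s)) := by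
          rw [setLIntegral_indicator measurableSet_Ioc, Set.inter_eq_left.mpr (fun x hx => hx.1),
            lintegral_const_mul' _ _ ENNReal.ofReal_ne_top]
      _ = _ := by
          rw [log_integral N hN0, ← ENNReal.ofReal_mul (by positivity)]
  calc P {ω | t < ∑ i, X i ω} ≤ P {ω | 1 ≤ ∑ i, ENNReal.ofReal (Z i ω)} := measure_mono hsub
    _ ≤ (∫⁻ ω, ∑ i, ENNReal.ofReal (Z i ω) ∂P) / 1 :=
        meas_ge_le_lintegral_div (Measurable.aemeasurable (by fun_prop)) one_ne_zero ENNReal.one_ne_top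
    _ = ∑ i, ∫⁻ ω, ENNReal.ofReal (Z i ω) ∂P := by
        rw [div_one, lintegral_finsetSum]
        intro i _
        fun_prop
    _ ≤ ∑ _i : ι, ENNReal.ofReal (2 * κ / τ * Real.log (1 + N)) := Finset.sum_le_sum fun i _ => hone i
    _ = _ := by
        rw [Finset.sum_const, Finset.card_univ, nsmul_eq_mul,
          ← ENNReal.ofReal_natCast, ← hNdef, ← ENNReal.ofReal_mul hN0.le]
        congr 1
        ring

lemma arith_fin (m N κ t : ℝ) (hm : 3 ≤ m) (hN0 : 0 < N) (hN : N ≤ 3 * m - 2) (hκ : 3 / 4 < κ)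
    (ht : 4 * m ^ 2 * κ ≤ t - 2 * m) :
    2 * N * κ * Real.log (1 + N) / (t - N) ≤ κ * (4 * m ^ 2 / (t - 2 * m)) := by
  have hq : 3 * m ^ 2 ≤ t - 2 * m := by nlinarith [sq_nonneg m]
  have hq2 : 3 * m ≤ m ^ 2 := by nlinarith
  have hlog : Real.log (1 + N) ≤ 2.08 + (3 * m - 9) / 8 := by
    have h1 : Real.log (1 + N) ≤ Real.log (3 * m - 1) := Real.log_le_log (by linarith) (by linarith)
    have h2 : Real.log (3 * m - 1) = Real.log ((3 * m - 1) / 8) + Real.log 8 := by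
      rw [← Real.log_mul (by intro h; linarith) (by norm_num)]; congr 1; ring
    have h3 := Real.log_le_sub_one_of_pos (x := (3 * m - 1) / 8) (by linarith)
    have h4 : Real.log 8 = 3 * Real.log 2 := by
      rw [show (8:ℝ) = 2 ^ 3 by norm_num, Real.log_pow]; norm_num
    have := Real.log_two_lt_d9
    linarith
  have hlog0 : 0 ≤ Real.log (1 + N) := Real.log_nonneg (by linarith)
  have hNl : N * Real.log (1 + N) ≤ (3 * m - 2) * (2.08 + (3 * m - 9) / 8) := by
    apply mul_le_mul hN hlog hlog0 (by linarith)
  have hk : 0 < κ := by linarith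
  have htN : 0 < t - N := by linarith
  have ht2 : 0 < t - 2 * m := by nlinarith
  rw [mul_div_assoc', div_le_div_iff₀ htN ht2]
  have key : N * Real.log (1 + N) * (t - 2 * m) ≤ 2 * m ^ 2 * (t - N) := by
    have h1 : N * Real.log (1 + N) * (t - 2 * m) ≤
        ((3 * m - 2) * (2.08 + (3 * m - 9) / 8)) * (t - 2 * m) := by gcongr
    have h2 : 2 * m ^ 2 * (t - 2 * m - (m - 2)) ≤ 2 * m ^ 2 * (t - N) := by
      apply mul_le_mul_of_nonneg_left (by linarith) (by positivity)
    have h3 : 2 * m ^ 2 * (m - 2) ≤ 2 / 3 * (m - 2) * (t - 2 * m) := by nlinarith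
    have h4 : 0 ≤ 2 * m ^ 2 - 2 / 3 * (m - 2) - (3 * m - 2) * (2.08 + (3 * m - 9) / 8) := by nlinarith [sq_nonneg (m - 1.6)]
    nlinarith
  nlinarith

lemma cwCond_le_of_fderiv {ι : Type*} [Fintype ι] [DecidableEq ι] (D : Set (ι → ℝ))
    (F : (ι → ℝ) → Unit → ℝ) (a : ι → ℝ) (G : (ι → ℝ) → ℝ) (L : (ι → ℝ) →L[ℝ] ℝ)
    (hG : HasFDerivAt G L 0) (hG0 : G 0 ≠ 0)
    (hF : ∀ e : ι → ℝ, (fun i => a i * (1 + e i)) ∈ D → F (fun i => a i * (1 + e i)) () = G e)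
    (haD : a ∈ D) (c : ℝ) (hc : ∑ i, |L (Pi.single i 1)| ≤ c * |G 0|) :
    cwCond D F a ≤ ENNReal.ofReal c := by
  have hG0' : 0 < |G 0| := abs_pos.mpr hG0
  have hc0 : 0 ≤ c := by
    by_contra h
    push Not at h
    have : 0 ≤ ∑ i, |L (Pi.single i 1)| := Finset.sum_nonneg fun _ _ => abs_nonneg _
    nlinarith
  have hFa : F a () = G 0 := by
    have := hF 0
    simp only [Pi.zero_apply, add_zero, mul_one] at this
    exact this haD
  have hL : ∀ e : ι → ℝ, |L e| ≤ (c * |G 0|) * ‖e‖ := by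
    intro e
    have h1 : L e = ∑ i, e i * L (Pi.single i 1) := by
      conv_lhs => rw [pi_eq_sum_univ' e]
      rw [map_sum]
      refine Finset.sum_congr rfl fun i _ => ?_
      rw [map_smul, smul_eq_mul]
    rw [h1]
    calc |∑ i, e i * L (Pi.single i 1)| ≤ ∑ i, |e i * L (Pi.single i 1)| :=
          Finset.abs_sum_le_sum_abs _ _
      _ ≤ ∑ i, |L (Pi.single i 1)| * ‖e‖ := by
          refine Finset.sum_le_sum fun i _ => ?_
          rw [abs_mul, mul_comm]
          gcongr
          exact norm_le_pi_norm e i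
      _ ≤ _ := by
          rw [← Finset.sum_mul]
          gcongr
  apply ENNReal.le_of_forall_pos_le_add
  intro ε hε _
  have hε' : (0:ℝ) < ε := hε
  have hlo := hG.isLittleO.def (c := ε * |G 0|) (by positivity)
  rw [Metric.eventually_nhds_iff] at hlo
  obtain ⟨δ, hδ, hlo⟩ := hlo
  refine (iInf₂_le (ENNReal.ofReal (δ / 2)) (by simp; positivity)).trans ?_
  refine iSup₂_le fun x hx => ?_
  obtain ⟨hxD, hxd, hxa⟩ := hx
  set d := cwDist x a with hd
  have hdtop : d ≠ ⊤ := ne_top_of_le_ne_top ENNReal.ofReal_ne_top hxd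
  have hcomp : ∀ i, (if a i ≠ 0 then ENNReal.ofReal (|x i - a i| / |a i|)
       else if x i = a i then 0 else ⊤) ≤ d := fun i =>
    le_iSup (fun i => if a i ≠ 0 then ENNReal.ofReal (|x i - a i| / |a i|)
       else if x i = a i then 0 else ⊤) i
  set e : ι → ℝ := fun i => if a i = 0 then 0 else (x i - a i) / a i with he
  have hxe : x = fun i => a i * (1 + e i) := by
    funext i
    by_cases h : a i = 0
    · have h1 := hcomp i
      simp only [h, ne_eq, not_true_eq_false, if_false] at h1
      by_cases h2 : x i = 0
      · simp [h, h2]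
      · simp only [h2, if_false] at h1
        exact absurd (top_le_iff.mp h1) hdtop
    · simp only [he, h, if_false]
      field_simp
      ring
  have hei : ‖e‖ ≤ d.toReal := by
    rw [pi_norm_le_iff_of_nonneg ENNReal.toReal_nonneg]
    intro i
    by_cases h : a i = 0
    · simp [he, h]
    · have h1 := hcomp i
      rw [if_pos h] at h1
      rw [ENNReal.ofReal_le_iff_le_toReal hdtop] at h1
      simp only [he, h, if_false, norm_div, Real.norm_eq_abs]
      exact h1
  have hdδ : d.toReal ≤ δ / 2 := ENNReal.toReal_le_of_le_ofReal (by positivity) hxd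
  have hFx : F x () = G e := by
    rw [hxe]; rw [hxe] at hxD
    exact hF e hxD
  have hb : |G e - G 0| ≤ (c + ε) * |G 0| * d.toReal := by
    have h1 := hlo (y := e) (by rw [dist_zero_right]; linarith)
    simp only [sub_zero, Real.norm_eq_abs] at h1
    have h2 := hL e
    calc |G e - G 0| = |(G e - G 0 - L e) + L e| := by ring_nf
      _ ≤ |G e - G 0 - L e| + |L e| := abs_add_le _ _
      _ ≤ ε * |G 0| * ‖e‖ + c * |G 0| * ‖e‖ := add_le_add h1 h2
      _ = (c + ε) * |G 0| * ‖e‖ := by ring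
      _ ≤ _ := by gcongr
  apply ENNReal.div_le_of_le_mul
  rw [cwDist]
  refine iSup_le fun _ => ?_
  rw [hFa, if_pos hG0, hFx]
  calc ENNReal.ofReal (|G e - G 0| / |G 0|) ≤ ENNReal.ofReal ((c + ε) * d.toReal) := by
        apply ENNReal.ofReal_le_ofReal
        rw [div_le_iff₀ hG0']
        linarith
    _ = _ := by
        rw [ENNReal.ofReal_mul (by positivity), ENNReal.ofReal_toReal hdtop,
          ENNReal.ofReal_add hc0 hε'.le, ENNReal.ofReal_coe_nnreal]

/-- signed cofactor -/
noncomputable def cof {n : ℕ} (M : Matrix (Fin n) (Fin n) ℝ) (i j : Fin n) : ℝ :=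
  (M.updateCol j (Pi.single i 1)).det

/-- remaining part of the determinant -/
noncomputable def rest {n : ℕ} (M : Matrix (Fin n) (Fin n) ℝ) (i j : Fin n) : ℝ :=
  (M.updateCol j (Function.update (fun i' => M i' j) i 0)).det

lemma det_entry {n : ℕ} (M M' : Matrix (Fin n) (Fin n) ℝ) (i j : Fin n)
    (h : ∀ i' j', ¬(i' = i ∧ j' = j) → M' i' j' = M i' j') :
    M'.det = M' i j * cof M i j + rest M i j := by
  have : M' = M.updateCol j (M' i j • Pi.single i 1 + Function.update (fun i' => M i' j) i 0) := by
    ext i' j'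
    by_cases hj : j' = j
    · subst hj
      by_cases hi : i' = i
      · subst hi; simp
      · simp [hi, h i' j' (by simp [hi])]
    · simp [hj, h i' j' (by simp [hj])]
  conv_lhs => rw [this]
  rw [Matrix.det_updateCol_add, Matrix.det_updateCol_smul]
  rfl

lemma cof_entry {n : ℕ} (M M' : Matrix (Fin n) (Fin n) ℝ) (i j : Fin n)
    (h : ∀ i' j', ¬(i' = i ∧ j' = j) → M' i' j' = M i' j') : cof M' i j = cof M i j := by
  unfold cof
  congr 1
  ext i' j'
  by_cases hj : j' = j
  · subst hj; simp
  · simp [hj, h i' j' (by simp [hj])]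

/-- relative sensitivity of the determinant w.r.t. an entry -/
noncomputable def pole {n : ℕ} (M : Matrix (Fin n) (Fin n) ℝ) (p : Fin n × Fin n) : ℝ :=
  |M p.1 p.2 * cof M p.1 p.2| / |M.det|

/-- perturbed matrix -/
noncomputable def pertA {n : ℕ} (A : Matrix (Fin n) (Fin n) ℝ) (e : (Fin n × Fin n) ⊕ Fin n → ℝ) :
    Matrix (Fin n) (Fin n) ℝ := Matrix.of fun i j => A i j * (1 + e (Sum.inl (i, j)))

/-- perturbed matrix with a column replaced -/
noncomputable def pertB {n : ℕ} (k : Fin n) (A : Matrix (Fin n) (Fin n) ℝ) (b : Fin n → ℝ)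
    (e : (Fin n × Fin n) ⊕ Fin n → ℝ) :
    Matrix (Fin n) (Fin n) ℝ := (pertA A e).updateCol k fun i => b i * (1 + e (Sum.inr i))

lemma pertA_zero {n : ℕ} (A : Matrix (Fin n) (Fin n) ℝ) : pertA A 0 = A := by
  ext i j; simp [pertA]

lemma pertB_zero {n : ℕ} (k : Fin n) (A : Matrix (Fin n) (Fin n) ℝ) (b : Fin n → ℝ) :
    pertB k A b 0 = A.updateCol k b := by
  simp [pertB, pertA_zero]

lemma diff_A {n : ℕ} (A : Matrix (Fin n) (Fin n) ℝ) :
    Differentiable ℝ fun e => (pertA A e).det := by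
  simp only [Matrix.det_apply, pertA, Matrix.of_apply]
  fun_prop

lemma diff_B {n : ℕ} (k : Fin n) (A : Matrix (Fin n) (Fin n) ℝ) (b : Fin n → ℝ) :
    Differentiable ℝ fun e => (pertB k A b e).det := by
  have h : ∀ (e : (Fin n × Fin n) ⊕ Fin n → ℝ) (i j : Fin n), pertB k A b e i j =
      (if j = k then b i else A i j) *
        (1 + e (if j = k then Sum.inr i else Sum.inl (i, j))) := by
    intro e i j
    simp only [pertB, pertA, Matrix.updateCol_apply, Matrix.of_apply]
    split_ifs <;> rfl
  simp only [Matrix.det_apply, h]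
  fun_prop

lemma line_deriv {n : ℕ} (f : ((Fin n × Fin n) ⊕ Fin n → ℝ) → ℝ) (hf : DifferentiableAt ℝ f 0)
    (p : (Fin n × Fin n) ⊕ Fin n) (c : ℝ) (h : ∀ r : ℝ, f (r • Pi.single p 1) = f 0 + r * c) :
    fderiv ℝ f 0 (Pi.single p 1) = c := by
  have h1 : HasDerivAt (fun r : ℝ => f (r • Pi.single p (1:ℝ))) (fderiv ℝ f 0 (Pi.single p 1)) 0 := by
    have h2 : HasDerivAt (fun r : ℝ => r • (Pi.single p (1:ℝ) : (Fin n × Fin n) ⊕ Fin n → ℝ))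
      ((1:ℝ) • Pi.single p (1:ℝ)) 0 := (hasDerivAt_id (0:ℝ)).smul_const _
    rw [one_smul] at h2
    have h3 : HasFDerivAt f (fderiv ℝ f 0) ((0:ℝ) • (Pi.single p (1:ℝ) : (Fin n × Fin n) ⊕ Fin n → ℝ)) := by
      rw [zero_smul]; exact hf.hasFDerivAt
    exact h3.comp_hasDerivAt (0:ℝ) h2
  have h4 : HasDerivAt (fun r : ℝ => f (r • Pi.single p (1:ℝ))) c 0 := by
    simp only [h]
    simpa using ((hasDerivAt_id (0:ℝ)).mul_const c).const_add (f 0)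
  exact h1.unique h4

lemma det_pert {n : ℕ} (M M' : Matrix (Fin n) (Fin n) ℝ) (i j : Fin n) (r : ℝ)
    (h : ∀ i' j', ¬(i' = i ∧ j' = j) → M' i' j' = M i' j') (h2 : M' i j = M i j * (1 + r)) :
    M'.det = M.det + r * (M i j * cof M i j) := by
  rw [det_entry M M' i j h, det_entry M M i j (fun _ _ _ => rfl), h2]
  ring

lemma fd_A_inl {n : ℕ} (A : Matrix (Fin n) (Fin n) ℝ) (i j : Fin n) :
    fderiv ℝ (fun e => (pertA A e).det) 0 (Pi.single (Sum.inl (i, j)) 1) = A i j * cof A i j := by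
  apply line_deriv _ (diff_A A).differentiableAt
  intro r
  rw [pertA_zero]
  apply det_pert
  · intro i' j' h
    simp [pertA, Pi.single_apply, Prod.ext_iff, h]
  · simp [pertA]

lemma fd_A_inr {n : ℕ} (A : Matrix (Fin n) (Fin n) ℝ) (i : Fin n) :
    fderiv ℝ (fun e => (pertA A e).det) 0 (Pi.single (Sum.inr i) 1) = 0 := by
  apply line_deriv _ (diff_A A).differentiableAt
  intro r
  simp [pertA]

lemma fd_B_inl {n : ℕ} (k : Fin n) (A : Matrix (Fin n) (Fin n) ℝ) (b : Fin n → ℝ) (i j : Fin n) :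
    fderiv ℝ (fun e => (pertB k A b e).det) 0 (Pi.single (Sum.inl (i, j)) 1) =
      if j = k then 0 else A.updateCol k b i j * cof (A.updateCol k b) i j := by
  apply line_deriv _ (diff_B k A b).differentiableAt
  intro r
  rw [pertB_zero]
  split_ifs with hj
  · subst hj
    rw [mul_zero, add_zero]
    congr 1
    ext i' j'
    by_cases h : j' = j
    · subst h; simp [pertB]
    · simp [pertB, pertA, h, Pi.single_apply]
  · apply det_pert
    · intro i' j' h
      by_cases hk : j' = k
      · subst hk; simp [pertB]
      · simp [pertB, pertA, hk, Pi.single_apply, Prod.ext_iff, h]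
    · simp [pertB, pertA, hj]

lemma fd_B_inr {n : ℕ} (k : Fin n) (A : Matrix (Fin n) (Fin n) ℝ) (b : Fin n → ℝ) (i : Fin n) :
    fderiv ℝ (fun e => (pertB k A b e).det) 0 (Pi.single (Sum.inr i) 1) =
      A.updateCol k b i k * cof (A.updateCol k b) i k := by
  apply line_deriv _ (diff_B k A b).differentiableAt
  intro r
  rw [pertB_zero]
  apply det_pert
  · intro i' j' h
    by_cases hk : j' = k
    · subst hk
      have hi : i' ≠ i := fun hh => h ⟨hh, rfl⟩
      simp [pertB, hi, Pi.single_apply]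
    · simp [pertB, pertA, hk]
  · simp [pertB]

lemma cramer_k {n : ℕ} (A : Matrix (Fin n) (Fin n) ℝ) (b : Fin n → ℝ) (k : Fin n)
    (h : IsUnit A.det) : Matrix.mulVec A⁻¹ b k = (A.updateCol k b).det / A.det := by
  have := congrFun (Matrix.det_smul_inv_mulVec_eq_cramer A b h) k
  rw [Matrix.cramer_apply, Pi.smul_apply, smul_eq_mul] at this
  rw [eq_div_iff h.ne_zero, ← this]
  ring

lemma cLin_le {n : ℕ} (k : Fin n) (A : Matrix (Fin n) (Fin n) ℝ) (b : Fin n → ℝ)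
    (hA : A.det ≠ 0) (hB : (A.updateCol k b).det ≠ 0) :
    cLin k A b ≤ ENNReal.ofReal (∑ p, pole A p + ∑ p, pole (A.updateCol k b) p) := by
  set B := A.updateCol k b with hBdef
  have hdA := (diff_A A).differentiableAt (x := 0) |>.hasFDerivAt
  have hdB := (diff_B k A b).differentiableAt (x := 0) |>.hasFDerivAt
  have hA0 : (pertA A 0).det ≠ 0 := by rwa [pertA_zero]
  have hmain := hdB.mul ((hasDerivAt_inv hA0).comp_hasFDerivAt (0 : (Fin n × Fin n) ⊕ Fin n → ℝ) hdA)
  refine cwCond_le_of_fderiv _ _ _ (fun e => (pertB k A b e).det * ((pertA A e).det)⁻¹) _ hmain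
    ?_ ?_ ?_ _ ?_
  · simp only [pertB_zero, pertA_zero]
    exact mul_ne_zero hB (inv_ne_zero hA)
  · intro e he
    have h1 : funToMat' (fun i => pairToFun A b i * (1 + e i)) = pertA A e := rfl
    have h2 : funToVec (fun i => pairToFun A b i * (1 + e i)) = fun i => b i * (1 + e (Sum.inr i)) := rfl
    have h3 : IsUnit (pertA A e).det := he
    rw [h1, h2, cramer_k _ _ _ h3, div_eq_mul_inv]
    rfl
  · have : funToMat' (pairToFun A b) = A := rfl
    show IsUnit (funToMat' (pairToFun A b)).det
    rw [this]; exact isUnit_iff_ne_zero.mpr hA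
  · have hG : |B.det * (A.det)⁻¹| ≠ 0 := abs_ne_zero.mpr (mul_ne_zero hB (inv_ne_zero hA))
    have habsA : |A.det| ≠ 0 := abs_ne_zero.mpr hA
    have habsB : |B.det| ≠ 0 := abs_ne_zero.mpr hB
    have hsum : (∑ p, pole A p + ∑ p, pole B p) =
      (∑ p : Fin n × Fin n, (pole A p + if p.2 = k then 0 else pole B p)) + ∑ i, pole B (i, k) := by
      rw [Finset.sum_add_distrib, add_assoc]
      congr 1
      rw [Fintype.sum_prod_type, Fintype.sum_prod_type, ← Finset.sum_add_distrib]
      refine Finset.sum_congr rfl fun i _ => ?_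
      rw [← Finset.sum_erase_add _ _ (Finset.mem_univ k), ← Finset.sum_erase_add (a := k) (f := fun x => if (i, x).2 = k then 0 else pole B (i, x)) _ (Finset.mem_univ k)]
      simp only [if_true, add_zero]
      congr 1
      refine Finset.sum_congr rfl fun j hj => ?_
      rw [if_neg (Finset.ne_of_mem_erase hj)]
    rw [Fintype.sum_sum_type, hsum, add_mul, Finset.sum_mul, Finset.sum_mul]
    simp only [Function.comp_apply, pertB_zero, pertA_zero, ← hBdef]
    apply add_le_add
    · refine Finset.sum_le_sum fun p _ => ?_
      obtain ⟨i, j⟩ := p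
      simp only [add_apply, smul_apply,
        fd_A_inl, fd_B_inl, smul_eq_mul, ← hBdef]
      refine (abs_add_le _ _).trans ?_
      rw [add_mul]
      apply add_le_add
      · apply le_of_eq
        simp only [pole, abs_mul, abs_inv, abs_neg, abs_pow]
        field_simp
      · split_ifs
        · simp
        · apply le_of_eq
          simp only [pole, abs_mul, abs_inv]
          field_simp
    · refine Finset.sum_le_sum fun i _ => ?_
      simp only [add_apply, smul_apply,
        fd_A_inr, fd_B_inr, smul_eq_mul, ← hBdef]
      apply le_of_eq
      simp only [pole, abs_mul, abs_inv, mul_zero, zero_add]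
      field_simp

lemma pole_le_one {n : ℕ} (M : Matrix (Fin n) (Fin n) ℝ) (i j : Fin n) (h : rest M i j = 0) :
    pole M (i, j) ≤ 1 := by
  unfold pole
  rw [det_entry M M i j (fun _ _ _ => rfl), h, add_zero]
  exact div_self_le_one _

lemma perm_bound {n : ℕ} (k : Fin n) (A : Matrix (Fin n) (Fin n) ℝ) (b : Fin n → ℝ)
    (π : Equiv.Perm (Fin n)) (hA : ∀ i j, i ≠ π j → A i j = 0) :
    ∑ p, pole A p + ∑ p, pole (A.updateCol k b) p ≤ 2 * n := by
  have hone : ∑ p : Fin n × Fin n, (if p.1 = π p.2 then (1:ℝ) else 0) = n := by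
    rw [Fintype.sum_prod_type_right]
    simp
  have h1 : ∑ p, pole A p ≤ n := by
    rw [← hone]
    refine Finset.sum_le_sum fun p _ => ?_
    obtain ⟨i, j⟩ := p
    split_ifs with h
    · apply pole_le_one
      apply Matrix.det_eq_zero_of_column_eq_zero j
      intro i'
      by_cases hi : i' = i
      · subst hi; simp
      · simp only [Matrix.updateCol_self, Function.update_of_ne hi]
        exact hA _ _ (fun h' => hi (h'.trans h.symm))
    · simp only at h
      simp [pole, hA i j h]
  have h2 : ∑ p, pole (A.updateCol k b) p ≤ n := by
    rw [← hone]
    refine Finset.sum_le_sum fun p _ => ?_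
    obtain ⟨i, j⟩ := p
    by_cases hj : j = k
    · subst hj
      split_ifs with h
      · simp only at h
        apply pole_le_one
        apply Matrix.det_eq_zero_of_row_eq_zero i
        intro j'
        by_cases hj' : j' = j
        · subst hj'; simp
        · simp only [Matrix.updateCol_apply, if_neg hj']
          apply hA
          rw [h]
          exact fun h' => hj' (π.injective h').symm
      · simp only at h
        have : cof (A.updateCol j b) i j = 0 := by
          apply Matrix.det_eq_zero_of_row_eq_zero (π j)
          intro j'
          by_cases hj' : j' = j
          · subst hj'
            simp [Ne.symm h]
          · simp only [Matrix.updateCol_apply, if_neg hj']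
            apply hA
            exact fun h' => hj' (π.injective h').symm
        simp [pole, this]
    · split_ifs with h
      · simp only at h
        apply pole_le_one
        apply Matrix.det_eq_zero_of_column_eq_zero j
        intro i'
        by_cases hi : i' = i
        · subst hi; simp
        · simp only [Matrix.updateCol_self, Function.update_of_ne hi]
          rw [Matrix.updateCol_ne hj]
          exact hA _ _ (fun h' => hi (h'.trans h.symm))
      · simp only at h
        simp [pole, hj, hA i j h]
  linarith

lemma exists_perm {n : ℕ} (S : Finset (Fin n × Fin n)) (hS : Admissible S) :
    ∃ π : Equiv.Perm (Fin n), ∀ j, (π j, j) ∈ S := by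
  obtain ⟨B, hB, hdet⟩ := hS
  have h := hdet.ne_zero
  rw [Matrix.det_apply] at h
  obtain ⟨π, -, hπ⟩ := Finset.exists_ne_zero_of_sum_ne_zero h
  refine ⟨π, fun j => ?_⟩
  by_contra hj
  apply hπ
  have h0 : ∏ i, B (π i) i = 0 := Finset.prod_eq_zero (Finset.mem_univ j) (hB _ _ hj)
  rw [h0, smul_zero]

/-- sparse matrix from its entries -/
def matOf {n : ℕ} (S : Finset (Fin n × Fin n)) (g : S → ℝ) : Matrix (Fin n) (Fin n) ℝ :=
  Matrix.of fun i j => if h : (i, j) ∈ S then g ⟨(i, j), h⟩ else 0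

lemma meas_entry {n : ℕ} (i j : Fin n) : Measurable fun M : Matrix (Fin n) (Fin n) ℝ => M i j :=
  (measurable_pi_apply j).comp (measurable_pi_apply (X := fun _ : Fin n => Fin n → ℝ) i)

lemma meas_det {n : ℕ} {Ω : Type*} [MeasurableSpace Ω] (f : Ω → Matrix (Fin n) (Fin n) ℝ)
    (hf : ∀ i j, Measurable fun ω => f ω i j) : Measurable fun ω => (f ω).det := by
  simp only [Matrix.det_apply]
  refine Finset.measurable_fun_sum _ fun s _ => ?_
  refine Measurable.const_smul ?_ _
  exact Finset.measurable_fun_prod _ fun i _ => hf _ _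

lemma meas_matOf {n : ℕ} (S : Finset (Fin n × Fin n)) : Measurable (matOf S) := by
  refine measurable_pi_iff.mpr fun i => measurable_pi_iff.mpr fun j => ?_
  by_cases h : (i, j) ∈ S
  · have : (fun g : S → ℝ => matOf S g i j) = fun g => g ⟨(i, j), h⟩ := by
      funext g; simp [matOf, h]
    rw [this]; exact measurable_pi_apply _
  · have : (fun g : S → ℝ => matOf S g i j) = fun g => 0 := by
      funext g; simp [matOf, h]
    rw [this]; exact measurable_const

lemma meas_updateCol {n : ℕ} {Ω : Type*} [MeasurableSpace Ω] (f : Ω → Matrix (Fin n) (Fin n) ℝ)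
    (hf : ∀ i j, Measurable fun ω => f ω i j) (v : Ω → Fin n → ℝ)
    (hv : ∀ i, Measurable fun ω => v ω i) (k i j : Fin n) :
    Measurable fun ω => (f ω).updateCol k (v ω) i j := by
  simp only [Matrix.updateCol_apply]
  split_ifs
  · exact hv i
  · exact hf i j

lemma meas_cof {n : ℕ} {Ω : Type*} [MeasurableSpace Ω] (f : Ω → Matrix (Fin n) (Fin n) ℝ)
    (hf : ∀ i j, Measurable fun ω => f ω i j) (i j : Fin n) : Measurable fun ω => cof (f ω) i j :=
  meas_det _ (meas_updateCol f hf (fun _ => Pi.single i 1) (fun _ => measurable_const) j)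

lemma meas_abs' {Ω : Type*} [MeasurableSpace Ω] (f : Ω → ℝ) (hf : Measurable f) :
    Measurable fun ω => |f ω| := continuous_abs.measurable.comp hf

lemma meas_pole {n : ℕ} {Ω : Type*} [MeasurableSpace Ω] (f : Ω → Matrix (Fin n) (Fin n) ℝ)
    (hf : ∀ i j, Measurable fun ω => f ω i j) (p : Fin n × Fin n) :
    Measurable fun ω => pole (f ω) p :=
  (meas_abs' _ ((hf p.1 p.2).mul (meas_cof f hf p.1 p.2))).div (meas_abs' _ (meas_det f hf))

lemma pole_set {n : ℕ} (m σ : ℝ) (hm : |m| ≤ 1) (hσ : 0 < σ)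
    (v : NNReal) (hvs : (v : ℝ) = σ ^ 2) (s : ℝ) (hs : 1 < s)
    (M : Matrix (Fin n) (Fin n) ℝ) (M' : ℝ → Matrix (Fin n) (Fin n) ℝ) (i j : Fin n)
    (h : ∀ a i' j', ¬(i' = i ∧ j' = j) → M' a i' j' = M i' j') (h2 : ∀ a, M' a i j = a) :
    gaussianReal m v {a | s < pole (M' a) (i, j)} ≤
      ENNReal.ofReal ((1 + σ) / σ * Real.sqrt (2 / Real.pi) / (s - 1)) := by
  refine (measure_mono ?_).trans (gauss_pole m σ hm hσ v hvs (cof M i j) (rest M i j) s hs)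
  intro a ha
  simp only [Set.mem_ofPred_eq, pole, cof_entry M (M' a) i j (h a), det_entry M (M' a) i j (h a), h2] at ha ⊢
  by_cases h0 : a * cof M i j + rest M i j = 0
  · rw [h0] at ha
    simp at ha
    linarith
  · rwa [lt_div_iff₀ (abs_pos.mpr h0)] at ha

lemma matOf_update {n : ℕ} (S : Finset (Fin n × Fin n)) (g : S → ℝ) (p : S) (a : ℝ) :
    (∀ i' j', ¬(i' = p.1.1 ∧ j' = p.1.2) → matOf S (Function.update g p a) i' j' = matOf S g i' j')
    ∧ matOf S (Function.update g p a) p.1.1 p.1.2 = a := by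
  constructor
  · intro i' j' h
    simp only [matOf, Matrix.of_apply]
    split_ifs with hS
    · rw [Function.update_of_ne]
      rintro rfl
      exact h ⟨rfl, rfl⟩
    · rfl
  · simp [matOf]

section final

/-- the variance -/
noncomputable def vv (σ : ℝ) : NNReal := ⟨σ ^ 2, sq_nonneg σ⟩

lemma vv_coe (σ : ℝ) : (vv σ : ℝ) = σ ^ 2 := rfl

lemma sparse_def {n : ℕ} (S : Finset (Fin n × Fin n))
    (Abar : Matrix (Fin n) (Fin n) ℝ) (σ : ℝ) : sparseGaussian S Abar σ =
    (Measure.pi fun p : S => gaussianReal (Abar p.1.1 p.1.2) (vv σ)).map (matOf S) := rfl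

lemma vec_def {n : ℕ} (bbar : Fin n → ℝ) (σ : ℝ) :
    vecGaussian bbar σ = Measure.pi fun i => gaussianReal (bbar i) (vv σ) := rfl

lemma var_ne (σ : ℝ) (hσ : 0 < σ) : vv σ ≠ 0 := by
  intro h
  have h2 : σ ^ 2 = 0 := congrArg NNReal.toReal h
  have : 0 < σ ^ 2 := by positivity
  linarith

lemma gauss_single (m σ : ℝ) (hσ : 0 < σ) (x : ℝ) :
    gaussianReal m (vv σ) {x} = 0 :=
  gaussianReal_absolutelyContinuous m (var_ne σ hσ) (by simp)

instance vecGaussian_prob {n : ℕ} (bbar : Fin n → ℝ) (σ : ℝ) :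
    IsProbabilityMeasure (vecGaussian bbar σ) := by
  rw [vec_def]; infer_instance

instance sparseGaussian_prob {n : ℕ} (S : Finset (Fin n × Fin n))
    (Abar : Matrix (Fin n) (Fin n) ℝ) (σ : ℝ) : IsProbabilityMeasure (sparseGaussian S Abar σ) := by
  rw [sparse_def]
  exact Measure.isProbabilityMeasure_map (meas_matOf S).aemeasurable

lemma sparse_apply {n : ℕ} (S : Finset (Fin n × Fin n))
    (Abar : Matrix (Fin n) (Fin n) ℝ) (σ : ℝ) (E : Set (Matrix (Fin n) (Fin n) ℝ))
    (hE : MeasurableSet E) : sparseGaussian S Abar σ E =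
      Measure.pi (fun p : S => gaussianReal (Abar p.1.1 p.1.2) (vv σ))
        {g | matOf S g ∈ E} := by
  rw [sparse_def]
  exact Measure.map_apply (meas_matOf S) hE

lemma prod_le_left {α β : Type*} [MeasurableSpace α] [MeasurableSpace β] (μ : Measure α)
    (ν : Measure β) [IsProbabilityMeasure μ] [IsProbabilityMeasure ν] (E : Set (α × β))
    (hE : MeasurableSet E) (c : ℝ≥0∞) (h : ∀ y, μ {x | (x, y) ∈ E} ≤ c) : μ.prod ν E ≤ c := by
  rw [Measure.prod_apply_symm hE]
  refine (lintegral_mono (g := fun _ => c) h).trans ?_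
  simp

lemma prod_le_right {α β : Type*} [MeasurableSpace α] [MeasurableSpace β] (μ : Measure α)
    (ν : Measure β) [IsProbabilityMeasure μ] [IsProbabilityMeasure ν] (E : Set (α × β))
    (hE : MeasurableSet E) (c : ℝ≥0∞) (h : ∀ x, ν {y | (x, y) ∈ E} ≤ c) : μ.prod ν E ≤ c := by
  rw [Measure.prod_apply hE]
  refine (lintegral_mono (g := fun _ => c) h).trans ?_
  simp

lemma coordA {n : ℕ} (S : Finset (Fin n × Fin n))
    (Abar : Matrix (Fin n) (Fin n) ℝ) (bbar : Fin n → ℝ) (σ : ℝ)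
    (E : Set (Matrix (Fin n) (Fin n) ℝ × (Fin n → ℝ))) (hE : MeasurableSet E) (p : S) (c : ℝ≥0∞)
    (h : ∀ g b, gaussianReal (Abar p.1.1 p.1.2) (vv σ)
      {a | (matOf S (Function.update g p a), b) ∈ E} ≤ c) :
    (sparseGaussian S Abar σ).prod (vecGaussian bbar σ) E ≤ c := by
  apply prod_le_left _ _ _ hE
  intro b
  have h1 : MeasurableSet {x | (x, b) ∈ E} := measurable_prodMk_right hE
  rw [sparse_apply S Abar σ _ h1]
  exact pi_coord_le _ _ (meas_matOf S h1) p c (fun g => h g b)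

lemma coordB {n : ℕ} (S : Finset (Fin n × Fin n))
    (Abar : Matrix (Fin n) (Fin n) ℝ) (bbar : Fin n → ℝ) (σ : ℝ)
    (E : Set (Matrix (Fin n) (Fin n) ℝ × (Fin n → ℝ))) (hE : MeasurableSet E) (i : Fin n) (c : ℝ≥0∞)
    (h : ∀ A b, gaussianReal (bbar i) (vv σ)
      {a | (A, Function.update b i a) ∈ E} ≤ c) :
    (sparseGaussian S Abar σ).prod (vecGaussian bbar σ) E ≤ c := by
  apply prod_le_right _ _ _ hE
  intro A
  have h1 : MeasurableSet {y | (A, y) ∈ E} := measurable_prodMk_left hE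
  rw [vec_def]
  exact pi_coord_le _ _ h1 i c (fun b => h A b)

lemma measA {n : ℕ} (i j : Fin n) :
    Measurable fun q : Matrix (Fin n) (Fin n) ℝ × (Fin n → ℝ) => q.1 i j :=
  (meas_entry i j).comp measurable_fst

lemma measB {n : ℕ} (k i j : Fin n) :
    Measurable fun q : Matrix (Fin n) (Fin n) ℝ × (Fin n → ℝ) => q.1.updateCol k q.2 i j :=
  meas_updateCol (fun q : Matrix (Fin n) (Fin n) ℝ × (Fin n → ℝ) => q.1) measA (fun q => q.2)
    (fun i => (measurable_pi_apply i).comp measurable_snd) k i j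

lemma null_A {n : ℕ} (S : Finset (Fin n × Fin n)) (hS : Admissible S)
    (Abar : Matrix (Fin n) (Fin n) ℝ) (bbar : Fin n → ℝ) (σ : ℝ) (hσ : 0 < σ) :
    (sparseGaussian S Abar σ).prod (vecGaussian bbar σ) {q | q.1.det = 0} = 0 := by
  have hm : MeasurableSet {M : Matrix (Fin n) (Fin n) ℝ | M.det = 0} :=
    (meas_det (fun M : Matrix (Fin n) (Fin n) ℝ => M) meas_entry) (measurableSet_singleton 0)
  apply le_antisymm _ (zero_le)
  apply prod_le_left _ _ _ (measurable_fst hm)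
  intro b
  apply le_of_eq
  refine (sparse_apply S Abar σ _ hm).trans ?_
  obtain ⟨B, hB, hdet⟩ := hS
  refine multiaffine_null _ (fun p x => gauss_single _ σ hσ x) (fun g => (matOf S g).det)
    (meas_det _ fun i j => (meas_entry i j).comp (meas_matOf S)) ?_ (fun p => B p.1.1 p.1.2) ?_
  · intro z p
    refine ⟨cof (matOf S z) p.1.1 p.1.2, rest (matOf S z) p.1.1 p.1.2, fun a => ?_⟩
    rw [det_entry (matOf S z) _ p.1.1 p.1.2 (matOf_update S z p a).1, (matOf_update S z p a).2]
  · have : matOf S (fun p => B p.1.1 p.1.2) = B := by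
      ext i j
      simp only [matOf, Matrix.of_apply]
      split_ifs with h
      · rfl
      · exact (hB i j h).symm
    rw [this]
    exact hdet.ne_zero

lemma upd_b {n : ℕ} (A : Matrix (Fin n) (Fin n) ℝ) (b : Fin n → ℝ) (k i : Fin n) (a : ℝ) :
    (∀ i' j', ¬(i' = i ∧ j' = k) →
      A.updateCol k (Function.update b i a) i' j' = A.updateCol k b i' j') ∧
    A.updateCol k (Function.update b i a) i k = a := by
  constructor
  · intro i' j' h
    by_cases hk : j' = k
    · subst hk
      have hi : i' ≠ i := fun hh => h ⟨hh, rfl⟩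
      simp [hi]
    · simp [hk]
  · simp

lemma null_B {n : ℕ} (S : Finset (Fin n × Fin n))
    (Abar : Matrix (Fin n) (Fin n) ℝ) (bbar : Fin n → ℝ) (σ : ℝ) (hσ : 0 < σ) (k : Fin n) :
    (sparseGaussian S Abar σ).prod (vecGaussian bbar σ)
      {q | q.1.det ≠ 0 ∧ (q.1.updateCol k q.2).det = 0} = 0 := by
  have hm : MeasurableSet {q : Matrix (Fin n) (Fin n) ℝ × (Fin n → ℝ) |
      q.1.det ≠ 0 ∧ (q.1.updateCol k q.2).det = 0} :=
    MeasurableSet.inter ((meas_det _ measA) (measurableSet_singleton 0)).compl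
      ((meas_det _ (measB k)) (measurableSet_singleton 0))
  apply le_antisymm _ (zero_le)
  apply prod_le_right _ _ _ hm
  intro A
  apply le_of_eq
  by_cases hA : A.det = 0
  · simp [hA]
  refine measure_mono_null (t := {b | (A.updateCol k b).det = 0}) (fun b hb => hb.2) ?_
  rw [vec_def]
  refine multiaffine_null _ (fun p x => gauss_single _ σ hσ x) (fun b => (A.updateCol k b).det)
    (meas_det _ (meas_updateCol (fun _ => A) (fun _ _ => measurable_const) (fun b => b) (fun i => measurable_pi_apply i) k))
    ?_ (fun i => A i k) ?_
  · intro b i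
    refine ⟨cof (A.updateCol k b) i k, rest (A.updateCol k b) i k, fun a => ?_⟩
    rw [det_entry (A.updateCol k b) _ i k (upd_b A b k i a).1, (upd_b A b k i a).2]
  · have : A.updateCol k (fun i => A i k) = A := Matrix.updateCol_eq_self A k
    rwa [this]

lemma null_supp {n : ℕ} (S : Finset (Fin n × Fin n))
    (Abar : Matrix (Fin n) (Fin n) ℝ) (bbar : Fin n → ℝ) (σ : ℝ) :
    (sparseGaussian S Abar σ).prod (vecGaussian bbar σ)
      {q | ∃ i j, (i, j) ∉ S ∧ q.1 i j ≠ 0} = 0 := by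
  have hm : MeasurableSet {M : Matrix (Fin n) (Fin n) ℝ | ∃ i j, (i, j) ∉ S ∧ M i j ≠ 0} := by
    simp only [Set.ofPred_exists]
    refine MeasurableSet.iUnion fun i => MeasurableSet.iUnion fun j => ?_
    by_cases h : (i, j) ∈ S
    · simp [h]
    · simp only [h, not_false_eq_true, true_and]
      exact ((meas_entry i j) (measurableSet_singleton 0)).compl
  apply le_antisymm _ (zero_le)
  apply prod_le_left _ _ _ (measurable_fst hm)
  intro b
  apply le_of_eq
  refine (sparse_apply S Abar σ _ hm).trans ?_
  have he : {g : S → ℝ | matOf S g ∈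
      {M : Matrix (Fin n) (Fin n) ℝ | ∃ i j, (i, j) ∉ S ∧ M i j ≠ 0}} = ∅ := by
    ext g
    simp only [Set.mem_ofPred_eq, Set.mem_empty_iff_false, iff_false]
    rintro ⟨i, j, h1, h2⟩
    exact h2 (by simp [matOf, h1])
  rw [he, measure_empty]

end final

lemma tailA {n : ℕ} (S : Finset (Fin n × Fin n))
    (Abar : Matrix (Fin n) (Fin n) ℝ) (hmax : ∀ i j, |Abar i j| ≤ 1) (bbar : Fin n → ℝ)
    (σ : ℝ) (hσ : 0 < σ) (p : S) (s : ℝ) (hs : 1 < s) :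
    (sparseGaussian S Abar σ).prod (vecGaussian bbar σ) {q | s < pole q.1 p.1} ≤
      ENNReal.ofReal ((1 + σ) / σ * Real.sqrt (2 / Real.pi) / (s - 1)) := by
  refine coordA S Abar bbar σ _ (measurableSet_lt measurable_const (meas_pole _ measA p.1)) p _ ?_
  intro g b
  exact pole_set _ σ (hmax _ _) hσ (vv σ) (vv_coe σ) s hs (matOf S g)
    (fun a => matOf S (Function.update g p a)) p.1.1 p.1.2
    (fun a => (matOf_update S g p a).1) (fun a => (matOf_update S g p a).2)

lemma tailB {n : ℕ} (S : Finset (Fin n × Fin n))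
    (Abar : Matrix (Fin n) (Fin n) ℝ) (hmax : ∀ i j, |Abar i j| ≤ 1) (bbar : Fin n → ℝ)
    (σ : ℝ) (hσ : 0 < σ) (k : Fin n) (p : S) (hp : p.1.2 ≠ k) (s : ℝ) (hs : 1 < s) :
    (sparseGaussian S Abar σ).prod (vecGaussian bbar σ) {q | s < pole (q.1.updateCol k q.2) p.1} ≤
      ENNReal.ofReal ((1 + σ) / σ * Real.sqrt (2 / Real.pi) / (s - 1)) := by
  refine coordA S Abar bbar σ _
    (measurableSet_lt measurable_const (meas_pole _ (measB k) p.1)) p _ ?_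
  intro g b
  refine pole_set _ σ (hmax _ _) hσ (vv σ) (vv_coe σ) s hs ((matOf S g).updateCol k b)
    (fun a => (matOf S (Function.update g p a)).updateCol k b) p.1.1 p.1.2 ?_ ?_
  · intro a i' j' h
    simp only [Matrix.updateCol_apply]
    split_ifs
    · rfl
    · exact (matOf_update S g p a).1 i' j' h
  · intro a
    simp only [Matrix.updateCol_apply, if_neg hp]
    exact (matOf_update S g p a).2

lemma tailC {n : ℕ} (S : Finset (Fin n × Fin n))
    (Abar : Matrix (Fin n) (Fin n) ℝ) (bbar : Fin n → ℝ) (hbmax : ∀ i, |bbar i| ≤ 1)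
    (σ : ℝ) (hσ : 0 < σ) (k i : Fin n) (s : ℝ) (hs : 1 < s) :
    (sparseGaussian S Abar σ).prod (vecGaussian bbar σ) {q | s < pole (q.1.updateCol k q.2) (i, k)} ≤
      ENNReal.ofReal ((1 + σ) / σ * Real.sqrt (2 / Real.pi) / (s - 1)) := by
  refine coordB S Abar bbar σ _
    (measurableSet_lt measurable_const (meas_pole _ (measB k) (i, k))) i _ ?_
  intro A b
  exact pole_set _ σ (hbmax _) hσ (vv σ) (vv_coe σ) s hs (A.updateCol k b)
    (fun a => A.updateCol k (Function.update b i a)) i k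
    (fun a => (upd_b A b k i a).1) (fun a => (upd_b A b k i a).2)

/-- the family of all poles that matter -/
noncomputable def poleFam {n : ℕ} (S : Finset (Fin n × Fin n)) (k : Fin n) :
    S ⊕ ({p : S // p.1.2 ≠ k} ⊕ Fin n) → Matrix (Fin n) (Fin n) ℝ × (Fin n → ℝ) → ℝ
  | Sum.inl p, q => pole q.1 p.1
  | Sum.inr (Sum.inl p), q => pole (q.1.updateCol k q.2) p.1.1
  | Sum.inr (Sum.inr i), q => pole (q.1.updateCol k q.2) (i, k)

lemma poleFam_sum {n : ℕ} (S : Finset (Fin n × Fin n)) (k : Fin n)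
    (q : Matrix (Fin n) (Fin n) ℝ × (Fin n → ℝ)) (hq : ∀ i j, (i, j) ∉ S → q.1 i j = 0) :
    ∑ p, pole q.1 p + ∑ p, pole (q.1.updateCol k q.2) p = ∑ i, poleFam S k i q := by
  rw [Fintype.sum_sum_type, Fintype.sum_sum_type]
  simp only [poleFam]
  have hA : ∑ p, pole q.1 p = ∑ p : S, pole q.1 p.1 := by
    rw [Finset.sum_coe_sort S (fun p => pole q.1 p)]
    symm
    apply Finset.sum_subset (Finset.subset_univ _)
    rintro ⟨i, j⟩ - h
    simp [pole, hq i j h]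
  have hB : ∑ p, pole (q.1.updateCol k q.2) p =
      ∑ p : {p : S // p.1.2 ≠ k}, pole (q.1.updateCol k q.2) p.1.1
        + ∑ i, pole (q.1.updateCol k q.2) (i, k) := by
    have h1 : ∑ p : {p : S // p.1.2 ≠ k}, pole (q.1.updateCol k q.2) p.1.1 =
        ∑ p : Fin n × Fin n, if p.2 ≠ k then pole (q.1.updateCol k q.2) p else 0 := by
      rw [← Finset.sum_subtype (Finset.univ.filter fun p : S => p.1.2 ≠ k) (by simp)
        (fun p : S => pole (q.1.updateCol k q.2) p.1), Finset.sum_filter,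
        Finset.sum_coe_sort S (fun p => if p.2 ≠ k then pole (q.1.updateCol k q.2) p else 0)]
      apply Finset.sum_subset (Finset.subset_univ _)
      rintro ⟨i, j⟩ - h
      split_ifs with hj
      · simp only at hj
        simp [pole, hj, hq i j h]
      · rfl
    have h2 : ∑ i, pole (q.1.updateCol k q.2) (i, k) =
        ∑ p : Fin n × Fin n, if p.2 = k then pole (q.1.updateCol k q.2) p else 0 := by
      rw [Fintype.sum_prod_type]
      simp
    rw [h1, h2, ← Finset.sum_add_distrib]
    refine Finset.sum_congr rfl fun p _ => ?_
    by_cases h : p.2 = k <;> simp [h]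
  rw [hA, hB]

lemma event_sub {n : ℕ} (S : Finset (Fin n × Fin n)) (hS : Admissible S)
    (Abar : Matrix (Fin n) (Fin n) ℝ) (bbar : Fin n → ℝ) (σ : ℝ) (hσ : 0 < σ) (k : Fin n) (t : ℝ)
    (E : Set (Matrix (Fin n) (Fin n) ℝ × (Fin n → ℝ)))
    (hE : ∀ q : Matrix (Fin n) (Fin n) ℝ × (Fin n → ℝ), (∀ i j, (i, j) ∉ S → q.1 i j = 0) →
      t < ∑ p, pole q.1 p + ∑ p, pole (q.1.updateCol k q.2) p → q ∈ E) :
    (sparseGaussian S Abar σ).prod (vecGaussian bbar σ) {p | ENNReal.ofReal t < cLin k p.1 p.2} ≤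
    (sparseGaussian S Abar σ).prod (vecGaussian bbar σ) E := by
  have h1 := null_A S hS Abar bbar σ hσ
  have h2 := null_B S Abar bbar σ hσ k
  have h3 := null_supp S Abar bbar σ
  refine (measure_mono (t := E ∪ ({q | q.1.det = 0} ∪
    ({q | q.1.det ≠ 0 ∧ (q.1.updateCol k q.2).det = 0} ∪
      {q | ∃ i j, (i, j) ∉ S ∧ q.1 i j ≠ 0}))) ?_).trans ?_
  · intro q hq
    by_cases hA : q.1.det = 0
    · exact Or.inr (Or.inl hA)
    by_cases hB : (q.1.updateCol k q.2).det = 0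
    · exact Or.inr (Or.inr (Or.inl ⟨hA, hB⟩))
    by_cases hs : ∃ i j, (i, j) ∉ S ∧ q.1 i j ≠ 0
    · exact Or.inr (Or.inr (Or.inr hs))
    left
    apply hE
    · intro i j hij
      by_contra h0
      exact hs ⟨i, j, hij, h0⟩
    · by_contra! hle
      have hq' : ENNReal.ofReal t < cLin k q.1 q.2 := hq
      exact absurd (hq'.trans_le (cLin_le k q.1 q.2 hA hB)) (not_lt.mpr (ENNReal.ofReal_le_ofReal hle))
  · refine (measure_union_le _ _).trans ?_
    rw [measure_union_null h1 (measure_union_null h2 h3), add_zero]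

lemma kappa_gt (σ : ℝ) (hσ : 0 < σ) : 3 / 4 < (1 + σ) / σ * Real.sqrt (2 / Real.pi) := by
  have h1 : 1 < (1 + σ) / σ := by rw [lt_div_iff₀ hσ]; linarith
  have h2 : 3 / 4 < Real.sqrt (2 / Real.pi) := by
    apply Real.lt_sqrt_of_sq_lt
    rw [lt_div_iff₀ Real.pi_pos]
    have := Real.pi_lt_d2
    linarith
  nlinarith

lemma count {n : ℕ} (S : Finset (Fin n × Fin n)) (k : Fin n) (π : Equiv.Perm (Fin n))
    (hπ : ∀ j, (π j, j) ∈ S) :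
    (∀ p ∈ S, p.1 = π p.2) ∧ S.card = n ∨
    n + 1 ≤ S.card ∧ 3 ≤ S.card ∧ Fintype.card {p : S // p.1.2 ≠ k} + 1 ≤ S.card := by
  set T : Finset (Fin n × Fin n) := Finset.univ.image fun j => (π j, j) with hT
  have hTS : T ⊆ S := by
    intro p hp
    obtain ⟨j, -, rfl⟩ := Finset.mem_image.mp hp
    exact hπ j
  have hTc : T.card = n := by
    rw [hT, Finset.card_image_of_injective _ (fun a b h => (Prod.ext_iff.mp h).2)]
    simp
  by_cases hEq : S ⊆ T
  · left
    have : S = T := hEq.antisymm hTS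
    refine ⟨?_, by rw [this, hTc]⟩
    intro p hp
    obtain ⟨j, -, rfl⟩ := Finset.mem_image.mp (hEq hp)
    rfl
  · right
    have hlt : n < S.card := by
      have := Finset.card_lt_card (s := T) (t := S) ⟨hTS, hEq⟩
      omega
    have hle : S.card ≤ n * n := by
      simpa using Finset.card_le_univ S
    refine ⟨hlt, ?_, ?_⟩
    · by_contra! h3
      have : n ≤ 1 := by omega
      interval_cases n
      · omega
      · omega
    · have := Fintype.card_subtype_lt (p := fun p : S => p.1.2 ≠ k) (x := ⟨(π k, k), hπ k⟩) (by simp)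
      simpa using this

/-- Let `S ⊆ [n]²` be admissible, `Ā ∈ M_S`, `b̄ ∈ ℝⁿ` with
`‖Ā‖_max ≤ 1`, `‖b̄‖_∞ ≤ 1`, `σ > 0`, `A ~ N_S(Ā, σ²Id)` and `b ~ N(b̄, σ²Id)`
independent, and `k ∈ [n]`. For every real `t > 2|S|`,
`Prob{c_k(A,b) > t} ≤ ((1+σ)/σ)·(4|S|²/(t−2|S|))·√(2/π)`. -/
theorem prob_cLin_gt {n : ℕ} (S : Finset (Fin n × Fin n)) (hS : Admissible S)
    (Abar : Matrix (Fin n) (Fin n) ℝ) (hsupp : ∀ i j, (i, j) ∉ S → Abar i j = 0)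
    (hmax : ∀ i j, |Abar i j| ≤ 1) (bbar : Fin n → ℝ) (hbmax : ∀ i, |bbar i| ≤ 1)
    (σ : ℝ) (hσ : 0 < σ) (k : Fin n) (t : ℝ) (ht : 2 * (S.card : ℝ) < t) :
    (sparseGaussian S Abar σ).prod (vecGaussian bbar σ)
        {p | ENNReal.ofReal t < cLin k p.1 p.2}
      ≤ ENNReal.ofReal ((1 + σ) / σ * (4 * (S.card : ℝ) ^ 2 / (t - 2 * S.card))
          * Real.sqrt (2 / Real.pi)) := by
  obtain ⟨π, hπ⟩ := exists_perm S hS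
  set κ := (1 + σ) / σ * Real.sqrt (2 / Real.pi) with hκdef
  have hκ : 3 / 4 < κ := kappa_gt σ hσ
  have hR : (1 + σ) / σ * (4 * (S.card : ℝ) ^ 2 / (t - 2 * S.card)) * Real.sqrt (2 / Real.pi)
      = κ * (4 * (S.card : ℝ) ^ 2 / (t - 2 * S.card)) := by rw [hκdef]; ring
  rw [hR]
  rcases count S k π hπ with ⟨hperm, hcard⟩ | ⟨h1, h3, hc⟩
  · refine (event_sub S hS Abar bbar σ hσ k t ∅ ?_).trans (by simp)
    intro q hq hlt
    exfalso
    have := perm_bound k q.1 q.2 π (fun i j hij => hq i j fun h => hij (hperm _ h))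
    rw [hcard] at ht
    linarith
  · by_cases hbig : 4 * (S.card : ℝ) ^ 2 * κ ≤ t - 2 * S.card
    · set N := Fintype.card (S ⊕ ({p : S // p.1.2 ≠ k} ⊕ Fin n)) with hN
      have hNval : N = S.card + (Fintype.card {p : S // p.1.2 ≠ k} + n) := by
        rw [hN, Fintype.card_sum, Fintype.card_sum]; simp
      have hN0 : 0 < N := by omega
      have hN2 : N + 2 ≤ 3 * S.card := by omega
      have hm3 : (3 : ℝ) ≤ S.card := by exact_mod_cast h3
      have hN2' : (N : ℝ) ≤ 3 * S.card - 2 := by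
        have : ((N + 2 : ℕ) : ℝ) ≤ ((3 * S.card : ℕ) : ℝ) := by exact_mod_cast hN2
        push_cast at this
        linarith
      have hNt : (N : ℝ) < t := by nlinarith
      refine (event_sub S hS Abar bbar σ hσ k t {q | t < ∑ i, poleFam S k i q} ?_).trans ?_
      · intro q hq hlt
        rw [poleFam_sum S k q hq] at hlt
        exact hlt
      · refine (sum_tail _ (poleFam S k) ?_ κ (by linarith) ?_ hN0 t hNt).trans
          (ENNReal.ofReal_le_ofReal (arith_fin S.card N κ t hm3 (by exact_mod_cast hN0) hN2' hκ hbig))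
        · rintro (p | p | i)
          · exact meas_pole _ measA p.1
          · exact meas_pole _ (measB k) p.1.1
          · exact meas_pole _ (measB k) (i, k)
        · rintro (p | p | i) s hs
          · exact tailA S Abar hmax bbar σ hσ p s hs
          · exact tailB S Abar hmax bbar σ hσ k p.1 p.2 s hs
          · exact tailC S Abar bbar hbmax σ hσ k i s hs
    · refine prob_le_one.trans ?_
      rw [← ENNReal.ofReal_one]
      apply ENNReal.ofReal_le_ofReal
      rw [mul_div_assoc', le_div_iff₀ (by linarith)]
      linarith
end
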